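/- Let μ be a probability measure on ℝⁿ with a regular, log-concave density ρ, and let λ₀ = 1/C_P(μ). For θ ∈ ℝⁿ and t > 0 let μ_{t,θ} be the probability measure with density p_{t,θ}(x) = e^{⟨θ,x⟩ − t|x|²/2} ρ(x) / Z(t,θ), let A(t,θ) be its covariance matrix and λ(t,θ) = 1/C_P(μ_{t,θ}). Let X be a random vector with law μ and W an independent Gaussian random vector in ℝⁿ with mean 0 and covariance t·Id, and set θ_t = tX + W, λ_t = λ(t,θ_t), A_t = A(t,θ_t). Then there is a universal constant C > 0 such that for any A > 0 and 0 < t < A λ₀, one has λ₀^{−1} ≤ C (A+1) · E[λ_t^{−1}] ≤ C (A+1) · E[ √(‖A_t‖_op) ] / √t. -/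

import Mathlib

open MeasureTheory Real
open scoped ENNReal RealInnerProductSpace

noncomputable section

abbrev Euc (n : ℕ) := EuclideanSpace ℝ (Fin n)

/-- A nonnegative function `g` is log-concave: `g(ax+by) ≥ g(x)^a g(y)^b`. -/
def IsLogConcaveFun {n : ℕ} (g : Euc n → ℝ) : Prop :=
  (∀ x, 0 ≤ g x) ∧
  ∀ x y : Euc n, ∀ a b : ℝ, 0 ≤ a → 0 ≤ b → a + b = 1 →
    g x ^ a * g y ^ b ≤ g (a • x + b • y)

def IsLogConcaveMeasure {n : ℕ} (μ : Measure (Euc n)) : Prop :=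
  ∃ ρ : Euc n → ℝ, Measurable ρ ∧ IsLogConcaveFun ρ ∧
    μ = volume.withDensity (fun x => ENNReal.ofReal (ρ x))

def poincareSet {n : ℕ} (μ : Measure (Euc n)) : Set ℝ :=
  {C : ℝ | 0 ≤ C ∧ ∀ f : Euc n → ℝ, LocallyLipschitz f →
    Integrable (fun x => ‖gradient f x‖ ^ 2) μ →
    ∫ x, f x ^ 2 ∂μ - (∫ x, f x ∂μ) ^ 2 ≤ C * ∫ x, ‖gradient f x‖ ^ 2 ∂μ}

def poincareConst {n : ℕ} (μ : Measure (Euc n)) : ℝ := sInf (poincareSet μ)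

def covMatrix {n : ℕ} (μ : Measure (Euc n)) : Matrix (Fin n) (Fin n) ℝ :=
  Matrix.of fun i j => ∫ x, x i * x j ∂μ - (∫ x, x i ∂μ) * (∫ x, x j ∂μ)

def opNorm {n : ℕ} (M : Matrix (Fin n) (Fin n) ℝ) : ℝ :=
  ‖Matrix.toEuclideanCLM (𝕜 := ℝ) M‖

def IsIsotropic {n : ℕ} (μ : Measure (Euc n)) : Prop :=
  (∫ x, x ∂μ) = 0 ∧ ∀ i j, ∫ x, x i * x j ∂μ = if i = j then 1 else 0

def UniformlyLogConcave {n : ℕ} (t : ℝ) (μ : Measure (Euc n)) : Prop :=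
  ∃ g : Euc n → ℝ, Measurable g ∧ IsLogConcaveFun g ∧
    μ = volume.withDensity (fun x => ENNReal.ofReal (Real.exp (-t * ‖x‖ ^ 2 / 2) * g x))

def IsRegularPotential {n : ℕ} (ψ : Euc n → ℝ) : Prop :=
  ContDiff ℝ (⊤ : ℕ∞) ψ ∧
  (∃ ε : ℝ, 0 < ε ∧ ∀ x v : Euc n,
    ε * ‖v‖ ^ 2 ≤ iteratedFDeriv ℝ 2 ψ x ![v, v] ∧
    iteratedFDeriv ℝ 2 ψ x ![v, v] ≤ ε⁻¹ * ‖v‖ ^ 2) ∧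
  (∀ m : ℕ, ∃ C : ℝ, ∃ k : ℕ, ∀ x, ‖iteratedFDeriv ℝ m ψ x‖ ≤ C * (1 + ‖x‖) ^ k)

def IsRegularMeasure {n : ℕ} (μ : Measure (Euc n)) (ψ : Euc n → ℝ) : Prop :=
  IsRegularPotential ψ ∧ μ = volume.withDensity (fun x => ENNReal.ofReal (Real.exp (-ψ x)))

def IsTempered {n : ℕ} (ρ : Euc n → ℝ) (f : Euc n → ℝ) : Prop :=
  ContDiff ℝ (⊤ : ℕ∞) f ∧ ∀ m : ℕ, ∃ C : ℝ, 0 < C ∧ ∃ a : ℝ, 0 < a ∧ ∀ x,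
    ‖iteratedFDeriv ℝ m f x‖ ≤ C / Real.sqrt (ρ x) * Real.exp (-a * ‖x‖)

def lap {n : ℕ} (f : Euc n → ℝ) (x : Euc n) : ℝ :=
  ∑ i, iteratedFDeriv ℝ 2 f x ![EuclideanSpace.single i (1:ℝ), EuclideanSpace.single i (1:ℝ)]

def Lop {n : ℕ} (ψ u : Euc n → ℝ) (x : Euc n) : ℝ :=
  lap u x - ⟪gradient ψ x, gradient u x⟫

def gaussDensity (n : ℕ) (s : ℝ) (x : Euc n) : ℝ :=
  (2 * π * s) ^ (-(n : ℝ) / 2) * Real.exp (-‖x‖ ^ 2 / (2 * s))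

def gaussMeasure (n : ℕ) (s : ℝ) : Measure (Euc n) :=
  volume.withDensity fun x => ENNReal.ofReal (gaussDensity n s x)

def tiltZ {n : ℕ} (ρ : Euc n → ℝ) (t : ℝ) (θ : Euc n) : ℝ :=
  ∫ x, Real.exp (⟪θ, x⟫ - t * ‖x‖ ^ 2 / 2) * ρ x

def tiltDensity {n : ℕ} (ρ : Euc n → ℝ) (t : ℝ) (θ : Euc n) (x : Euc n) : ℝ :=
  Real.exp (⟪θ, x⟫ - t * ‖x‖ ^ 2 / 2) * ρ x / tiltZ ρ t θ

def tiltMeasure {n : ℕ} (ρ : Euc n → ℝ) (t : ℝ) (θ : Euc n) : Measure (Euc n) :=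
  volume.withDensity fun x => ENNReal.ofReal (tiltDensity ρ t θ x)

def varD {n : ℕ} (p : Euc n → ℝ) (f : Euc n → ℝ) : ℝ :=
  (∫ x, f x ^ 2 * p x) - (∫ x, f x * p x) ^ 2

end

open Filter ProbabilityTheory
open scoped ContDiff Convolution Topology NNReal

/-!
Write `μ = e^{-φ}`, let `P` be the Gaussian channel `x ↦ t x + W`, let `Q` be the kernel of its
posterior laws `μ_{t,θ}`, and let `m` be the law of `θ_t`. By Bayes' formula `P` and `Q` are adjoint
between `L²(μ)` and `L²(m)`, so that the round trip `T = P Q` is a reversible Markov kernel for `μ`.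

*Second inequality.* Weakly harmonic functions in `L²(e^{-φ})` are constant (by mollification and
Caccioppoli's inequality), so the images `L h` of test functions are dense among the functions of
mean zero. By duality `C` is a Poincaré constant as soon as `∫ |∇h|² ≤ C ∫ (L h)²` for all test
functions `h`. Bochner's formula then gives the constant `1 / t` when `∇²φ ≥ t`, and applying the
Poincaré inequality to the derivatives of `h` improves it to `√(‖Cov‖ / t)`. Each `μ_{t,θ}` has a
potential with Hessian at least `t`.

*First inequality.* Let `f` be `1`-Lipschitz. The gradient of `T f` is controlled by the variance of
`Q f` under `P`, so the Poincaré inequality for `μ` and reversibility show that `Q f` loses only a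
bounded proportion of the variance of `f`: `Var f ≤ (1 + t C_P(μ)) E[C_P(μ_{t,θ})]`.

It remains to see, following E. Milman, that a bound `s²` for the variances of `1`-Lipschitz
functions implies a Poincaré inequality of constant `O(s²)`. Run the channel with `t` of order
`1 / s²`. The energy `E(F) = ∫ F² - ∫ (Q F)²` satisfies `∫ (g - T g - 4 K² / t) F · T F ≤ E(F)` for
all `K`-Lipschitz `g`. If the Poincaré inequality failed, it would produce a function `F` of small
energy; testing with a distance function `g = d(·, A)`, where `A` is a set of measure at least
`1 / 2` that almost maximises `∫ d(·, A) F · T F`, leads to a contradiction.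
-/

/-! ### Directional derivatives and test functions -/

noncomputable section DirectionalDerivative

variable {E : Type*} [NormedAddCommGroup E] [NormedSpace ℝ E] {f g : E → ℝ} {x : E}

/-- The directional derivative `∂_v f` as a function of the base point; it takes the junk value `0`
where `f` is not differentiable. -/
def dirDeriv (v : E) (f : E → ℝ) (x : E) : ℝ := fderiv ℝ f x v

lemma contDiff_dirDeriv (hf : ContDiff ℝ ∞ f) (v : E) : ContDiff ℝ ∞ (dirDeriv v f) :=
  (hf.fderiv_right (m := ∞) (by simp)).clm_apply contDiff_const

lemma differentiableAt_of_smooth (hf : ContDiff ℝ ∞ f) : DifferentiableAt ℝ f x :=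
  hf.differentiable (by simp) x

lemma dirDeriv_add (hf : DifferentiableAt ℝ f x) (hg : DifferentiableAt ℝ g x) (v : E) :
    dirDeriv v (fun y => f y + g y) x = dirDeriv v f x + dirDeriv v g x := by
  simp [dirDeriv, fderiv_fun_add hf hg]

lemma dirDeriv_neg (v : E) : dirDeriv v (fun y => -f y) x = -dirDeriv v f x := by
  simp [dirDeriv, fderiv_fun_neg]

lemma dirDeriv_mul (hf : DifferentiableAt ℝ f x) (hg : DifferentiableAt ℝ g x) (v : E) :
    dirDeriv v (fun y => f y * g y) x = dirDeriv v f x * g x + f x * dirDeriv v g x := by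
  simp [dirDeriv, fderiv_fun_mul hf hg]
  ring

lemma dirDeriv_dirDeriv (hf : ContDiff ℝ ∞ f) (u v : E) :
    dirDeriv u (dirDeriv v f) x = fderiv ℝ (fderiv ℝ f) x u v := by
  have hf' : DifferentiableAt ℝ (fderiv ℝ f) x :=
    (hf.fderiv_right (m := ∞) (by simp)).differentiable (by simp) x
  change fderiv ℝ (fun y => fderiv ℝ f y v) x u = _
  simp [fderiv_clm_apply hf' (differentiableAt_const v)]

lemma dirDeriv_comm (hf : ContDiff ℝ ∞ f) (u v : E) :
    dirDeriv u (dirDeriv v f) x = dirDeriv v (dirDeriv u f) x := by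
  rw [dirDeriv_dirDeriv hf, dirDeriv_dirDeriv hf]
  exact hf.contDiffAt.isSymmSndFDerivAt (by
    simp only [minSmoothness_of_isRCLikeNormedField]
    exact WithTop.coe_le_coe.2 le_top) u v

lemma dirDeriv_comp_sub_left (hf : ContDiff ℝ ∞ f) (x v y : E) :
    dirDeriv v (fun y => f (x - y)) y = -dirDeriv v f (x - y) := by
  have hcomp : HasFDerivAt (fun y => f (x - y)) _ y :=
    (differentiableAt_of_smooth hf (x := x - y)).hasFDerivAt.comp y
      ((hasFDerivAt_id y).const_sub x)
  rw [dirDeriv, hcomp.fderiv]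
  simp [dirDeriv]

/-- Smooth functions with compact support, as a predicate on functions defined on the whole
space. -/
structure IsTestFunction (f : E → ℝ) : Prop where
  smooth : ContDiff ℝ ∞ f
  hasCompactSupport : HasCompactSupport f

namespace IsTestFunction

lemma continuous (hf : IsTestFunction f) : Continuous f := hf.smooth.continuous

lemma differentiableAt (hf : IsTestFunction f) : DifferentiableAt ℝ f x :=
  differentiableAt_of_smooth hf.smooth

lemma dirDeriv (hf : IsTestFunction f) (v : E) : IsTestFunction (dirDeriv v f) :=
  ⟨contDiff_dirDeriv hf.smooth v, hf.hasCompactSupport.fderiv_apply (𝕜 := ℝ) v⟩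

lemma mul_smooth (hf : IsTestFunction f) (hg : ContDiff ℝ ∞ g) :
    IsTestFunction fun x => f x * g x :=
  ⟨hf.smooth.mul hg, hf.hasCompactSupport.mul_right⟩

lemma smooth_mul (hf : IsTestFunction f) (hg : ContDiff ℝ ∞ g) :
    IsTestFunction fun x => g x * f x :=
  ⟨hg.mul hf.smooth, hf.hasCompactSupport.mul_left⟩

lemma add (hf : IsTestFunction f) (hg : IsTestFunction g) :
    IsTestFunction fun x => f x + g x :=
  ⟨hf.smooth.add hg.smooth, hf.hasCompactSupport.add hg.hasCompactSupport⟩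

lemma neg (hf : IsTestFunction f) : IsTestFunction fun x => -f x :=
  ⟨hf.smooth.neg, hf.hasCompactSupport.neg⟩

lemma sum {ι : Type*} [Fintype ι] {f : ι → E → ℝ} (hf : ∀ i, IsTestFunction (f i)) :
    IsTestFunction fun x => ∑ i, f i x := by
  classical
  rw [← Finset.sum_fn]
  exact Finset.sum_induction f IsTestFunction (fun _ _ => add) ⟨contDiff_const, .zero⟩
    fun i _ => hf i

lemma comp_sub_left (hf : IsTestFunction f) (x : E) : IsTestFunction fun y => f (x - y) :=
  ⟨hf.smooth.comp (contDiff_const.sub contDiff_id),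
    hf.hasCompactSupport.comp_homeomorph (Homeomorph.subLeft x)⟩

variable [MeasurableSpace E] [BorelSpace E]

lemma integrable [FiniteDimensional ℝ E] (hf : IsTestFunction f) (μ : Measure E)
    [IsLocallyFiniteMeasure μ] : Integrable f μ :=
  hf.continuous.integrable_of_hasCompactSupport hf.hasCompactSupport

end IsTestFunction

lemma locallyLipschitz_of_smooth (hf : ContDiff ℝ ∞ f) : LocallyLipschitz f :=
  (hf.of_le (by simp)).locallyLipschitz

lemma exists_lipschitzWith_eventuallyEq {X : Type*} [PseudoMetricSpace X] [ProperSpace X]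
    {f : X → ℝ} {K : Set X} (hf : LocallyLipschitz f) (hK : IsCompact K) :
    ∃ (C : ℝ≥0) (F : X → ℝ), LipschitzWith C F ∧ ∀ x ∈ K, f =ᶠ[𝓝 x] F := by
  obtain ⟨C, hC⟩ := LocallyLipschitzOn.exists_lipschitzOnWith_of_compact
    (hK.cthickening (r := 1)) hf.locallyLipschitzOn
  obtain ⟨F, hF, hfF⟩ := hC.extend_real
  refine ⟨C, F, hF, fun x hx => ?_⟩
  filter_upwards [Metric.isOpen_thickening.mem_nhds
    (Metric.self_subset_thickening one_pos K hx)] with y hy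
  exact hfF (Metric.thickening_subset_cthickening 1 K hy)

section IntegrationByParts

variable [FiniteDimensional ℝ E] [MeasurableSpace E] [BorelSpace E] (μ : Measure E)
  [μ.IsAddHaarMeasure]

lemma integrable_dirDeriv_mul (hf : LocallyLipschitz f) (hg : IsTestFunction g) (v : E) :
    Integrable (fun x => dirDeriv v f x * g x) μ := by
  obtain ⟨C, F, hF, hfF⟩ := exists_lipschitzWith_eventuallyEq hf hg.hasCompactSupport
  refine ((hg.integrable μ).norm.const_mul (C * ‖v‖)).mono'
    ((measurable_fderiv_apply_const ℝ f v).aestronglyMeasurable.mul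
      hg.continuous.aestronglyMeasurable) (.of_forall fun x => ?_)
  by_cases hx : x ∈ tsupport g
  · rw [norm_mul, dirDeriv, (hfF x hx).fderiv_eq]
    gcongr
    exact (fderiv ℝ F x).le_of_opNorm_le (norm_fderiv_le_of_lipschitz ℝ hF) v
  · simp [image_eq_zero_of_notMem_tsupport hx]

lemma integral_mul_dirDeriv (hf : LocallyLipschitz f) (hg : IsTestFunction g) (v : E) :
    ∫ x, f x * dirDeriv v g x ∂μ = -∫ x, dirDeriv v f x * g x ∂μ := by
  obtain ⟨C, F, hF, hfF⟩ := exists_lipschitzWith_eventuallyEq hf hg.hasCompactSupport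
  obtain ⟨D, hD⟩ := hg.smooth.lipschitzWith_of_hasCompactSupport hg.hasCompactSupport (by simp)
  have hleft : ∫ x, f x * dirDeriv v g x ∂μ = -∫ x, lineDeriv ℝ g x (-v) * F x ∂μ := by
    rw [← integral_neg]
    refine integral_congr_ae (.of_forall fun x => ?_)
    simp only [hg.differentiableAt.lineDeriv_eq_fderiv, map_neg, neg_mul, neg_neg, dirDeriv]
    by_cases hx : x ∈ tsupport g
    · rw [(hfF x hx).self_of_nhds, mul_comm]
    · simp [image_eq_zero_of_notMem_tsupport fun h => hx (tsupport_fderiv_subset ℝ h)]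
  have hright : ∫ x, dirDeriv v f x * g x ∂μ = ∫ x, lineDeriv ℝ F x v * g x ∂μ := by
    refine integral_congr_ae ?_
    filter_upwards [hF.ae_differentiableAt (μ := μ)] with x hFx
    by_cases hx : x ∈ tsupport g
    · rw [hFx.lineDeriv_eq_fderiv, dirDeriv, (hfF x hx).fderiv_eq]
    · simp [image_eq_zero_of_notMem_tsupport hx]
  rw [hleft, hright, hF.integral_lineDeriv_mul_eq hD hg.hasCompactSupport v]

end IntegrationByParts

end DirectionalDerivative

/-! ### Gibbs measures and the Bochner formula -/

local notation "∂[" i "]" => dirDeriv (EuclideanSpace.single i (1 : ℝ))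

noncomputable section Bochner

variable {n : ℕ}

lemma inner_gradient (f : Euc n → ℝ) (x v : Euc n) : ⟪gradient f x, v⟫ = dirDeriv v f x := by
  simp [gradient, dirDeriv]

lemma gradient_apply (f : Euc n → ℝ) (x : Euc n) (i : Fin n) : gradient f x i = ∂[i] f x := by
  rw [← inner_gradient, EuclideanSpace.inner_single_right]
  simp only [one_mul, conj_trivial]

lemma norm_gradient (f : Euc n → ℝ) (x : Euc n) : ‖gradient f x‖ = ‖fderiv ℝ f x‖ := by
  simp [gradient]

lemma inner_gradient_gradient (f g : Euc n → ℝ) (x : Euc n) :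
    ⟪gradient f x, gradient g x⟫ = ∑ i, ∂[i] f x * ∂[i] g x := by
  simp only [PiLp.inner_apply, gradient_apply, RCLike.inner_apply, conj_trivial, mul_comm]

lemma norm_gradient_sq (f : Euc n → ℝ) (x : Euc n) : ‖gradient f x‖ ^ 2 = ∑ i, ∂[i] f x ^ 2 := by
  simp only [← real_inner_self_eq_norm_sq, inner_gradient_gradient, ← sq]

lemma measurable_gradient (f : Euc n → ℝ) : Measurable (gradient f) :=
  (InnerProductSpace.toDual ℝ (Euc n)).symm.continuous.measurable.comp (measurable_fderiv ℝ f)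

lemma IsTestFunction.inner_gradient {f g : Euc n → ℝ} (hf : ContDiff ℝ ∞ f)
    (hg : IsTestFunction g) : IsTestFunction fun x => ⟪gradient f x, gradient g x⟫ := by
  simp only [inner_gradient_gradient]
  exact .sum fun i => (hg.dirDeriv _).smooth_mul (contDiff_dirDeriv hf _)

lemma IsTestFunction.norm_gradient_sq {f : Euc n → ℝ} (hf : IsTestFunction f) :
    IsTestFunction fun x => ‖gradient f x‖ ^ 2 := by
  simpa only [real_inner_self_eq_norm_sq] using IsTestFunction.inner_gradient hf.smooth hf

/-- The measure with Lebesgue density `e^{-φ}`. -/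
def gibbsMeasure (φ : Euc n → ℝ) : Measure (Euc n) :=
  volume.withDensity fun x => ENNReal.ofReal (exp (-φ x))

lemma integral_gibbsMeasure {φ : Euc n → ℝ} (hφ : Continuous φ) (f : Euc n → ℝ) :
    ∫ x, f x ∂gibbsMeasure φ = ∫ x, f x * exp (-φ x) := by
  rw [gibbsMeasure, integral_withDensity_eq_integral_toReal_smul (by fun_prop) (by simp)]
  simp [ENNReal.toReal_ofReal (exp_pos _).le, mul_comm]

lemma integrable_gibbsMeasure_iff {φ : Euc n → ℝ} (hφ : Continuous φ) {f : Euc n → ℝ} :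
    Integrable f (gibbsMeasure φ) ↔ Integrable fun x => f x * exp (-φ x) := by
  rw [gibbsMeasure, integrable_withDensity_iff (by fun_prop) (by simp)]
  simp [ENNReal.toReal_ofReal (exp_pos _).le]

lemma isLocallyFiniteMeasure_gibbsMeasure {φ : Euc n → ℝ} (hφ : Continuous φ) :
    IsLocallyFiniteMeasure (gibbsMeasure φ) :=
  IsLocallyFiniteMeasure.withDensity_ofReal (by fun_prop)

lemma IsTestFunction.integrable_gibbs {φ f : Euc n → ℝ} (hf : IsTestFunction f)
    (hφ : Continuous φ) : Integrable f (gibbsMeasure φ) :=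
  have := isLocallyFiniteMeasure_gibbsMeasure hφ
  hf.integrable _

/-- The adjoint of `dirDeriv v` in `L²(e^{-φ})`, see `integral_adjDeriv_mul`. -/
def adjDeriv (φ : Euc n → ℝ) (v : Euc n) (u : Euc n → ℝ) (x : Euc n) : ℝ :=
  -dirDeriv v u x + dirDeriv v φ x * u x

variable {φ : Euc n → ℝ}

lemma IsTestFunction.adjDeriv {u : Euc n → ℝ} (hφ : ContDiff ℝ ∞ φ) (hu : IsTestFunction u)
    (v : Euc n) : IsTestFunction (adjDeriv φ v u) :=
  (hu.dirDeriv v).neg.add (hu.smooth_mul (contDiff_dirDeriv hφ v))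

lemma dirDeriv_exp_neg (hφ : ContDiff ℝ ∞ φ) (v x : Euc n) :
    dirDeriv v (fun y => exp (-φ y)) x = -dirDeriv v φ x * exp (-φ x) := by
  rw [dirDeriv, fderiv_exp (differentiableAt_of_smooth hφ.neg)]
  simp [fderiv_fun_neg, dirDeriv, mul_comm]

lemma integral_adjDeriv_mul {u w : Euc n → ℝ} (hφ : ContDiff ℝ ∞ φ) (hu : IsTestFunction u)
    (hw : LocallyLipschitz w) (v : Euc n) :
    ∫ x, adjDeriv φ v u x * w x ∂gibbsMeasure φ = ∫ x, u x * dirDeriv v w x ∂gibbsMeasure φ := by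
  have hρ : ContDiff ℝ ∞ fun x => exp (-φ x) := hφ.neg.exp
  have hparts := integral_mul_dirDeriv volume hw (hu.mul_smooth hρ) v
  have hprod (x : Euc n) : w x * dirDeriv v (fun x => u x * exp (-φ x)) x
      = -(adjDeriv φ v u x * w x * exp (-φ x)) := by
    rw [dirDeriv_mul hu.differentiableAt (differentiableAt_of_smooth hρ), dirDeriv_exp_neg hφ,
      adjDeriv]
    ring
  simp only [hprod, integral_neg, neg_inj] at hparts
  rw [integral_gibbsMeasure hφ.continuous, integral_gibbsMeasure hφ.continuous, hparts]
  exact integral_congr_ae (.of_forall fun x => by ring)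

lemma dirDeriv_adjDeriv {u : Euc n → ℝ} (hφ : ContDiff ℝ ∞ φ) (hu : ContDiff ℝ ∞ u)
    (v w x : Euc n) : dirDeriv w (adjDeriv φ v u) x
      = adjDeriv φ v (dirDeriv w u) x + dirDeriv w (dirDeriv v φ) x * u x := by
  have hd {f : Euc n → ℝ} (hf : ContDiff ℝ ∞ f) : DifferentiableAt ℝ f x :=
    differentiableAt_of_smooth hf
  have hvφ := contDiff_dirDeriv hφ v
  unfold adjDeriv
  rw [dirDeriv_add (hd (contDiff_dirDeriv hu v).neg) (hd (hvφ.mul hu)), dirDeriv_neg,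
    dirDeriv_mul (hd hvφ) (hd hu), dirDeriv_comm hu w v]
  ring

lemma integral_adjDeriv_mul_adjDeriv {u w : Euc n → ℝ} (hφ : ContDiff ℝ ∞ φ)
    (hu : IsTestFunction u) (hw : IsTestFunction w) (a b : Euc n) :
    ∫ x, adjDeriv φ a u x * adjDeriv φ b w x ∂gibbsMeasure φ
      = ∫ x, dirDeriv b u x * dirDeriv a w x ∂gibbsMeasure φ
        + ∫ x, dirDeriv a (dirDeriv b φ) x * u x * w x ∂gibbsMeasure φ := by
  have hessian_term : IsTestFunction fun x => dirDeriv a (dirDeriv b φ) x * u x * w x :=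
    hw.smooth_mul ((contDiff_dirDeriv (contDiff_dirDeriv hφ b) a).mul hu.smooth)
  have hcommute (x : Euc n) : u x * dirDeriv a (adjDeriv φ b w) x
      = adjDeriv φ b (dirDeriv a w) x * u x + dirDeriv a (dirDeriv b φ) x * u x * w x := by
    rw [dirDeriv_adjDeriv hφ hw.smooth]
    ring
  rw [integral_adjDeriv_mul hφ hu (locallyLipschitz_of_smooth (hw.adjDeriv hφ b).smooth)]
  simp_rw [hcommute]
  rw [integral_add ((((hw.dirDeriv a).adjDeriv hφ b).mul_smooth hu.smooth).integrable_gibbs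
    hφ.continuous) (hessian_term.integrable_gibbs hφ.continuous),
    integral_adjDeriv_mul hφ (hw.dirDeriv a) (locallyLipschitz_of_smooth hu.smooth)]
  simp only [mul_comm]

lemma Lop_eq_neg_sum_adjDeriv {h : Euc n → ℝ} (hh : ContDiff ℝ ∞ h) (x : Euc n) :
    Lop φ h x = -∑ i, adjDeriv φ (EuclideanSpace.single i 1) (∂[i] h) x := by
  rw [Lop, lap, inner_gradient_gradient, ← Finset.sum_sub_distrib, ← Finset.sum_neg_distrib]
  refine Finset.sum_congr rfl fun i _ => ?_
  rw [adjDeriv, dirDeriv_dirDeriv hh, iteratedFDeriv_two_apply, neg_add, neg_neg, ← sub_eq_add_neg]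
  rfl

lemma IsTestFunction.Lop {h : Euc n → ℝ} (hφ : ContDiff ℝ ∞ φ) (hh : IsTestFunction h) :
    IsTestFunction (Lop φ h) := by
  rw [funext (Lop_eq_neg_sum_adjDeriv hh.smooth)]
  exact (IsTestFunction.sum fun i => (hh.dirDeriv _).adjDeriv hφ _).neg

lemma integral_mul_Lop {h w : Euc n → ℝ} (hφ : ContDiff ℝ ∞ φ) (hh : IsTestFunction h)
    (hw : LocallyLipschitz w) :
    ∫ x, w x * Lop φ h x ∂gibbsMeasure φ
      = -∫ x, ⟪gradient w x, gradient h x⟫ ∂gibbsMeasure φ := by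
  have := isLocallyFiniteMeasure_gibbsMeasure hφ.continuous
  have hweight : ContDiff ℝ ∞ fun x => exp (-φ x) := hφ.neg.exp
  have hA (i : Fin n) := (hh.dirDeriv (EuclideanSpace.single i 1)).adjDeriv hφ
    (EuclideanSpace.single i 1)
  simp only [Lop_eq_neg_sum_adjDeriv hh.smooth, inner_gradient_gradient, mul_neg, integral_neg,
    Finset.mul_sum]
  have hwA (i : Fin n) : Integrable
      (fun x => w x * adjDeriv φ (EuclideanSpace.single i 1) (∂[i] h) x) (gibbsMeasure φ) :=
    (hw.continuous.mul (hA i).continuous).integrable_of_hasCompactSupport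
      (hA i).hasCompactSupport.mul_left
  have hwh (i : Fin n) : Integrable (fun x => ∂[i] w x * ∂[i] h x) (gibbsMeasure φ) :=
    (integrable_gibbsMeasure_iff hφ.continuous).2 (by
      simpa only [mul_assoc] using
        integrable_dirDeriv_mul volume hw ((hh.dirDeriv _).mul_smooth hweight) _)
  rw [integral_finsetSum _ fun i _ => hwA i, integral_finsetSum _ fun i _ => hwh i]
  congr 1
  refine Finset.sum_congr rfl fun i _ => ?_
  simpa only [mul_comm] using integral_adjDeriv_mul hφ (hh.dirDeriv _) hw _

lemma fderiv_fderiv_gradient (hφ : ContDiff ℝ ∞ φ) (h : Euc n → ℝ) (x : Euc n) :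
    fderiv ℝ (fderiv ℝ φ) x (gradient h x) (gradient h x)
      = ∑ i, ∑ j, ∂[i] (∂[j] φ) x * ∂[i] h x * ∂[j] h x := by
  have hgrad : gradient h x = ∑ i, ∂[i] h x • EuclideanSpace.single i (1 : ℝ) := by
    ext j
    simp [gradient_apply, Pi.single_apply]
  rw [hgrad]
  rw [map_sum]
  simp only [map_sum, map_smul, _root_.sum_apply, _root_.smul_apply, smul_eq_mul, Finset.mul_sum,
    ← dirDeriv_dirDeriv hφ]
  exact Finset.sum_congr rfl fun i _ => Finset.sum_congr rfl fun j _ => by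
    rw [dirDeriv_comm hφ]
    ring

theorem integral_Lop_sq {h : Euc n → ℝ} (hφ : ContDiff ℝ ∞ φ) (hh : IsTestFunction h) :
    ∫ x, Lop φ h x ^ 2 ∂gibbsMeasure φ
      = (∑ i, ∫ x, ‖gradient (∂[i] h) x‖ ^ 2 ∂gibbsMeasure φ)
        + ∫ x, fderiv ℝ (fderiv ℝ φ) x (gradient h x) (gradient h x) ∂gibbsMeasure φ := by
  have hint {f : Euc n → ℝ} (hf : IsTestFunction f) : Integrable f (gibbsMeasure φ) :=
    hf.integrable_gibbs hφ.continuous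
  have hD (i : Fin n) := hh.dirDeriv (EuclideanSpace.single i 1)
  have hA (i : Fin n) := (hD i).adjDeriv hφ (EuclideanSpace.single i 1)
  have hHess (i j : Fin n) : IsTestFunction fun x => ∂[i] (∂[j] φ) x * ∂[i] h x * ∂[j] h x :=
    (hD j).smooth_mul ((contDiff_dirDeriv (contDiff_dirDeriv hφ _) _).mul (hD i).smooth)
  have hAA (i j : Fin n) : IsTestFunction fun x =>
      adjDeriv φ (EuclideanSpace.single i 1) (∂[i] h) x
        * adjDeriv φ (EuclideanSpace.single j 1) (∂[j] h) x :=
    (hA i).mul_smooth (hA j).smooth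
  simp only [Lop_eq_neg_sum_adjDeriv hh.smooth, neg_sq, sq (Finset.sum _ _), Finset.sum_mul_sum,
    fderiv_fderiv_gradient hφ, norm_gradient_sq]
  rw [integral_finsetSum _ fun _ _ => hint (.sum (hAA _)),
    integral_finsetSum _ fun _ _ => hint (.sum (hHess _)), ← Finset.sum_add_distrib]
  refine Finset.sum_congr rfl fun i _ => ?_
  rw [integral_finsetSum _ fun j _ => hint (hAA i j),
    integral_finsetSum _ fun j _ => hint (hHess i j),
    integral_finsetSum _ fun _ _ => hint (by
      simpa only [sq] using ((hD i).dirDeriv _).mul_smooth ((hD i).dirDeriv _).smooth),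
    ← Finset.sum_add_distrib]
  refine Finset.sum_congr rfl fun j _ => ?_
  rw [integral_adjDeriv_mul_adjDeriv hφ (hD i) (hD j)]
  simp only [dirDeriv_comm hh.smooth (EuclideanSpace.single i 1) (EuclideanSpace.single j 1), sq]

/-- Potentials `φ` with `∇²φ ≥ m`, `m > 0`: the potentials of (unnormalised) `m`-uniformly
log-concave measures. -/
structure StrongPotential (φ : Euc n → ℝ) (m : ℝ) : Prop where
  smooth : ContDiff ℝ ∞ φ
  pos : 0 < m
  hessian_ge : ∀ x v : Euc n, m * ‖v‖ ^ 2 ≤ fderiv ℝ (fderiv ℝ φ) x v v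

lemma StrongPotential.continuous {m : ℝ} (hφ : StrongPotential φ m) : Continuous φ :=
  hφ.smooth.continuous

lemma StrongPotential.bochner_le {h : Euc n → ℝ} {m : ℝ} (hφ : StrongPotential φ m)
    (hh : IsTestFunction h) :
    (∑ i, ∫ x, ‖gradient (∂[i] h) x‖ ^ 2 ∂gibbsMeasure φ)
      + m * ∫ x, ‖gradient h x‖ ^ 2 ∂gibbsMeasure φ ≤ ∫ x, Lop φ h x ^ 2 ∂gibbsMeasure φ := by
  have hHess : IsTestFunction fun x => fderiv ℝ (fderiv ℝ φ) x (gradient h x) (gradient h x) := by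
    simp only [fderiv_fderiv_gradient hφ.smooth]
    exact .sum fun i => .sum fun j => (hh.dirDeriv _).smooth_mul
      ((contDiff_dirDeriv (contDiff_dirDeriv hφ.smooth _) _).mul (hh.dirDeriv _).smooth)
  rw [integral_Lop_sq hφ.smooth hh, ← integral_const_mul]
  gcongr
  · exact (hh.norm_gradient_sq.integrable_gibbs hφ.continuous).const_mul m
  · exact hHess.integrable_gibbs hφ.continuous
  · exact fun x => hφ.hessian_ge x _

end Bochner

/-! ### The Cauchy–Schwarz inequality for integrals -/

section CauchySchwarz

variable {α : Type*} [MeasurableSpace α] {μ : Measure α}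

lemma sq_integral_mul_le {f g : α → ℝ} (hf : MemLp f 2 μ) (hg : MemLp g 2 μ) :
    (∫ x, f x * g x ∂μ) ^ 2 ≤ (∫ x, f x ^ 2 ∂μ) * ∫ x, g x ^ 2 ∂μ := by
  have hinner {u v : α → ℝ} (hu : MemLp u 2 μ) (hv : MemLp v 2 μ) :
      ⟪hu.toLp u, hv.toLp v⟫ = ∫ x, u x * v x ∂μ := by
    rw [L2.inner_def]
    refine integral_congr_ae ?_
    filter_upwards [hu.coeFn_toLp, hv.coeFn_toLp] with x hux hvx
    rw [hux, hvx, RCLike.inner_apply, conj_trivial, mul_comm]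
  simpa only [hinner, ← sq] using real_inner_mul_inner_self_le (hf.toLp f) (hg.toLp g)

lemma sq_integral_le_of_sq_le_mul {F a b : α → ℝ} (ha : Integrable a μ) (hb : Integrable b μ)
    (ha₀ : 0 ≤ᵐ[μ] a) (hb₀ : 0 ≤ᵐ[μ] b) (hF : ∀ᵐ x ∂μ, F x ^ 2 ≤ a x * b x) :
    (∫ x, F x ∂μ) ^ 2 ≤ (∫ x, a x ∂μ) * ∫ x, b x ∂μ := by
  have hsq {u : α → ℝ} (hu₀ : 0 ≤ᵐ[μ] u) : (fun x => √(u x) ^ 2) =ᵐ[μ] u := by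
    filter_upwards [hu₀] with x hx using sq_sqrt hx
  have hL2 {u : α → ℝ} (hu : Integrable u μ) (hu₀ : 0 ≤ᵐ[μ] u) : MemLp (fun x => √(u x)) 2 μ :=
    (memLp_two_iff_integrable_sq
      (continuous_sqrt.comp_aestronglyMeasurable hu.aestronglyMeasurable)).2
      (hu.congr (hsq hu₀).symm)
  have hprod : |∫ x, F x ∂μ| ≤ ∫ x, √(a x) * √(b x) ∂μ := by
    refine abs_integral_le_integral_abs.trans (integral_mono_of_nonneg
      (.of_forall fun x => abs_nonneg _) ((hL2 ha ha₀).integrable_mul (hL2 hb hb₀)) ?_)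
    filter_upwards [ha₀, hF] with x hax hFx
    rw [← sqrt_mul hax]
    exact abs_le_sqrt hFx
  calc (∫ x, F x ∂μ) ^ 2
      ≤ (∫ x, √(a x) * √(b x) ∂μ) ^ 2 := sq_le_sq.2 (hprod.trans (le_abs_self _))
    _ ≤ (∫ x, √(a x) ^ 2 ∂μ) * ∫ x, √(b x) ^ 2 ∂μ := sq_integral_mul_le (hL2 ha ha₀) (hL2 hb hb₀)
    _ = (∫ x, a x ∂μ) * ∫ x, b x ∂μ := by
      rw [integral_congr_ae (hsq ha₀), integral_congr_ae (hsq hb₀)]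

end CauchySchwarz

/-! ### Mollification -/

noncomputable section Mollification

variable {E : Type*} [NormedAddCommGroup E] [InnerProductSpace ℝ E] [FiniteDimensional ℝ E]
  [MeasurableSpace E] [BorelSpace E] {η w v : E → ℝ} {x : E}

/-- The convolution `η * w` of a kernel `η` with `w`. -/
def mollify (η w : E → ℝ) : E → ℝ := η ⋆[ContinuousLinearMap.lsmul ℝ ℝ, volume] w

lemma mollify_apply (η w : E → ℝ) (x : E) : mollify η w x = ∫ y, η (x - y) * w y :=
  convolution_lsmul_swap

lemma contDiff_mollify (hη : IsTestFunction η) (hw : LocallyIntegrable w) :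
    ContDiff ℝ ∞ (mollify η w) :=
  hη.hasCompactSupport.contDiff_convolution_left _ hη.smooth hw

lemma dirDeriv_mollify (hη : IsTestFunction η) (hw : LocallyIntegrable w) (u : E) :
    dirDeriv u (mollify η w) = mollify (dirDeriv u η) w := by
  ext x
  have hexists : Integrable fun t => ContinuousLinearMap.precompL E
      (ContinuousLinearMap.lsmul ℝ ℝ) (fderiv ℝ η t) (w (x - t)) :=
    (hη.hasCompactSupport.fderiv ℝ).convolutionExists_left _
      (hη.smooth.continuous_fderiv (by simp)) hw x
  rw [dirDeriv, mollify, (hη.hasCompactSupport.hasFDerivAt_convolution_left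
    (ContinuousLinearMap.lsmul ℝ ℝ) (hη.smooth.of_le (by simp)) hw x).fderiv, convolution,
    ContinuousLinearMap.integral_apply hexists]
  rfl

lemma integrable_comp_sub_left_mul (hη : IsTestFunction η) (hw : LocallyIntegrable w) (x : E) :
    Integrable fun y => η (x - y) * w y := by
  simpa only [smul_eq_mul] using hw.integrable_smul_left_of_hasCompactSupport
    (hη.comp_sub_left x).continuous (hη.comp_sub_left x).hasCompactSupport

lemma isTestFunction_normed (b : ContDiffBump (0 : E)) : IsTestFunction (b.normed volume) :=
  ⟨b.contDiff_normed, b.hasCompactSupport_normed⟩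

lemma integrable_mollify (b : ContDiffBump (0 : E)) (hw : Integrable w) :
    Integrable (mollify (b.normed volume) w) :=
  b.integrable_normed.integrable_convolution _ hw

lemma integral_mollify (b : ContDiffBump (0 : E)) (hw : Integrable w) :
    ∫ x, mollify (b.normed volume) w x = ∫ x, w x := by
  rw [mollify, integral_convolution _ b.integrable_normed hw, b.integral_normed]
  simp

lemma integrable_prod_sub_mul (hη : IsTestFunction η) (hw : Integrable w) (hv : Integrable v) :
    Integrable (fun z : E × E => η (z.1 - z.2) * (v z.1 * w z.2)) (volume.prod volume) := by
  obtain ⟨K, hK⟩ := hη.hasCompactSupport.exists_bound_of_continuous hη.continuous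
  exact (hv.mul_prod hw).bdd_mul
    (hη.continuous.comp (continuous_fst.sub continuous_snd)).aestronglyMeasurable
    (.of_forall fun z => hK _)

lemma integral_mollify_mul (b : ContDiffBump (0 : E)) (hw : Integrable w) (hv : Integrable v) :
    ∫ x, mollify (b.normed volume) w x * v x = ∫ y, w y * mollify (b.normed volume) v y := by
  have hη (x y : E) : b.normed volume (y - x) = b.normed volume (x - y) := by
    rw [← neg_sub, b.normed_neg]
  simp only [mollify_apply, ← integral_mul_const, ← integral_const_mul]
  rw [integral_integral_swap]
  · exact integral_congr_ae (.of_forall fun y => integral_congr_ae (.of_forall fun x => by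
      simp only [hη x y]
      ring))
  · exact (integrable_prod_sub_mul (isTestFunction_normed b) hw hv).congr
      (.of_forall fun z => by simp only [Function.uncurry]; ring)

lemma abs_integral_mollify_mul_sub_le (b : ContDiffBump (0 : E)) (hw : Integrable w)
    (hv : IsTestFunction v) {τ : ℝ} (hτ : ∀ x y, dist x y < b.rOut → dist (v x) (v y) ≤ τ) :
    |(∫ x, mollify (b.normed volume) w x * v x) - ∫ x, w x * v x| ≤ τ * ∫ x, |w x| := by
  have hclose (y : E) : |mollify (b.normed volume) v y - v y| ≤ τ :=
    b.dist_normed_convolution_le hv.continuous.aestronglyMeasurable fun x hx => hτ x y hx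
  obtain ⟨K, hK⟩ := hv.hasCompactSupport.exists_bound_of_continuous hv.continuous
  have hmv : ContDiff ℝ ∞ (mollify (b.normed volume) v) :=
    contDiff_mollify (isTestFunction_normed b) (hv.continuous.locallyIntegrable)
  have hwv : Integrable fun x => w x * v x :=
    hw.mul_bdd hv.continuous.aestronglyMeasurable (.of_forall hK)
  have hwm : Integrable fun x => w x * mollify (b.normed volume) v x := by
    have hwd := hw.mul_bdd (hmv.continuous.sub hv.continuous).aestronglyMeasurable
      (.of_forall hclose)
    exact (hwd.add hwv).congr (.of_forall fun x => by simp [mul_sub])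
  rw [integral_mollify_mul b hw (hv.integrable volume), ← integral_const_mul,
    ← integral_sub hwm hwv]
  refine abs_integral_le_integral_abs.trans (integral_mono_of_nonneg
    (.of_forall fun x => abs_nonneg _) (hw.abs.const_mul _) (.of_forall fun x => ?_))
  dsimp only
  rw [← mul_sub, abs_mul, mul_comm]
  exact mul_le_mul_of_nonneg_right (hclose x) (abs_nonneg _)

lemma sq_mollify_mul_le {g ρ q : E → ℝ} (b : ContDiffBump (0 : E)) {K C : ℝ}
    (hρ : ∀ y, 0 ≤ ρ y) (hg : LocallyIntegrable fun y => g y ^ 2 * ρ y)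
    (hρx : ∀ y, dist y x < b.rOut → ρ y ≤ C) (hq : ∀ y, dist y x < b.rOut → |q y| ≤ K) :
    mollify (b.normed volume) (fun y => g y * ρ y * q y) x ^ 2
      ≤ mollify (b.normed volume) (fun y => g y ^ 2 * ρ y) x * (C * K ^ 2) := by
  have hη := isTestFunction_normed b
  have hmass : ∫ y, b.normed volume (x - y) * (C * K ^ 2) = C * K ^ 2 := by
    rw [integral_mul_const, integral_sub_left_eq_self (b.normed volume ·), b.integral_normed,
      one_mul]
  have hC : 0 ≤ C := (hρ x).trans (hρx x (by simpa using b.rOut_pos))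
  have hη₀ (y : E) : 0 ≤ b.normed volume (x - y) := b.nonneg_normed _
  simp only [mollify_apply]
  rw [← hmass]
  refine sq_integral_le_of_sq_le_mul (integrable_comp_sub_left_mul hη hg x)
    (((hη.comp_sub_left x).integrable volume).mul_const _)
    (.of_forall fun y => mul_nonneg (hη₀ y) (mul_nonneg (sq_nonneg _) (hρ y)))
    (.of_forall fun y => mul_nonneg (hη₀ y) (by positivity)) (.of_forall fun y => ?_)
  rcases le_or_gt b.rOut (dist y x) with hy | hy
  · have hη_zero : b.normed volume (x - y) = 0 := by
      rw [← Function.notMem_support, b.support_normed_eq]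
      simpa [dist_comm, ← dist_eq_norm] using hy
    simp [hη_zero]
  · have hweight : ρ y * q y ^ 2 ≤ C * K ^ 2 :=
      mul_le_mul (hρx y hy) (sq_le_sq.2 ((hq y hy).trans (le_abs_self K))) (sq_nonneg _) hC
    calc (b.normed volume (x - y) * (g y * ρ y * q y)) ^ 2
        = b.normed volume (x - y) ^ 2 * (g y ^ 2 * ρ y) * (ρ y * q y ^ 2) := by ring
      _ ≤ b.normed volume (x - y) ^ 2 * (g y ^ 2 * ρ y) * (C * K ^ 2) :=
        by have := hρ y; gcongr
      _ = _ := by ring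

lemma exists_ae_eq_const_of_integral_mul_dirDeriv_eq_zero {ι : Type*} (e : Module.Basis ι ℝ E)
    {g : E → ℝ} (hg : LocallyIntegrable g)
    (h : ∀ u, IsTestFunction u → ∀ i, ∫ x, g x * dirDeriv (e i) u x = 0) :
    ∃ c, ∀ᵐ x, g x = c := by
  let b (k : ℕ) : ContDiffBump (0 : E) := ⟨1 / ((k : ℝ) + 1) / 2, 1 / ((k : ℝ) + 1), by positivity,
    half_lt_self (by positivity)⟩
  have hlim : ∀ᵐ x, Tendsto (fun k => mollify ((b k).normed volume) g x) atTop (𝓝 (g x)) :=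
    ContDiffBump.ae_convolution_tendsto_right_of_locallyIntegrable (K := 2)
      tendsto_one_div_add_atTop_nhds_zero_nat (.of_forall fun k => by simp only [b]; linarith) hg
  have hconst (k : ℕ) (x : E) :
      mollify ((b k).normed volume) g x = mollify ((b k).normed volume) g 0 := by
    have hη := isTestFunction_normed (b k)
    refine is_const_of_fderiv_eq_zero (𝕜 := ℝ)
      ((contDiff_mollify hη hg).differentiable (by simp)) (fun y => ?_) x 0
    refine ContinuousLinearMap.coe_inj.1 (e.ext fun i => ?_)
    change dirDeriv (e i) _ y = 0
    rw [dirDeriv_mollify hη hg, mollify_apply]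
    simpa only [dirDeriv_comp_sub_left hη.smooth, mul_neg, integral_neg, neg_eq_zero, mul_comm]
      using h _ (hη.comp_sub_left y) i
  obtain ⟨x₀, hx₀⟩ := hlim.exists
  refine ⟨g x₀, ?_⟩
  filter_upwards [hlim] with x hx
  simp_rw [hconst] at hx hx₀
  exact tendsto_nhds_unique hx hx₀

end Mollification

/-! ### Caccioppoli's inequality -/

noncomputable section Caccioppoli

variable {E : Type*} [NormedAddCommGroup E]

lemma caccioppoli_pointwise {r : ℝ} (hr : 0 < r) (p q D γ S : ℝ) :
    p ^ 2 * D ^ 2 * r ≤ 4 * (p ^ 2 * (S ^ 2 / r)) + 10 * (q ^ 2 * (γ ^ 2 * r))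
      + 2 * ((r * D + S) * ((q * p + p * q) * γ + p * p * D)) := by
  have hsquares : 4 * (p ^ 2 * (S ^ 2 / r)) + 10 * (q ^ 2 * (γ ^ 2 * r))
      + 2 * ((r * D + S) * ((q * p + p * q) * γ + p * p * D)) - p ^ 2 * D ^ 2 * r
      = r * (1 / 2 * (p * D + 2 * p * S / r) ^ 2 + 1 / 2 * (p * D + 4 * q * γ) ^ 2
        + 2 * (p * S / r + q * γ) ^ 2) := by
    field_simp
    ring
  rw [← sub_nonneg, hsquares]
  positivity

lemma caccioppoli [NormedSpace ℝ E] [FiniteDimensional ℝ E] [MeasurableSpace E] [BorelSpace E]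
    (μ : Measure E) [μ.IsAddHaarMeasure] {ι : Type*} [Fintype ι] {e : ι → E} {ρ G χ : E → ℝ}
    {S : ι → E → ℝ} (hρ : ContDiff ℝ ∞ ρ) (hρ₀ : ∀ x, 0 < ρ x) (hG : ContDiff ℝ ∞ G)
    (hS : ∀ i, ContDiff ℝ ∞ (S i)) (hχ : IsTestFunction χ)
    (hdiv : ∀ x, ∑ i, dirDeriv (e i) (fun y => ρ y * dirDeriv (e i) G y + S i y) x = 0) :
    ∑ i, ∫ x, χ x ^ 2 * dirDeriv (e i) G x ^ 2 * ρ x ∂μ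
      ≤ ∑ i, ∫ x, (4 * (χ x ^ 2 * (S i x ^ 2 / ρ x))
        + 10 * (dirDeriv (e i) χ x ^ 2 * (G x ^ 2 * ρ x))) ∂μ := by
  have hχG : IsTestFunction fun x => χ x * χ x * G x := (hχ.mul_smooth hχ.smooth).mul_smooth hG
  have hdG (i : ι) : ContDiff ℝ ∞ (dirDeriv (e i) G) := contDiff_dirDeriv hG _
  have hflux (i : ι) : ContDiff ℝ ∞ fun x => ρ x * dirDeriv (e i) G x + S i x :=
    (hρ.mul (hdG i)).add (hS i)
  have hweak : ∑ i, ∫ x, (ρ x * dirDeriv (e i) G x + S i x)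
      * dirDeriv (e i) (fun x => χ x * χ x * G x) x ∂μ = 0 := by
    simp only [fun i => integral_mul_dirDeriv μ (locallyLipschitz_of_smooth (hflux i)) hχG (e i),
      Finset.sum_neg_distrib]
    rw [← integral_finsetSum _ fun i _ =>
      (hχG.smooth_mul (contDiff_dirDeriv (hflux i) _)).integrable μ]
    simp_rw [← Finset.sum_mul, hdiv, zero_mul, integral_zero, neg_zero]
  have hint_weak (i : ι) : Integrable (fun x => (ρ x * dirDeriv (e i) G x + S i x)
      * dirDeriv (e i) (fun x => χ x * χ x * G x) x) μ :=
    ((hχG.dirDeriv _).smooth_mul (hflux i)).integrable μ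
  have hint_left (i : ι) : Integrable (fun x => χ x ^ 2 * dirDeriv (e i) G x ^ 2 * ρ x) μ := by
    simp only [sq (χ _)]
    exact (((hχ.mul_smooth hχ.smooth).mul_smooth ((hdG i).pow 2)).mul_smooth hρ).integrable μ
  have hint_right (i : ι) : Integrable (fun x => 4 * (χ x ^ 2 * (S i x ^ 2 / ρ x))
      + 10 * (dirDeriv (e i) χ x ^ 2 * (G x ^ 2 * ρ x))) μ := by
    simp only [sq (χ _), sq (dirDeriv _ χ _)]
    exact ((((hχ.mul_smooth hχ.smooth).mul_smooth
      (((hS i).pow 2).div hρ fun x => (hρ₀ x).ne')).integrable μ).const_mul _).add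
      (((((hχ.dirDeriv _).mul_smooth (hχ.dirDeriv _).smooth).mul_smooth
        ((hG.pow 2).mul hρ)).integrable μ).const_mul _)
  have hmono (i : ι) := integral_mono (hint_left i) ((hint_right i).add ((hint_weak i).const_mul 2))
    fun x => by
      simpa only [Pi.add_apply, dirDeriv_mul (hχ.mul_smooth hχ.smooth).differentiableAt
        (differentiableAt_of_smooth hG), dirDeriv_mul hχ.differentiableAt hχ.differentiableAt]
        using caccioppoli_pointwise (hρ₀ x) (χ x) (dirDeriv (e i) χ x) (dirDeriv (e i) G x) (G x)
          (S i x)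
  refine (Finset.sum_le_sum fun i _ => hmono i).trans_eq ?_
  simp only [Pi.add_apply, integral_add (hint_right _) ((hint_weak _).const_mul 2),
    integral_const_mul, Finset.sum_add_distrib, ← Finset.mul_sum, hweak, mul_zero, add_zero]

lemma exists_isTestFunction_eqOn_one [InnerProductSpace ℝ E] [FiniteDimensional ℝ E] {K : Set E}
    (hK : IsCompact K) {δ : ℝ} (hδ : 0 < δ) :
    ∃ χ : E → ℝ, IsTestFunction χ ∧ (∀ x ∈ K, χ x = 1) ∧ (∀ x, χ x ∈ Set.Icc 0 1) ∧
      ∀ v x, |dirDeriv v χ x| ≤ δ * ‖v‖ := by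
  let b : ContDiffBump (0 : E) := ⟨1, 2, one_pos, one_lt_two⟩
  have hb : IsTestFunction b := ⟨b.contDiff, b.hasCompactSupport⟩
  obtain ⟨M, hM⟩ := (hb.hasCompactSupport.fderiv ℝ).exists_bound_of_continuous
    (hb.smooth.continuous_fderiv (by simp))
  obtain ⟨r, hr⟩ := hK.isBounded.subset_closedBall (0 : E)
  obtain ⟨R, hR, hrR, hMR⟩ : ∃ R : ℝ, 0 < R ∧ r ≤ R ∧ M ≤ δ * R :=
    ⟨max 1 (max r (M / δ)), by positivity, by simp,
      by rw [← div_le_iff₀' hδ]; simp⟩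
  refine ⟨fun x => b (R⁻¹ • x), ⟨hb.smooth.comp (contDiff_const_smul R⁻¹),
    hb.hasCompactSupport.comp_smul (inv_ne_zero hR.ne')⟩, fun x hx => ?_,
    fun x => ⟨b.nonneg, b.le_one⟩, fun v x => ?_⟩
  · refine b.one_of_mem_closedBall ?_
    rw [mem_closedBall_zero_iff, norm_smul, norm_inv, norm_of_nonneg hR.le]
    change R⁻¹ * ‖x‖ ≤ 1
    rw [inv_mul_le_iff₀ hR, mul_one]
    exact (mem_closedBall_zero_iff.1 (hr hx)).trans hrR
  · calc |dirDeriv v (fun x => b (R⁻¹ • x)) x| = R⁻¹ * ‖fderiv ℝ b (R⁻¹ • x) v‖ := by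
          simp [dirDeriv, fderiv_comp_smul, abs_mul, abs_of_pos hR]
      _ ≤ R⁻¹ * (δ * R * ‖v‖) := by
          gcongr
          exact (fderiv ℝ b _).le_of_opNorm_le ((hM _).trans hMR) v
      _ = δ * ‖v‖ := by field_simp

end Caccioppoli

/-! ### Weakly harmonic functions are constant -/

noncomputable section WeaklyHarmonic

variable {n : ℕ} {φ g : Euc n → ℝ} {η χ : Euc n → ℝ} {δ : ℝ}

lemma Lop_eq_sum_dirDeriv {h : Euc n → ℝ} (hh : ContDiff ℝ ∞ h) (x : Euc n) :
    Lop φ h x = ∑ i, (∂[i] (∂[i] h) x - ∂[i] φ x * ∂[i] h x) := by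
  rw [Lop_eq_neg_sum_adjDeriv hh, ← Finset.sum_neg_distrib]
  exact Finset.sum_congr rfl fun i _ => by rw [adjDeriv]; ring

lemma exp_neg_mul_exp (a : ℝ) : exp (-a) * exp a = 1 := by rw [← exp_add, neg_add_cancel, exp_zero]

/-- Distributional solutions of `L g = 0` for `L = Δ - ⟨∇φ, ∇⟩`, the symmetry of `L` in
`L²(e^{-φ})` being used to move `L` to the test function. -/
def IsWeaklyHarmonic (φ g : Euc n → ℝ) : Prop :=
  ∀ h, IsTestFunction h → ∫ x, g x * Lop φ h x ∂gibbsMeasure φ = 0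

/-- The smooth approximation of `g` obtained by mollifying the density `g e^{-φ}`. -/
def weightedMollify (φ η g : Euc n → ℝ) (x : Euc n) : ℝ :=
  mollify η (fun y => g y * exp (-φ y)) x * exp (φ x)

/-- The commutator of mollification by `η` and multiplication by `∂_v φ`, applied to `g e^{-φ}`. -/
def mollifyCommutator (φ η g : Euc n → ℝ) (v x : Euc n) : ℝ :=
  mollify η (fun y => g y * exp (-φ y) * dirDeriv v φ y) x
    - dirDeriv v φ x * mollify η (fun y => g y * exp (-φ y)) x

lemma locallyIntegrable_mul_dirDeriv {w : Euc n → ℝ} (hφ : ContDiff ℝ ∞ φ)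
    (hw : LocallyIntegrable w) (v : Euc n) : LocallyIntegrable fun y => w y * dirDeriv v φ y := by
  simpa only [smul_eq_mul, mul_comm] using
    hw.smul_continuous (contDiff_dirDeriv hφ v).continuous

lemma contDiff_weightedMollify (hφ : ContDiff ℝ ∞ φ) (hη : IsTestFunction η)
    (hw : LocallyIntegrable fun y => g y * exp (-φ y)) : ContDiff ℝ ∞ (weightedMollify φ η g) :=
  (contDiff_mollify hη hw).mul hφ.exp

lemma contDiff_mollifyCommutator (hφ : ContDiff ℝ ∞ φ) (hη : IsTestFunction η)
    (hw : LocallyIntegrable fun y => g y * exp (-φ y)) (v : Euc n) :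
    ContDiff ℝ ∞ (mollifyCommutator φ η g v) :=
  (contDiff_mollify hη (locallyIntegrable_mul_dirDeriv hφ hw v)).sub
    ((contDiff_dirDeriv hφ v).mul (contDiff_mollify hη hw))

lemma exp_neg_mul_dirDeriv_weightedMollify_add (hφ : ContDiff ℝ ∞ φ) (hη : IsTestFunction η)
    (hw : LocallyIntegrable fun y => g y * exp (-φ y)) (v x : Euc n) :
    exp (-φ x) * dirDeriv v (weightedMollify φ η g) x + mollifyCommutator φ η g v x
      = mollify (dirDeriv v η) (fun y => g y * exp (-φ y)) x
        + mollify η (fun y => g y * exp (-φ y) * dirDeriv v φ y) x := by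
  have hexp : dirDeriv v (fun y => exp (φ y)) x = dirDeriv v φ x * exp (φ x) := by
    simpa only [neg_neg, dirDeriv_neg] using dirDeriv_exp_neg hφ.neg v x
  unfold weightedMollify mollifyCommutator
  rw [dirDeriv_mul (differentiableAt_of_smooth (contDiff_mollify hη hw))
    (differentiableAt_of_smooth hφ.exp), hexp, dirDeriv_mollify hη hw]
  linear_combination (mollify (dirDeriv v η) (fun y => g y * exp (-φ y)) x
    + mollify η (fun y => g y * exp (-φ y)) x * dirDeriv v φ x) * exp_neg_mul_exp (φ x)

lemma IsWeaklyHarmonic.sum_dirDeriv_flux_eq_zero (hφ : ContDiff ℝ ∞ φ) (hη : IsTestFunction η)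
    (hw : LocallyIntegrable fun y => g y * exp (-φ y)) (hg : IsWeaklyHarmonic φ g) (x : Euc n) :
    ∑ i, ∂[i] (fun y => exp (-φ y) * ∂[i] (weightedMollify φ η g) y
      + mollifyCommutator φ η g (EuclideanSpace.single i 1) y) x = 0 := by
  have hwφ (i : Fin n) := locallyIntegrable_mul_dirDeriv hφ hw (EuclideanSpace.single i (1 : ℝ))
  have hdη (i : Fin n) := hη.dirDeriv (EuclideanSpace.single i 1)
  have hint₁ (i : Fin n) := integrable_comp_sub_left_mul
    ((hdη i).dirDeriv (EuclideanSpace.single i 1)) hw x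
  have hint₂ (i : Fin n) := integrable_comp_sub_left_mul (hdη i) (hwφ i) x
  have hLop (y : Euc n) : g y * Lop φ (fun z => η (x - z)) y * exp (-φ y)
      = ∑ i, (∂[i] (∂[i] η) (x - y) * (g y * exp (-φ y))
        + ∂[i] η (x - y) * (g y * exp (-φ y) * ∂[i] φ y)) := by
    rw [Lop_eq_sum_dirDeriv (hη.comp_sub_left x).smooth, Finset.mul_sum, Finset.sum_mul]
    refine Finset.sum_congr rfl fun i _ => ?_
    rw [funext fun z => dirDeriv_comp_sub_left hη.smooth x (EuclideanSpace.single i 1) z,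
      dirDeriv_neg, dirDeriv_comp_sub_left (hdη i).smooth]
    ring
  calc _ = ∑ i, ∫ y, (∂[i] (∂[i] η) (x - y) * (g y * exp (-φ y))
        + ∂[i] η (x - y) * (g y * exp (-φ y) * ∂[i] φ y)) := Finset.sum_congr rfl fun i _ => by
        rw [funext (exp_neg_mul_dirDeriv_weightedMollify_add hφ hη hw _),
          dirDeriv_add (differentiableAt_of_smooth (contDiff_mollify (hdη i) hw))
            (differentiableAt_of_smooth (contDiff_mollify hη (hwφ i))),
          dirDeriv_mollify (hdη i) hw, dirDeriv_mollify hη (hwφ i), mollify_apply, mollify_apply,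
          ← integral_add (hint₁ i) (hint₂ i)]
    _ = 0 := by
        rw [← hg _ (hη.comp_sub_left x), integral_gibbsMeasure hφ.continuous]
        simp only [hLop]
        exact (integral_finsetSum _ fun i _ => (hint₁ i).add (hint₂ i)).symm

lemma sq_weightedMollify_mul_exp_neg_le (b : ContDiffBump (0 : Euc n))
    (hg₂ : LocallyIntegrable fun y => g y ^ 2 * exp (-φ y)) {x : Euc n}
    (hφx : ∀ y, dist y x < b.rOut → exp (-φ y) ≤ 2 * exp (-φ x)) :
    weightedMollify φ (b.normed volume) g x ^ 2 * exp (-φ x)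
      ≤ 2 * mollify (b.normed volume) (fun y => g y ^ 2 * exp (-φ y)) x := by
  have hbound := sq_mollify_mul_le (q := fun _ => 1) (K := 1) b (fun y => (exp_pos (-φ y)).le) hg₂
    hφx (by simp)
  simp only [mul_one] at hbound
  calc weightedMollify φ (b.normed volume) g x ^ 2 * exp (-φ x)
      = mollify (b.normed volume) (fun y => g y * exp (-φ y)) x ^ 2 * exp (φ x) := by
        rw [weightedMollify]
        linear_combination mollify (b.normed volume) (fun y => g y * exp (-φ y)) x ^ 2
          * exp (φ x) * exp_neg_mul_exp (φ x)
    _ ≤ _ := mul_le_mul_of_nonneg_right hbound (exp_pos _).le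
    _ = 2 * mollify (b.normed volume) (fun y => g y ^ 2 * exp (-φ y)) x := by
        rw [one_pow, mul_one, mul_assoc, mul_assoc, exp_neg_mul_exp]
        ring

lemma sq_mollifyCommutator_div_exp_neg_le (hφ : ContDiff ℝ ∞ φ) (b : ContDiffBump (0 : Euc n))
    (hw : LocallyIntegrable fun y => g y * exp (-φ y))
    (hg₂ : LocallyIntegrable fun y => g y ^ 2 * exp (-φ y)) {v x : Euc n}
    (hφx : ∀ y, dist y x < b.rOut → exp (-φ y) ≤ 2 * exp (-φ x))
    (hdφx : ∀ y, dist y x < b.rOut → |dirDeriv v φ y - dirDeriv v φ x| ≤ δ) :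
    mollifyCommutator φ (b.normed volume) g v x ^ 2 / exp (-φ x)
      ≤ 2 * δ ^ 2 * mollify (b.normed volume) (fun y => g y ^ 2 * exp (-φ y)) x := by
  have hη := isTestFunction_normed b
  have hcomm : mollifyCommutator φ (b.normed volume) g v x = mollify (b.normed volume)
      (fun y => g y * exp (-φ y) * (dirDeriv v φ y - dirDeriv v φ x)) x := by
    rw [mollifyCommutator, mollify_apply, mollify_apply, mollify_apply, ← integral_const_mul,
      ← integral_sub (integrable_comp_sub_left_mul hη (locallyIntegrable_mul_dirDeriv hφ hw v) x)
        ((integrable_comp_sub_left_mul hη hw x).const_mul _)]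
    exact integral_congr_ae (.of_forall fun y => by ring)
  rw [hcomm, div_le_iff₀ (exp_pos _)]
  refine (sq_mollify_mul_le b (fun y => (exp_pos (-φ y)).le) hg₂ hφx hdφx).trans_eq ?_
  ring

/-- The Caccioppoli inequality applied to `G = weightedMollify φ η g`, which solves
`div(e^{-φ} ∇G + R) = 0` with `R` the commutator. -/
lemma IsWeaklyHarmonic.sum_integral_sq_dirDeriv_weightedMollify_le (hφ : ContDiff ℝ ∞ φ)
    (hw : LocallyIntegrable fun y => g y * exp (-φ y))
    (hg₂ : Integrable fun y => g y ^ 2 * exp (-φ y)) (hg : IsWeaklyHarmonic φ g)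
    (hχ : IsTestFunction χ) (hχ₁ : ∀ x, χ x ∈ Set.Icc 0 1) (hdχ : ∀ v x, |dirDeriv v χ x| ≤ δ * ‖v‖)
    (b : ContDiffBump (0 : Euc n))
    (hφχ : ∀ x ∈ tsupport χ, ∀ y, dist y x < b.rOut → exp (-φ y) ≤ 2 * exp (-φ x))
    (hdφχ : ∀ x ∈ tsupport χ, ∀ y, dist y x < b.rOut → ‖fderiv ℝ φ y - fderiv ℝ φ x‖ ≤ δ) :
    ∑ i, ∫ x, χ x ^ 2 * ∂[i] (weightedMollify φ (b.normed volume) g) x ^ 2 * exp (-φ x)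
      ≤ 28 * n * δ ^ 2 * ∫ x, g x ^ 2 * exp (-φ x) := by
  have hη := isTestFunction_normed b
  set N := mollify (b.normed volume) fun y => g y ^ 2 * exp (-φ y)
  have hN (x : Euc n) : 0 ≤ N x := by
    simp only [N, mollify_apply]
    exact integral_nonneg fun y => mul_nonneg (b.nonneg_normed _) (by positivity)
  have hpointwise (i : Fin n) (x : Euc n) :
      4 * (χ x ^ 2 * (mollifyCommutator φ (b.normed volume) g (EuclideanSpace.single i 1) x ^ 2
          / exp (-φ x)))
        + 10 * (∂[i] χ x ^ 2 * (weightedMollify φ (b.normed volume) g x ^ 2 * exp (-φ x)))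
        ≤ 28 * δ ^ 2 * N x := by
    by_cases hx : x ∈ tsupport χ
    · have hR := sq_mollifyCommutator_div_exp_neg_le hφ b hw hg₂.locallyIntegrable (hφχ x hx)
        (v := EuclideanSpace.single i 1) (δ := δ) fun y hy => by
          simpa [dirDeriv] using (fderiv ℝ φ y - fderiv ℝ φ x).le_of_opNorm_le (hdφχ x hx y hy)
            (EuclideanSpace.single i 1)
      have hG := sq_weightedMollify_mul_exp_neg_le b hg₂.locallyIntegrable (hφχ x hx)
      have hχx : χ x ^ 2 ≤ 1 := pow_le_one₀ (hχ₁ x).1 (hχ₁ x).2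
      have hdχx : ∂[i] χ x ^ 2 ≤ δ ^ 2 :=
        sq_le_sq' (abs_le.1 (by simpa using hdχ (EuclideanSpace.single i 1) x)).1
          (abs_le.1 (by simpa using hdχ (EuclideanSpace.single i 1) x)).2
      calc _ ≤ 4 * (1 * (2 * δ ^ 2 * N x)) + 10 * (δ ^ 2 * (2 * N x)) := by gcongr
        _ = 28 * δ ^ 2 * N x := by ring
    · have hχx : χ x = 0 := image_eq_zero_of_notMem_tsupport hx
      have hdχx : fderiv ℝ χ x = 0 := fderiv_of_notMem_tsupport (𝕜 := ℝ) hx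
      simp only [hχx, dirDeriv, hdχx]
      simpa using mul_nonneg (by positivity) (hN x)
  refine (caccioppoli volume hφ.neg.exp (fun x => exp_pos _)
    (contDiff_weightedMollify hφ hη hw) (fun i => contDiff_mollifyCommutator hφ hη hw _) hχ
    (hg.sum_dirDeriv_flux_eq_zero hφ hη hw)).trans ?_
  refine (Finset.sum_le_sum fun i _ => integral_mono_of_nonneg (.of_forall fun x => by
    simp only [Pi.zero_apply]; positivity) ((integrable_mollify b hg₂).const_mul (28 * δ ^ 2))
    (.of_forall (hpointwise i))).trans_eq ?_
  simp only [integral_const_mul, integral_mollify b hg₂, Finset.sum_const, Finset.card_univ,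
    Fintype.card_fin, nsmul_eq_mul]
  ring

lemma exists_forall_dist_lt_of_isCompact {X Y : Type*} [PseudoMetricSpace X] [PseudoMetricSpace Y]
    {F : X → Y} (hF : Continuous F) {K : Set X} (hK : IsCompact K) {τ : ℝ} (hτ : 0 < τ) :
    ∃ ε > 0, ∀ x ∈ K, ∀ y, dist y x < ε → dist (F y) (F x) < τ := by
  obtain ⟨ε, hε, h⟩ := Metric.mem_uniformity_dist.1 <|
    hK.uniformContinuousAt_of_continuousAt F (fun x _ => hF.continuousAt)
      (Metric.dist_mem_uniformity hτ)
  refine ⟨ε, hε, fun x hx y hy => ?_⟩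
  rw [dist_comm]
  exact h (dist_comm y x ▸ hy) hx

lemma IsWeaklyHarmonic.exists_sum_integral_sq_dirDeriv_weightedMollify_le (hφ : ContDiff ℝ ∞ φ)
    (hw : LocallyIntegrable fun y => g y * exp (-φ y))
    (hg₂ : Integrable fun y => g y ^ 2 * exp (-φ y)) (hg : IsWeaklyHarmonic φ g)
    {K : Set (Euc n)} (hK : IsCompact K) (hδ : 0 < δ) :
    ∃ χ, IsTestFunction χ ∧ (∀ x ∈ K, χ x = 1) ∧ ∃ ε > 0, ∀ b : ContDiffBump (0 : Euc n),
      b.rOut ≤ ε →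
        ∑ i, ∫ x, χ x ^ 2 * ∂[i] (weightedMollify φ (b.normed volume) g) x ^ 2 * exp (-φ x)
          ≤ 28 * n * δ ^ 2 * ∫ x, g x ^ 2 * exp (-φ x) := by
  obtain ⟨χ, hχ, hχK, hχ₁, hdχ⟩ := exists_isTestFunction_eqOn_one hK hδ
  obtain ⟨ε₁, hε₁, hφ₁⟩ := exists_forall_dist_lt_of_isCompact hφ.continuous
    hχ.hasCompactSupport (log_pos one_lt_two)
  obtain ⟨ε₂, hε₂, hφ₂⟩ := exists_forall_dist_lt_of_isCompact
    (hφ.continuous_fderiv (by simp)) hχ.hasCompactSupport hδ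
  refine ⟨χ, hχ, hχK, min ε₁ ε₂, lt_min hε₁ hε₂, fun b hb =>
    hg.sum_integral_sq_dirDeriv_weightedMollify_le hφ hw hg₂ hχ hχ₁ hdχ b
      (fun x hx y hy => ?_) fun x hx y hy => ?_⟩
  · have hlog := (abs_lt.1 (hφ₁ x hx y (hy.trans_le (hb.trans (min_le_left _ _))))).1
    rw [← exp_log (two_pos : (0 : ℝ) < 2), ← exp_add]
    exact exp_le_exp.2 (by linarith)
  · rw [← dist_eq_norm]
    exact (hφ₂ x hx y (hy.trans_le (hb.trans (min_le_right _ _)))).le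

end WeaklyHarmonic

/-! ### Density of the image of the generator -/

noncomputable section Density

variable {n : ℕ} {φ g : Euc n → ℝ}

lemma sq_integral_dirDeriv_mul_le {G u χ : Euc n → ℝ} (hφ : ContDiff ℝ ∞ φ) (hG : ContDiff ℝ ∞ G)
    (hu : IsTestFunction u) (hχ : IsTestFunction χ) (hχu : ∀ x ∈ tsupport u, χ x = 1)
    (v : Euc n) : (∫ x, dirDeriv v G x * u x) ^ 2
      ≤ (∫ x, χ x ^ 2 * dirDeriv v G x ^ 2 * exp (-φ x)) * ∫ x, u x ^ 2 * exp (φ x) := by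
  have hint₁ : IsTestFunction fun x => χ x ^ 2 * dirDeriv v G x ^ 2 * exp (-φ x) := by
    simp only [sq (χ _)]
    exact ((hχ.mul_smooth hχ.smooth).mul_smooth ((contDiff_dirDeriv hG v).pow 2)).mul_smooth
      hφ.neg.exp
  have hint₂ : IsTestFunction fun x => u x ^ 2 * exp (φ x) := by
    simp only [sq (u _)]
    exact (hu.mul_smooth hu.smooth).mul_smooth hφ.exp
  refine sq_integral_le_of_sq_le_mul (hint₁.integrable _) (hint₂.integrable _)
    (.of_forall fun x => by positivity) (.of_forall fun x => by positivity)
    (.of_forall fun x => ?_)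
  by_cases hx : x ∈ tsupport u
  · rw [hχu x hx]
    linear_combination -(dirDeriv v G x ^ 2 * u x ^ 2) * exp_neg_mul_exp (φ x)
  · simp [image_eq_zero_of_notMem_tsupport hx]

lemma IsWeaklyHarmonic.abs_integral_mul_dirDeriv_le (hφ : ContDiff ℝ ∞ φ)
    (hw : Integrable fun y => g y * exp (-φ y)) (hg₂ : Integrable fun y => g y ^ 2 * exp (-φ y))
    (hg : IsWeaklyHarmonic φ g) {u : Euc n → ℝ} (hu : IsTestFunction u) (i : Fin n) {δ : ℝ}
    (hδ : 0 < δ) : |∫ x, g x * ∂[i] u x| ≤ δ * ((∫ x, |g x * exp (-φ x)|)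
      + √(28 * n * (∫ x, g x ^ 2 * exp (-φ x)) * ∫ x, u x ^ 2 * exp (φ x))) := by
  set v : Euc n → ℝ := fun x => ∂[i] u x * exp (φ x) with hv_def
  have hv : IsTestFunction v := (hu.dirDeriv _).mul_smooth hφ.exp
  obtain ⟨ε₁, hε₁, hvε⟩ := Metric.uniformContinuous_iff.1
    (hv.hasCompactSupport.uniformContinuous_of_continuous hv.continuous) δ hδ
  obtain ⟨χ, hχ, hχu, ε₂, hε₂, hgrad⟩ :=
    hg.exists_sum_integral_sq_dirDeriv_weightedMollify_le hφ hw.locallyIntegrable hg₂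
      hu.hasCompactSupport hδ
  have hε : 0 < min ε₁ ε₂ := lt_min hε₁ hε₂
  let b : ContDiffBump (0 : Euc n) := ⟨min ε₁ ε₂ / 2, min ε₁ ε₂, half_pos hε, half_lt_self hε⟩
  set G := weightedMollify φ (b.normed volume) g with hG_def
  have hG : ContDiff ℝ ∞ G :=
    contDiff_weightedMollify hφ (isTestFunction_normed b) hw.locallyIntegrable
  have hgv : ∫ x, g x * ∂[i] u x = ∫ x, g x * exp (-φ x) * v x :=
    integral_congr_ae (.of_forall fun x => by
      linear_combination -(g x * ∂[i] u x) * exp_neg_mul_exp (φ x))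
  have hGu : ∫ x, mollify (b.normed volume) (fun y => g y * exp (-φ y)) x * v x
      = -∫ x, ∂[i] G x * u x := by
    rw [← integral_mul_dirDeriv volume (locallyLipschitz_of_smooth hG) hu]
    refine integral_congr_ae (.of_forall fun x => ?_)
    simp only [hG_def, hv_def, weightedMollify]
    ring
  have hmollify := abs_integral_mollify_mul_sub_le b hw hv (τ := δ) fun x y hxy =>
    (hvε (hxy.trans_le (min_le_left _ _))).le
  have hgradi : ∫ x, χ x ^ 2 * ∂[i] G x ^ 2 * exp (-φ x)
      ≤ 28 * n * δ ^ 2 * ∫ x, g x ^ 2 * exp (-φ x) :=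
    (Finset.single_le_sum (f := fun j => ∫ x, χ x ^ 2 * ∂[j] G x ^ 2 * exp (-φ x))
      (fun j _ => integral_nonneg fun x => by positivity) (Finset.mem_univ i)).trans
      (hgrad b (min_le_right _ _))
  have hsmall : |∫ x, ∂[i] G x * u x|
      ≤ δ * √(28 * n * (∫ x, g x ^ 2 * exp (-φ x)) * ∫ x, u x ^ 2 * exp (φ x)) := by
    rw [mul_comm, ← sqrt_mul_self hδ.le, ← sqrt_mul (by positivity)]
    refine abs_le_sqrt ((sq_integral_dirDeriv_mul_le hφ hG hu hχ hχu _).trans ?_)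
    refine (mul_le_mul_of_nonneg_right hgradi (integral_nonneg fun x => by positivity)).trans_eq ?_
    ring
  rw [hGu] at hmollify
  rw [hgv, mul_add]
  have htriangle := abs_sub_abs_le_abs_sub (∫ x, g x * exp (-φ x) * v x) (-∫ x, ∂[i] G x * u x)
  rw [abs_sub_comm, abs_neg] at htriangle
  linarith

lemma IsWeaklyHarmonic.exists_ae_eq_const (hφ : ContDiff ℝ ∞ φ) [IsFiniteMeasure (gibbsMeasure φ)]
    (hgL : MemLp g 2 (gibbsMeasure φ)) (hg : IsWeaklyHarmonic φ g) : ∃ c, ∀ᵐ x, g x = c := by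
  have hw := (integrable_gibbsMeasure_iff hφ.continuous).1 (hgL.integrable one_le_two)
  have hg₂ := (integrable_gibbsMeasure_iff hφ.continuous).1 hgL.integrable_sq
  have hloc : LocallyIntegrable g := by
    refine (hw.locallyIntegrable.smul_continuous hφ.continuous.rexp).congr (.of_forall fun x => ?_)
    linear_combination g x * exp_neg_mul_exp (φ x)
  refine exists_ae_eq_const_of_integral_mul_dirDeriv_eq_zero
    (EuclideanSpace.basisFun (Fin n) ℝ).toBasis hloc fun u hu i => ?_
  rw [OrthonormalBasis.coe_toBasis, EuclideanSpace.basisFun_apply]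
  by_contra hne
  obtain ⟨δ, hδ, hlt⟩ := exists_pos_mul_lt (abs_pos.2 hne) ((∫ x, |g x * exp (-φ x)|)
    + √(28 * n * (∫ x, g x ^ 2 * exp (-φ x)) * ∫ x, u x ^ 2 * exp (φ x)))
  exact (hg.abs_integral_mul_dirDeriv_le hφ hw hg₂ hu i hδ).not_gt (mul_comm δ _ ▸ hlt)

lemma IsTestFunction.memLp_two {f : Euc n → ℝ} (hf : IsTestFunction f) (μ : Measure (Euc n))
    [IsFiniteMeasure μ] : MemLp f 2 μ := by
  obtain ⟨K, hK⟩ := hf.hasCompactSupport.exists_bound_of_continuous hf.continuous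
  exact .of_bound hf.continuous.aestronglyMeasurable K (.of_forall hK)

lemma Lop_add {h₁ h₂ : Euc n → ℝ} (hh₁ : ContDiff ℝ ∞ h₁) (hh₂ : ContDiff ℝ ∞ h₂) (x : Euc n) :
    Lop φ (fun y => h₁ y + h₂ y) x = Lop φ h₁ x + Lop φ h₂ x := by
  rw [Lop_eq_sum_dirDeriv hh₁, Lop_eq_sum_dirDeriv hh₂, Lop_eq_sum_dirDeriv (hh₁.add hh₂),
    ← Finset.sum_add_distrib]
  refine Finset.sum_congr rfl fun i _ => ?_
  have hd : ∂[i] (fun y => h₁ y + h₂ y) = fun y => ∂[i] h₁ y + ∂[i] h₂ y := funext fun y =>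
    dirDeriv_add (differentiableAt_of_smooth hh₁) (differentiableAt_of_smooth hh₂) _
  rw [hd, dirDeriv_add (differentiableAt_of_smooth (contDiff_dirDeriv hh₁ _))
    (differentiableAt_of_smooth (contDiff_dirDeriv hh₂ _))]
  ring

lemma Lop_const_mul {h : Euc n → ℝ} (hh : ContDiff ℝ ∞ h) (c : ℝ) (x : Euc n) :
    Lop φ (fun y => c * h y) x = c * Lop φ h x := by
  have hd {f : Euc n → ℝ} (hf : ContDiff ℝ ∞ f) (v : Euc n) :
      dirDeriv v (fun y => c * f y) = fun y => c * dirDeriv v f y := by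
    ext y
    simp [dirDeriv, fderiv_const_mul (differentiableAt_of_smooth hf)]
  rw [Lop_eq_sum_dirDeriv hh, Lop_eq_sum_dirDeriv (contDiff_const.mul hh), Finset.mul_sum]
  refine Finset.sum_congr rfl fun i _ => ?_
  rw [hd hh, hd (contDiff_dirDeriv hh _)]
  ring

/-- The image of the test functions under `L`, as a subspace of `L²(e^{-φ})`. -/
def rangeLop (φ : Euc n → ℝ) : Submodule ℝ (Lp ℝ 2 (gibbsMeasure φ)) where
  carrier := {F | ∃ h, IsTestFunction h ∧ F =ᵐ[gibbsMeasure φ] Lop φ h}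
  add_mem' := by
    rintro F₁ F₂ ⟨h₁, hh₁, hF₁⟩ ⟨h₂, hh₂, hF₂⟩
    refine ⟨_, hh₁.add hh₂, ?_⟩
    filter_upwards [hF₁, hF₂, Lp.coeFn_add F₁ F₂] with x hx₁ hx₂ hx
    rw [hx, Pi.add_apply, hx₁, hx₂, Lop_add hh₁.smooth hh₂.smooth]
  zero_mem' := by
    refine ⟨fun _ => 0, ⟨contDiff_const, .zero⟩, ?_⟩
    filter_upwards [Lp.coeFn_zero ℝ 2 (gibbsMeasure φ)] with x hx
    rw [hx, Pi.zero_apply]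
    simpa using (Lop_const_mul (φ := φ) (contDiff_const (c := (0 : ℝ))) 0 x).symm
  smul_mem' := by
    rintro c F ⟨h, hh, hF⟩
    refine ⟨fun x => c * h x, hh.smooth_mul contDiff_const, ?_⟩
    filter_upwards [hF, Lp.coeFn_smul c F] with x hx hcx
    rw [hcx, Pi.smul_apply, hx, smul_eq_mul, Lop_const_mul hh.smooth]

lemma isWeaklyHarmonic_of_mem_orthogonal_rangeLop (hφ : ContDiff ℝ ∞ φ)
    [IsFiniteMeasure (gibbsMeasure φ)] {G : Lp ℝ 2 (gibbsMeasure φ)} (hG : G ∈ (rangeLop φ)ᗮ) :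
    IsWeaklyHarmonic φ G := by
  intro h hh
  have hL := (hh.Lop hφ).memLp_two (gibbsMeasure φ)
  rw [← (rangeLop φ).mem_orthogonal G |>.1 hG (hL.toLp _) ⟨h, hh, hL.coeFn_toLp⟩, L2.inner_def]
  refine integral_congr_ae ?_
  filter_upwards [hL.coeFn_toLp] with x hx
  simp [hx]

theorem exists_integral_sq_sub_Lop_le (hφ : ContDiff ℝ ∞ φ) [IsFiniteMeasure (gibbsMeasure φ)]
    {f : Euc n → ℝ} (hf : MemLp f 2 (gibbsMeasure φ)) (hf₀ : ∫ x, f x ∂gibbsMeasure φ = 0) {δ : ℝ}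
    (hδ : 0 < δ) :
    ∃ h, IsTestFunction h ∧ ∫ x, (f x - Lop φ h x) ^ 2 ∂gibbsMeasure φ ≤ δ ^ 2 := by
  have hmem : hf.toLp f ∈ (rangeLop φ).topologicalClosure := by
    rw [← Submodule.orthogonal_orthogonal_eq_closure, Submodule.mem_orthogonal]
    intro G hG
    obtain ⟨c, hc⟩ := (isWeaklyHarmonic_of_mem_orthogonal_rangeLop hφ hG).exists_ae_eq_const hφ
      (Lp.memLp G)
    have hGc : ∀ᵐ x ∂gibbsMeasure φ, G x = c := (withDensity_absolutelyContinuous _ _).ae_le hc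
    calc ⟪G, hf.toLp f⟫ = ∫ x, c * f x ∂gibbsMeasure φ := by
          rw [L2.inner_def]
          refine integral_congr_ae ?_
          filter_upwards [hGc, hf.coeFn_toLp] with x hx hfx
          simp [hx, hfx, mul_comm]
      _ = 0 := by rw [integral_const_mul, hf₀, mul_zero]
  obtain ⟨F, ⟨h, hh, hF⟩, hdist⟩ := Metric.mem_closure_iff.1 hmem δ hδ
  refine ⟨h, hh, ?_⟩
  calc ∫ x, (f x - Lop φ h x) ^ 2 ∂gibbsMeasure φ = ‖hf.toLp f - F‖ ^ 2 := by
        rw [← real_inner_self_eq_norm_sq, L2.inner_def]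
        refine integral_congr_ae ?_
        filter_upwards [hF, hf.coeFn_toLp, Lp.coeFn_sub (hf.toLp f) F] with x hx hfx hsub
        rw [hsub, Pi.sub_apply, hx, hfx, real_inner_self_eq_norm_sq, norm_eq_abs, sq_abs]
    _ ≤ δ ^ 2 := pow_le_pow_left₀ (norm_nonneg _) (dist_eq_norm (hf.toLp f) F ▸ hdist.le) 2

end Density

/-! ### Integrability under uniformly log-concave measures -/

noncomputable section Growth

variable {n : ℕ} {φ : Euc n → ℝ} {m : ℝ}

lemma StrongPotential.quadratic_growth (hφ : StrongPotential φ m) (x : Euc n) :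
    φ 0 + fderiv ℝ φ 0 x + m / 2 * ‖x‖ ^ 2 ≤ φ x := by
  set g : ℝ → ℝ := fun s => φ (s • x) - m / 2 * ‖x‖ ^ 2 * s ^ 2 with hg_def
  set g' : ℝ → ℝ := fun s => dirDeriv x φ (s • x) - m * ‖x‖ ^ 2 * s with hg'_def
  have hline {F : Euc n → ℝ} (hF : ContDiff ℝ ∞ F) (s : ℝ) :
      HasDerivAt (fun s : ℝ => F (s • x)) (dirDeriv x F (s • x)) s :=
    (differentiableAt_of_smooth hF).hasFDerivAt.comp_hasDerivAt s
      (by simpa using (hasDerivAt_id s).smul_const x)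
  have hg (s : ℝ) : HasDerivAt g (g' s) s := by
    refine ((hline hφ.smooth s).sub
      (((hasDerivAt_id s).pow 2).const_mul (m / 2 * ‖x‖ ^ 2))).congr_deriv ?_
    simp only [hg'_def, id]
    ring
  have hg' (s : ℝ) : HasDerivAt g' (dirDeriv x (dirDeriv x φ) (s • x) - m * ‖x‖ ^ 2) s :=
    ((hline (contDiff_dirDeriv hφ.smooth x) s).sub
      ((hasDerivAt_id s).const_mul (m * ‖x‖ ^ 2))).congr_deriv (by rw [mul_one])
  have hmono : Monotone g' := by
    refine monotone_of_deriv_nonneg (fun s => (hg' s).differentiableAt) fun s => ?_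
    rw [(hg' s).deriv, dirDeriv_dirDeriv hφ.smooth]
    exact sub_nonneg.2 (hφ.hessian_ge _ x)
  obtain ⟨c, hc, hslope⟩ := exists_hasDerivAt_eq_slope g g' zero_lt_one
    (fun s _ => (hg s).continuousAt.continuousWithinAt) fun s _ => hg s
  have hle := hmono hc.1.le
  rw [hslope] at hle
  simp only [hg_def, hg'_def, dirDeriv, zero_smul, one_smul] at hle
  linarith

lemma integrable_exp_neg_mul_norm_sq {b : ℝ} (hb : 0 < b) :
    Integrable fun x : Euc n => exp (-b * ‖x‖ ^ 2) := by
  refine (GaussianFourier.integrable_cexp_neg_mul_sq_norm_add (b := (b : ℂ)) (V := Euc n)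
    (by simpa using hb) 0 0).norm.congr (.of_forall fun x => ?_)
  norm_cast
  simp

lemma StrongPotential.integrable_exp_mul_norm (hφ : StrongPotential φ m) (a : ℝ) :
    Integrable (fun x => exp (a * ‖x‖)) (gibbsMeasure φ) := by
  rw [integrable_gibbsMeasure_iff hφ.continuous]
  have hm := hφ.pos
  set k := |a| + ‖fderiv ℝ φ 0‖ with hk
  refine ((integrable_exp_neg_mul_norm_sq (b := m / 4) (by positivity)).const_mul
    (exp (k ^ 2 / m - φ 0))).mono' ?_ (.of_forall fun x => ?_)
  · exact ((continuous_norm.const_mul a).rexp.mul hφ.continuous.neg.rexp).aestronglyMeasurable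
  rw [← exp_add, ← exp_add, norm_of_nonneg (exp_pos _).le, exp_le_exp]
  have hlinear : -(‖fderiv ℝ φ 0‖ * ‖x‖) ≤ fderiv ℝ φ 0 x :=
    (abs_le.1 ((fderiv ℝ φ 0).le_opNorm x)).1
  have hyoung : k * ‖x‖ ≤ k ^ 2 / m + m / 4 * ‖x‖ ^ 2 := by
    have hsq : (k - m / 2 * ‖x‖) ^ 2 / m = k ^ 2 / m - k * ‖x‖ + m / 4 * ‖x‖ ^ 2 := by
      field_simp
      ring
    have : 0 ≤ (k - m / 2 * ‖x‖) ^ 2 / m := by positivity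
    linarith
  rw [hk, add_mul] at hyoung
  linarith [hφ.quadratic_growth x, mul_le_mul_of_nonneg_right (le_abs_self a) (norm_nonneg x)]

lemma StrongPotential.memLp_id (hφ : StrongPotential φ m) : MemLp id 2 (gibbsMeasure φ) := by
  refine (memLp_two_iff_integrable_sq_norm aestronglyMeasurable_id).2 <|
    ((hφ.integrable_exp_mul_norm 1).const_mul 2).mono'
      (continuous_id.norm.pow 2).aestronglyMeasurable (.of_forall fun x => ?_)
  rw [norm_pow, norm_norm, one_mul, id]
  linarith [quadratic_le_exp_of_nonneg (norm_nonneg x), norm_nonneg x]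

end Growth

/-! ### Poincaré constants and duality -/

noncomputable section Duality

variable {n : ℕ} {ν : Measure (Euc n)} {φ f h : Euc n → ℝ} {C D m : ℝ}

lemma bddBelow_poincareSet (ν : Measure (Euc n)) : BddBelow (poincareSet ν) :=
  ⟨0, fun _ hC => hC.1⟩

lemma poincareConst_nonneg (ν : Measure (Euc n)) : 0 ≤ poincareConst ν :=
  Real.sInf_nonneg fun _ hC => hC.1

lemma poincareConst_le (hC : C ∈ poincareSet ν) : poincareConst ν ≤ C :=
  csInf_le (bddBelow_poincareSet ν) hC

lemma poincareConst_mem (hν : (poincareSet ν).Nonempty) : poincareConst ν ∈ poincareSet ν := by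
  refine ⟨poincareConst_nonneg ν, fun f hf hD => ?_⟩
  have hcont : Continuous fun C : ℝ => C * ∫ x, ‖gradient f x‖ ^ 2 ∂ν := by fun_prop
  exact closure_minimal (fun C hC => hC.2 f hf hD) (isClosed_le continuous_const hcont)
    (csInf_mem_closure hν (bddBelow_poincareSet ν))

lemma variance_le_of_mem_poincareSet [IsProbabilityMeasure ν] (hC : C ∈ poincareSet ν)
    (hf : LocallyLipschitz f) (hf₂ : MemLp f 2 ν)
    (hD : Integrable (fun x => ‖gradient f x‖ ^ 2) ν) :
    Var[f; ν] ≤ C * ∫ x, ‖gradient f x‖ ^ 2 ∂ν := by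
  rw [variance_eq_sub hf₂]
  exact hC.2 f hf hD

lemma mem_poincareSet_of_variance_le [IsProbabilityMeasure ν] (hC : 0 ≤ C)
    (h : ∀ f, LocallyLipschitz f → MemLp f 2 ν → Integrable (fun x => ‖gradient f x‖ ^ 2) ν →
      Var[f; ν] ≤ C * ∫ x, ‖gradient f x‖ ^ 2 ∂ν) : C ∈ poincareSet ν := by
  refine ⟨hC, fun f hf hD => ?_⟩
  by_cases hf₂ : MemLp f 2 ν
  · simpa only [variance_eq_sub hf₂, Pi.pow_apply] using h f hf hf₂ hD
  · rw [memLp_two_iff_integrable_sq hf.continuous.aestronglyMeasurable] at hf₂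
    rw [integral_undef hf₂, zero_sub]
    exact (neg_nonpos.2 (sq_nonneg _)).trans
      (mul_nonneg hC (integral_nonneg fun x => sq_nonneg _))

section Gibbs

lemma integral_sub_const_mul_Lop (hφ : ContDiff ℝ ∞ φ) (hf : LocallyLipschitz f)
    (hh : IsTestFunction h) (c : ℝ) :
    ∫ x, (f x - c) * Lop φ h x ∂gibbsMeasure φ
      = -∫ x, ⟪gradient f x, gradient h x⟫ ∂gibbsMeasure φ := by
  have hfc : LocallyLipschitz fun x => f x - c := hf.sub (LipschitzWith.const c).locallyLipschitz
  simp [integral_mul_Lop hφ hh hfc, gradient, fderiv_sub_const]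

lemma sq_integral_inner_gradient_le (hφ : Continuous φ)
    (hD : Integrable (fun x => ‖gradient f x‖ ^ 2) (gibbsMeasure φ)) (hh : IsTestFunction h) :
    (∫ x, ⟪gradient f x, gradient h x⟫ ∂gibbsMeasure φ) ^ 2
      ≤ (∫ x, ‖gradient f x‖ ^ 2 ∂gibbsMeasure φ) * ∫ x, ‖gradient h x‖ ^ 2 ∂gibbsMeasure φ := by
  refine sq_integral_le_of_sq_le_mul hD (hh.norm_gradient_sq.integrable_gibbs hφ)
    (.of_forall fun x => sq_nonneg _) (.of_forall fun x => sq_nonneg _) (.of_forall fun x => ?_)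
  rw [← mul_pow, ← sq_abs]
  gcongr
  exact abs_real_inner_le_norm _ _

variable [IsProbabilityMeasure (gibbsMeasure φ)]

lemma sq_integral_inner_gradient_le_variance_mul (hφ : ContDiff ℝ ∞ φ) (hf : LocallyLipschitz f)
    (hf₂ : MemLp f 2 (gibbsMeasure φ)) (hh : IsTestFunction h) :
    (∫ x, ⟪gradient f x, gradient h x⟫ ∂gibbsMeasure φ) ^ 2
      ≤ Var[f; gibbsMeasure φ] * ∫ x, Lop φ h x ^ 2 ∂gibbsMeasure φ := by
  rw [← neg_sq, ← integral_sub_const_mul_Lop hφ hf hh (∫ x, f x ∂gibbsMeasure φ),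
    variance_eq_integral hf₂.aemeasurable]
  exact sq_integral_mul_le (hf₂.sub (memLp_const _)) ((hh.Lop hφ).memLp_two _)

/-- Duality: write `f - ∫ f` as `L h` up to an error `δ`. Then
`Var f ≤ -2 ∫ ⟪∇f, ∇h⟫ - ∫ (L h) ^ 2 + δ ^ 2`, and the dual inequality closes the estimate. -/
theorem mem_poincareSet_of_integral_norm_gradient_sq_le (hφ : ContDiff ℝ ∞ φ) (hC : 0 ≤ C)
    (hdual : ∀ h, IsTestFunction h → ∫ x, ‖gradient h x‖ ^ 2 ∂gibbsMeasure φ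
      ≤ C * ∫ x, Lop φ h x ^ 2 ∂gibbsMeasure φ) : C ∈ poincareSet (gibbsMeasure φ) := by
  refine mem_poincareSet_of_variance_le hC fun f hf hf₂ hD => ?_
  set D := ∫ x, ‖gradient f x‖ ^ 2 ∂gibbsMeasure φ
  set c := ∫ x, f x ∂gibbsMeasure φ
  have hD₀ : 0 ≤ D := integral_nonneg fun x => sq_nonneg _
  have hf₀ : MemLp (fun x => f x - c) 2 (gibbsMeasure φ) := hf₂.sub (memLp_const c)
  have hmean : ∫ x, (f x - c) ∂gibbsMeasure φ = 0 := by
    rw [integral_sub (hf₂.integrable one_le_two) (integrable_const c), integral_const,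
      probReal_univ, one_smul, sub_self]
  refine le_of_forall_pos_le_add fun ε hε => ?_
  obtain ⟨h, hh, hfh⟩ := exists_integral_sq_sub_Lop_le hφ hf₀ hmean (sqrt_pos.2 hε)
  have hL := (hh.Lop hφ).memLp_two (gibbsMeasure φ)
  set s := ∫ x, (f x - c) * Lop φ h x ∂gibbsMeasure φ with hs_def
  set l := ∫ x, Lop φ h x ^ 2 ∂gibbsMeasure φ
  have hl : 0 ≤ l := integral_nonneg fun x => sq_nonneg _
  have hexpand : ∫ x, (f x - c - Lop φ h x) ^ 2 ∂gibbsMeasure φ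
      = Var[f; gibbsMeasure φ] - 2 * s + l := by
    have hcross : Integrable (fun x => 2 * ((f x - c) * Lop φ h x)) (gibbsMeasure φ) :=
      (hf₀.integrable_mul hL).const_mul 2
    rw [variance_eq_integral hf₂.aemeasurable, ← integral_const_mul,
      ← integral_sub hf₀.integrable_sq hcross,
      ← integral_add (by exact hf₀.integrable_sq.sub hcross) hL.integrable_sq]
    exact integral_congr_ae (.of_forall fun x => by ring)
  have hs : s ^ 2 ≤ C * D * l := by
    rw [hs_def, integral_sub_const_mul_Lop hφ hf hh c, neg_sq, mul_comm C, mul_assoc]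
    exact (sq_integral_inner_gradient_le hφ.continuous hD hh).trans
      (mul_le_mul_of_nonneg_left (hdual h hh) hD₀)
  have htwo_s : 2 * s ≤ C * D + l :=
    abs_le_of_sq_le_sq' (by nlinarith [sq_nonneg (C * D - l)]) (by positivity) |>.2
  rw [hexpand, sq_sqrt hε.le] at hfh
  linarith

lemma integral_norm_gradient_sq_le_of_variance_le (hφ : ContDiff ℝ ∞ φ) (hh : IsTestFunction h)
    (hC : 0 ≤ C) (hvar : Var[h; gibbsMeasure φ] ≤ C * ∫ x, ‖gradient h x‖ ^ 2 ∂gibbsMeasure φ) :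
    ∫ x, ‖gradient h x‖ ^ 2 ∂gibbsMeasure φ ≤ C * ∫ x, Lop φ h x ^ 2 ∂gibbsMeasure φ := by
  have hcs := sq_integral_inner_gradient_le_variance_mul hφ (locallyLipschitz_of_smooth hh.smooth)
    (hh.memLp_two _) hh
  simp only [real_inner_self_eq_norm_sq] at hcs
  have hl : 0 ≤ ∫ x, Lop φ h x ^ 2 ∂gibbsMeasure φ := integral_nonneg fun x => sq_nonneg _
  rcases (integral_nonneg fun x => sq_nonneg ‖gradient h x‖ :
    0 ≤ ∫ x, ‖gradient h x‖ ^ 2 ∂gibbsMeasure φ).eq_or_lt with hD | hD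
  · rw [← hD]
    positivity
  · refine le_of_mul_le_mul_left ?_ hD
    linarith [mul_le_mul_of_nonneg_right hvar hl]

/-- Both directions of the duality: it is enough to check test functions. -/
lemma mem_poincareSet_of_isTestFunction (hφ : ContDiff ℝ ∞ φ) (hC : 0 ≤ C)
    (h : ∀ f, IsTestFunction f →
      Var[f; gibbsMeasure φ] ≤ C * ∫ x, ‖gradient f x‖ ^ 2 ∂gibbsMeasure φ) :
    C ∈ poincareSet (gibbsMeasure φ) :=
  mem_poincareSet_of_integral_norm_gradient_sq_le hφ hC fun f hf =>
    integral_norm_gradient_sq_le_of_variance_le hφ hf hC (h f hf)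

/-- The Brascamp–Lieb (or Bakry–Émery) spectral gap. -/
theorem StrongPotential.inv_mem_poincareSet (hφ : StrongPotential φ m) :
    m⁻¹ ∈ poincareSet (gibbsMeasure φ) := by
  have hm := hφ.pos
  refine mem_poincareSet_of_integral_norm_gradient_sq_le hφ.smooth (by positivity) fun h hh => ?_
  have hsecond : 0 ≤ ∑ i, ∫ x, ‖gradient (dirDeriv (EuclideanSpace.single i 1) h) x‖ ^ 2
      ∂gibbsMeasure φ := Finset.sum_nonneg fun i _ => integral_nonneg fun x => sq_nonneg _
  rw [← div_eq_inv_mul, le_div_iff₀' hm]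
  linarith [hφ.bochner_le hh]

end Gibbs

end Duality

/-! ### The improved Lichnerowicz inequality -/

noncomputable section Lichnerowicz

variable {n : ℕ} {ν : Measure (Euc n)} {φ h : Euc n → ℝ} {C t : ℝ}

lemma memLp_two_apply (hν : MemLp id 2 ν) (i : Fin n) : MemLp (fun x : Euc n => x i) 2 ν :=
  (EuclideanSpace.proj (𝕜 := ℝ) i).comp_memLp' hν

lemma memLp_two_inner (hν : MemLp id 2 ν) (v : Euc n) : MemLp (fun x : Euc n => ⟪v, x⟫) 2 ν :=
  (innerSL ℝ v).comp_memLp' hν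

lemma covMatrix_apply [IsProbabilityMeasure ν] (hν : MemLp id 2 ν) (i j : Fin n) :
    covMatrix ν i j = cov[fun x : Euc n => x i, fun x => x j; ν] := by
  rw [covariance_eq_sub (memLp_two_apply hν i) (memLp_two_apply hν j)]
  rfl

lemma variance_inner_eq [IsProbabilityMeasure ν] (hν : MemLp id 2 ν) (v : Euc n) :
    Var[fun x => ⟪v, x⟫; ν] = ⟪v, Matrix.toEuclideanCLM (𝕜 := ℝ) (covMatrix ν) v⟫ := by
  have hinner (x y : Euc n) : ⟪x, y⟫ = ∑ i, x i * y i := by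
    simp [PiLp.inner_apply, mul_comm]
  simp only [hinner]
  rw [variance_fun_sum' fun i _ => (memLp_two_apply hν i).const_mul (v i)]
  refine Finset.sum_congr rfl fun i _ => ?_
  rw [Matrix.ofLp_toEuclideanCLM, Matrix.mulVec, dotProduct, Finset.mul_sum]
  refine Finset.sum_congr rfl fun j _ => ?_
  rw [covariance_const_mul_left, covariance_const_mul_right, covMatrix_apply hν]
  ring

lemma variance_inner_le [IsProbabilityMeasure ν] (hν : MemLp id 2 ν) (v : Euc n) :
    Var[fun x => ⟪v, x⟫; ν] ≤ opNorm (covMatrix ν) * ‖v‖ ^ 2 :=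
  calc Var[fun x => ⟪v, x⟫; ν]
      ≤ ‖v‖ * ‖Matrix.toEuclideanCLM (𝕜 := ℝ) (covMatrix ν) v‖ :=
        (variance_inner_eq hν v).trans_le (real_inner_le_norm _ _)
    _ ≤ ‖v‖ * (opNorm (covMatrix ν) * ‖v‖) := by gcongr; exact ContinuousLinearMap.le_opNorm _ v
    _ = opNorm (covMatrix ν) * ‖v‖ ^ 2 := by ring

lemma IsTestFunction.integrable_gradient (hφ : Continuous φ) (hh : IsTestFunction h) :
    Integrable (gradient h) (gibbsMeasure φ) :=
  integrable_piLp_iff.2 fun i => by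
    simpa only [gradient_apply] using (hh.dirDeriv _).integrable_gibbs hφ

lemma sq_norm_integral_gradient_le [IsProbabilityMeasure (gibbsMeasure φ)]
    (hφ : ContDiff ℝ ∞ φ) (hν : MemLp id 2 (gibbsMeasure φ)) (hh : IsTestFunction h) :
    ‖∫ x, gradient h x ∂gibbsMeasure φ‖ ^ 2
      ≤ opNorm (covMatrix (gibbsMeasure φ)) * ∫ x, Lop φ h x ^ 2 ∂gibbsMeasure φ := by
  set v := ∫ x, gradient h x ∂gibbsMeasure φ
  have hgrad (x : Euc n) : gradient (fun y => ⟪v, y⟫) x = v := by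
    rw [gradient, show (fun y => ⟪v, y⟫) = InnerProductSpace.toDual ℝ _ v from rfl,
      ContinuousLinearMap.fderiv, LinearIsometryEquiv.symm_apply_apply]
  have hinner : ∫ x, ⟪v, gradient h x⟫ ∂gibbsMeasure φ = ‖v‖ ^ 2 := by
    rw [integral_inner (hh.integrable_gradient hφ.continuous), real_inner_self_eq_norm_sq]
  have hlip : LocallyLipschitz fun x => ⟪v, x⟫ := (innerSL ℝ v).lipschitz.locallyLipschitz
  have hcs := sq_integral_inner_gradient_le_variance_mul hφ hlip (memLp_two_inner hν v) hh
  simp only [hgrad, hinner] at hcs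
  have hl : 0 ≤ ∫ x, Lop φ h x ^ 2 ∂gibbsMeasure φ := integral_nonneg fun x => sq_nonneg _
  rcases (sq_nonneg ‖v‖).eq_or_lt with hv₀ | hv₀
  · rw [← hv₀]
    exact mul_nonneg (norm_nonneg _) hl
  · refine le_of_mul_le_mul_left ?_ hv₀
    linarith [mul_le_mul_of_nonneg_right (variance_inner_le hν v) hl]

lemma integral_norm_gradient_sq_sub_le [IsProbabilityMeasure (gibbsMeasure φ)]
    (hφ : Continuous φ) (hC : C ∈ poincareSet (gibbsMeasure φ)) (hh : IsTestFunction h) :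
    (∫ x, ‖gradient h x‖ ^ 2 ∂gibbsMeasure φ) - ‖∫ x, gradient h x ∂gibbsMeasure φ‖ ^ 2
      ≤ C * ∑ i, ∫ x, ‖gradient (∂[i] h) x‖ ^ 2 ∂gibbsMeasure φ := by
  have hmean (i : Fin n) : (∫ x, gradient h x ∂gibbsMeasure φ) i
      = ∫ x, ∂[i] h x ∂gibbsMeasure φ := by
    rw [eval_integral_piLp fun i => by
      simpa only [gradient_apply] using (hh.dirDeriv _).integrable_gibbs hφ]
    simp only [gradient_apply]
  simp only [norm_gradient_sq h]
  rw [EuclideanSpace.real_norm_sq_eq,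
    integral_finsetSum _ fun i _ => ((hh.dirDeriv _).memLp_two _).integrable_sq,
    ← Finset.sum_sub_distrib, Finset.mul_sum]
  simp only [hmean]
  exact Finset.sum_le_sum fun i _ => hC.2 _ (locallyLipschitz_of_smooth (hh.dirDeriv _).smooth)
    ((hh.dirDeriv _).norm_gradient_sq.integrable_gibbs hφ)

/-- Applying the Poincaré inequality to the derivatives of `h` improves the constant `C` to
`(C + κ) / (1 + t * C)`, where `κ` is the operator norm of the covariance. -/
lemma StrongPotential.div_mem_poincareSet (hφ : StrongPotential φ t)
    [IsProbabilityMeasure (gibbsMeasure φ)] (hC : C ∈ poincareSet (gibbsMeasure φ)) :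
    (C + opNorm (covMatrix (gibbsMeasure φ))) / (1 + t * C) ∈ poincareSet (gibbsMeasure φ) := by
  have ht := hφ.pos
  have hC₀ := hC.1
  have hκ : 0 ≤ opNorm (covMatrix (gibbsMeasure φ)) := norm_nonneg _
  refine mem_poincareSet_of_integral_norm_gradient_sq_le hφ.smooth (by positivity) fun h hh => ?_
  rw [div_mul_eq_mul_div, le_div_iff₀ (by positivity)]
  linarith [integral_norm_gradient_sq_sub_le hφ.continuous hC hh,
    sq_norm_integral_gradient_le hφ.smooth hφ.memLp_id hh,
    mul_le_mul_of_nonneg_left (hφ.bochner_le hh) hC₀]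

/-- Klartag's improved Lichnerowicz inequality. -/
theorem StrongPotential.poincareConst_le (hφ : StrongPotential φ t)
    [IsProbabilityMeasure (gibbsMeasure φ)] :
    poincareConst (gibbsMeasure φ) ≤ √(opNorm (covMatrix (gibbsMeasure φ))) / √t := by
  have ht := hφ.pos
  have hC := poincareConst_mem ⟨_, hφ.inv_mem_poincareSet⟩
  have hC₀ := hC.1
  have himproved := _root_.poincareConst_le (hφ.div_mem_poincareSet hC)
  rw [le_div_iff₀ (by positivity)] at himproved
  rw [← sqrt_div' _ ht.le]
  refine le_sqrt_of_sq_le ?_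
  rw [le_div_iff₀ ht]
  linarith

end Lichnerowicz

/-! ### Variance and reversed kernels -/

noncomputable section Variance

variable {α : Type*} [MeasurableSpace α] {ν : Measure α} [IsProbabilityMeasure ν] {f g : α → ℝ}

lemma integral_sub_const_sq (hf : MemLp f 2 ν) (c : ℝ) :
    ∫ x, (f x - c) ^ 2 ∂ν = Var[f; ν] + (∫ x, f x ∂ν - c) ^ 2 := by
  have hvar := variance_eq_sub (hf.sub (memLp_const c))
  rw [show f - (fun _ => c) = fun x => f x - c from rfl,
    variance_sub_const hf.aestronglyMeasurable,
    integral_sub (hf.integrable one_le_two) (integrable_const _)] at hvar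
  simp only [Pi.pow_apply, integral_const, probReal_univ, smul_eq_mul, one_mul] at hvar
  linarith

lemma variance_le_integral_sub_const_sq (hf : MemLp f 2 ν) (c : ℝ) :
    Var[f; ν] ≤ ∫ x, (f x - c) ^ 2 ∂ν :=
  (le_add_of_nonneg_right (sq_nonneg _)).trans_eq (integral_sub_const_sq hf c).symm

lemma sq_covariance_le (hf : MemLp f 2 ν) (hg : MemLp g 2 ν) :
    cov[f, g; ν] ^ 2 ≤ Var[f; ν] * Var[g; ν] := by
  rw [variance_eq_integral hf.aemeasurable, variance_eq_integral hg.aemeasurable]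
  exact sq_integral_mul_le (hf.sub (memLp_const _)) (hg.sub (memLp_const _))

lemma variance_comp_le {k : ℝ → ℝ} (hk : LipschitzWith 1 k) (hf : MemLp f 2 ν) :
    Var[fun x => k (f x); ν] ≤ Var[f; ν] := by
  have hkf : MemLp (fun x => k (f x)) 2 ν := by
    have hdiff : MemLp (fun x => k (f x) - k 0) 2 ν :=
      hf.mono ((hk.continuous.comp_aestronglyMeasurable hf.1).sub aestronglyMeasurable_const)
        (.of_forall fun x => by simpa using hk.norm_sub_le (f x) 0)
    simpa only [Pi.add_def, sub_add_cancel] using hdiff.add (memLp_const (k 0))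
  refine (variance_le_integral_sub_const_sq hkf (k (∫ y, f y ∂ν))).trans ?_
  rw [variance_eq_integral hf.aemeasurable]
  refine integral_mono (hkf.sub (memLp_const _)).integrable_sq
    (hf.sub (memLp_const _)).integrable_sq fun x => sq_le_sq.2 ?_
  simpa using hk.norm_sub_le (f x) (∫ y, f y ∂ν)

end Variance

noncomputable section BayesPair

variable {α β : Type*} [MeasurableSpace α] [MeasurableSpace β]

/-- The Markov operator of the kernel `P`. -/
def kernelMean (P : Kernel α β) (f : β → ℝ) (x : α) : ℝ := ∫ y, f y ∂P x

/-- The kernels `P` and `Q` are the two families of conditional laws of one joint law with marginals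
`μ` and `m`; then their Markov operators `L²(m) → L²(μ)` and `L²(μ) → L²(m)` are adjoint. -/
structure IsBayesPair (μ : Measure α) (m : Measure β) (P : Kernel α β) (Q : Kernel β α) :
    Prop where
  compProd_eq : μ ⊗ₘ P = (m ⊗ₘ Q).map Prod.swap

variable {P : Kernel α β}

lemma measurable_kernelMean [IsSFiniteKernel P] {f : β → ℝ} (hf : Measurable f) :
    Measurable (kernelMean P f) :=
  (hf.stronglyMeasurable.integral_kernel (κ := P)).measurable

namespace IsBayesPair

variable {μ : Measure α} {m : Measure β} {Q : Kernel β α}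

lemma symm (B : IsBayesPair μ m P Q) : IsBayesPair m μ Q P where
  compProd_eq := by
    rw [B.compProd_eq, Measure.map_map measurable_swap measurable_swap, Prod.swap_swap_eq,
      Measure.map_id]

section Marginals

variable [SFinite m] [IsMarkovKernel Q]

lemma measurePreserving_snd (B : IsBayesPair μ m P Q) :
    MeasurePreserving Prod.snd (μ ⊗ₘ P) m := by
  refine ⟨measurable_snd, ?_⟩
  rw [B.compProd_eq, Measure.map_map measurable_snd measurable_swap]
  exact Measure.fst_compProd m Q

lemma comp_eq [SFinite μ] [IsSFiniteKernel P] (B : IsBayesPair μ m P Q) : P ∘ₘ μ = m := by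
  rw [← Measure.snd_compProd]
  exact B.measurePreserving_snd.map_eq

end Marginals

variable [SFinite μ] [SFinite m] [IsMarkovKernel P] [IsMarkovKernel Q] {f : α → ℝ} {h : β → ℝ}

lemma integrable_kernelMean (B : IsBayesPair μ m P Q) (hh : Integrable h m) :
    Integrable (kernelMean P h) μ := by
  rw [← B.comp_eq, Measure.comp_eq_comp_const_apply] at hh
  exact hh.integral_comp

lemma integral_kernelMean (B : IsBayesPair μ m P Q) (hh : Integrable h m) :
    ∫ x, kernelMean P h x ∂μ = ∫ y, h y ∂m := by
  rw [← B.comp_eq, Measure.comp_eq_comp_const_apply] at hh ⊢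
  exact (Kernel.integral_comp hh).symm

lemma ae_memLp_two (B : IsBayesPair μ m P Q) (hh : MemLp h 2 m) : ∀ᵐ x ∂μ, MemLp h 2 (P x) := by
  rw [← B.comp_eq] at hh
  have hmeas := hh.1
  rw [Measure.comp_eq_comp_const_apply] at hmeas
  filter_upwards [Measure.ae_integrable_of_integrable_comp hh.integrable_sq, hmeas.comp]
    with x hx hxmeas
  exact (memLp_two_iff_integrable_sq hxmeas).2 hx

lemma variance_ae_eq (B : IsBayesPair μ m P Q) (hh : MemLp h 2 m) :
    (fun x => Var[h; P x]) =ᵐ[μ]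
      fun x => kernelMean P (fun y => h y ^ 2) x - kernelMean P h x ^ 2 := by
  filter_upwards [B.ae_memLp_two hh] with x hx
  exact variance_eq_sub hx

lemma sq_kernelMean_ae_le (B : IsBayesPair μ m P Q) (hh : MemLp h 2 m) :
    ∀ᵐ x ∂μ, kernelMean P h x ^ 2 ≤ kernelMean P (fun y => h y ^ 2) x := by
  filter_upwards [B.variance_ae_eq hh] with x hx
  linarith [variance_nonneg h (P x)]

lemma memLp_two_kernelMean (B : IsBayesPair μ m P Q) (hh : MemLp h 2 m) :
    MemLp (kernelMean P h) 2 μ := by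
  have hmeas : AEStronglyMeasurable (kernelMean P h) μ := by
    have hh' := hh.1
    rw [← B.comp_eq, Measure.comp_eq_comp_const_apply] at hh'
    exact hh'.integral_kernel_comp
  refine (memLp_two_iff_integrable_sq hmeas).2 <|
    (B.integrable_kernelMean hh.integrable_sq).mono' (hmeas.pow 2) ?_
  filter_upwards [B.sq_kernelMean_ae_le hh] with x hx
  rwa [norm_of_nonneg (sq_nonneg _)]

lemma integral_variance (B : IsBayesPair μ m P Q) (hh : MemLp h 2 m) :
    ∫ x, Var[h; P x] ∂μ = (∫ y, h y ^ 2 ∂m) - ∫ x, kernelMean P h x ^ 2 ∂μ := by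
  rw [integral_congr_ae (B.variance_ae_eq hh),
    integral_sub (B.integrable_kernelMean hh.integrable_sq)
      (B.memLp_two_kernelMean hh).integrable_sq,
    B.integral_kernelMean hh.integrable_sq]

lemma integrable_variance (B : IsBayesPair μ m P Q) (hh : MemLp h 2 m) :
    Integrable (fun x => Var[h; P x]) μ :=
  ((B.integrable_kernelMean hh.integrable_sq).sub
    (B.memLp_two_kernelMean hh).integrable_sq).congr (B.variance_ae_eq hh).symm

lemma integral_sq_kernelMean_le (B : IsBayesPair μ m P Q) (hh : MemLp h 2 m) :
    ∫ x, kernelMean P h x ^ 2 ∂μ ≤ ∫ y, h y ^ 2 ∂m := by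
  rw [← sub_nonneg, ← B.integral_variance hh]
  exact integral_nonneg fun x => variance_nonneg h (P x)

lemma integral_mul_kernelMean (B : IsBayesPair μ m P Q) (hf : MemLp f 2 μ) (hh : MemLp h 2 m) :
    ∫ x, f x * kernelMean P h x ∂μ = ∫ y, kernelMean Q f y * h y ∂m := by
  have hF : Integrable (fun z : α × β => f z.1 * h z.2) (μ ⊗ₘ P) := by
    refine (hf.comp_measurePreserving (f := Prod.fst) ?_).integrable_mul
      (hh.comp_measurePreserving B.measurePreserving_snd)
    exact ⟨measurable_fst, Measure.fst_compProd μ P⟩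
  have hswap : Integrable (fun z : β × α => f z.2 * h z.1) (m ⊗ₘ Q) := by
    rw [B.compProd_eq] at hF
    exact hF.comp_measurable measurable_swap
  simp only [kernelMean, ← integral_const_mul, ← integral_mul_const]
  rw [← Measure.integral_compProd hF, ← Measure.integral_compProd hswap, B.compProd_eq]
  exact integral_map_equiv MeasurableEquiv.prodComm _

lemma two_mul_integral_sq_kernelMean_le (B : IsBayesPair μ m P Q) (hh : MemLp h 2 m) :
    2 * ∫ x, kernelMean P h x ^ 2 ∂μ
      ≤ (∫ y, h y ^ 2 ∂m) + ∫ y, kernelMean Q (kernelMean P h) y ^ 2 ∂m := by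
  have hPh := B.memLp_two_kernelMean hh
  have hQPh := B.symm.memLp_two_kernelMean hPh
  have hadj := B.integral_mul_kernelMean hPh hh
  simp only [← sq] at hadj
  rw [hadj, ← integral_const_mul, ← integral_add hh.integrable_sq hQPh.integrable_sq]
  refine integral_mono ((hQPh.integrable_mul hh).const_mul 2)
    (hh.integrable_sq.add hQPh.integrable_sq) fun y => ?_
  dsimp only [Pi.add_apply, Pi.mul_apply]
  linarith [two_mul_le_add_sq (kernelMean Q (kernelMean P h) y) (h y)]

end IsBayesPair

end BayesPair

/-! ### Exponential moments and Laplace transforms of Lipschitz functions -/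

noncomputable section ExpMoments

variable {n : ℕ} {ν : Measure (Euc n)} {φ f g w : Euc n → ℝ} {c m M : ℝ} {K L : ℝ≥0}

/-- All exponential moments of the norm are finite. -/
def HasExpMoments (ν : Measure (Euc n)) : Prop := ∀ a : ℝ, Integrable (fun x => exp (a * ‖x‖)) ν

/-- Measurable functions of at most exponential growth, an algebra of functions integrable against
every measure with exponential moments. -/
structure ExpGrowth (f : Euc n → ℝ) : Prop where
  measurable : Measurable f
  bound : ∃ a : ℝ, 0 ≤ a ∧ ∀ x, |f x| ≤ exp (a * (1 + ‖x‖))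

namespace ExpGrowth

lemma integrable (hf : ExpGrowth f) (hν : HasExpMoments ν) : Integrable f ν := by
  obtain ⟨a, -, hfa⟩ := hf.bound
  refine ((hν a).const_mul (exp a)).mono' hf.measurable.aestronglyMeasurable
    (.of_forall fun x => (hfa x).trans_eq ?_)
  rw [← exp_add]
  ring_nf

lemma mul (hf : ExpGrowth f) (hg : ExpGrowth g) : ExpGrowth fun x => f x * g x := by
  obtain ⟨a, ha, hfa⟩ := hf.bound
  obtain ⟨b, hb, hgb⟩ := hg.bound
  refine ⟨hf.measurable.mul hg.measurable, a + b, by positivity, fun x => ?_⟩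
  rw [abs_mul, add_mul, exp_add]
  exact mul_le_mul (hfa x) (hgb x) (abs_nonneg _) (exp_pos _).le

lemma sq (hf : ExpGrowth f) : ExpGrowth fun x => f x ^ 2 := by
  simpa only [_root_.sq] using hf.mul hf

lemma memLp_two (hf : ExpGrowth f) (hν : HasExpMoments ν) : MemLp f 2 ν :=
  (memLp_two_iff_integrable_sq hf.measurable.aestronglyMeasurable).2 (hf.sq.integrable hν)

lemma of_abs_le_mul_one_add_norm {a : ℝ} (hf : Measurable f) (ha : 0 ≤ a)
    (hfa : ∀ x, |f x| ≤ a * (1 + ‖x‖)) : ExpGrowth f :=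
  ⟨hf, a, ha, fun x => (hfa x).trans (by linarith [add_one_le_exp (a * (1 + ‖x‖))])⟩

lemma of_abs_le (hf : Measurable f) (hM : ∀ x, |f x| ≤ M) : ExpGrowth f := by
  have hM₀ := (abs_nonneg _).trans (hM 0)
  exact of_abs_le_mul_one_add_norm hf hM₀ fun x =>
    (hM x).trans (le_mul_of_one_le_right hM₀ (le_add_of_nonneg_right (norm_nonneg x)))

lemma const (c : ℝ) : ExpGrowth fun _ : Euc n => c :=
  of_abs_le measurable_const fun _ => le_rfl

lemma add (hf : ExpGrowth f) (hg : ExpGrowth g) : ExpGrowth fun x => f x + g x := by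
  obtain ⟨a, ha, hfa⟩ := hf.bound
  obtain ⟨b, hb, hgb⟩ := hg.bound
  refine ⟨hf.measurable.add hg.measurable, a + b + 1, by positivity, fun x => ?_⟩
  have hx : 1 ≤ 1 + ‖x‖ := le_add_of_nonneg_right (norm_nonneg x)
  calc |f x + g x| ≤ exp (a * (1 + ‖x‖)) + exp (b * (1 + ‖x‖)) :=
        (abs_add_le _ _).trans (add_le_add (hfa x) (hgb x))
    _ ≤ exp ((a + b) * (1 + ‖x‖)) + exp ((a + b) * (1 + ‖x‖)) := by
        gcongr <;> linarith
    _ = 2 * exp ((a + b) * (1 + ‖x‖)) := (two_mul _).symm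
    _ ≤ exp (1 + ‖x‖) * exp ((a + b) * (1 + ‖x‖)) := by
        gcongr
        linarith [add_one_le_exp (1 + ‖x‖)]
    _ = exp ((a + b + 1) * (1 + ‖x‖)) := by
        rw [← exp_add]
        ring_nf

lemma const_mul (hf : ExpGrowth f) (c : ℝ) : ExpGrowth fun x => c * f x :=
  (const c).mul hf

lemma sub (hf : ExpGrowth f) (hg : ExpGrowth g) : ExpGrowth fun x => f x - g x := by
  simpa only [sub_eq_add_neg, neg_one_mul] using hf.add (hg.const_mul (-1))

lemma abs_le_of_lipschitz (hg : LipschitzWith K g) (x : Euc n) :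
    |g x| ≤ (|g 0| + K) * (1 + ‖x‖) := by
  have hx := hg.norm_sub_le x 0
  rw [sub_zero, norm_eq_abs] at hx
  nlinarith [abs_sub_abs_le_abs_sub (g x) (g 0), norm_nonneg x, abs_nonneg (g 0), K.coe_nonneg]

lemma of_lipschitz (hg : LipschitzWith K g) : ExpGrowth g :=
  of_abs_le_mul_one_add_norm hg.continuous.measurable (by positivity) (abs_le_of_lipschitz hg)

lemma exp_of_lipschitz (hg : LipschitzWith K g) : ExpGrowth fun x => exp (g x) := by
  refine ⟨hg.continuous.measurable.exp, |g 0| + K, by positivity, fun x => ?_⟩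
  rw [abs_exp, exp_le_exp]
  exact (le_abs_self _).trans (abs_le_of_lipschitz hg x)

end ExpGrowth

lemma norm_gradient_le_of_lipschitz (hg : LipschitzWith K g) (x : Euc n) : ‖gradient g x‖ ≤ K := by
  rw [norm_gradient]
  exact norm_fderiv_le_of_lipschitz ℝ hg

lemma norm_gradient_exp_le_of_lipschitz (hg : LipschitzWith K g) (x : Euc n) :
    ‖gradient (fun x => exp (g x)) x‖ ≤ K * exp (g x) := by
  rw [norm_gradient]
  by_cases hd : DifferentiableAt ℝ g x
  · rw [fderiv_exp hd, norm_smul, mul_comm, norm_of_nonneg (exp_pos _).le]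
    gcongr
    exact norm_fderiv_le_of_lipschitz ℝ hg
  · rw [fderiv_zero_of_not_differentiableAt fun h => hd <| by simpa using h.log (exp_pos _).ne',
      norm_zero]
    positivity

lemma variance_le_of_lipschitz [IsProbabilityMeasure ν] (hν : HasExpMoments ν)
    (hc : c ∈ poincareSet ν) (hg : LipschitzWith K g) : Var[g; ν] ≤ c * K ^ 2 := by
  have hb (x : Euc n) : ‖gradient g x‖ ^ 2 ≤ (K : ℝ) ^ 2 := by
    gcongr
    exact norm_gradient_le_of_lipschitz hg x
  have hD : Integrable (fun x => ‖gradient g x‖ ^ 2) ν :=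
    (integrable_const ((K : ℝ) ^ 2)).mono'
      ((measurable_gradient g).norm.pow_const 2).aestronglyMeasurable
      (.of_forall fun x => by simpa using hb x)
  refine (variance_le_of_mem_poincareSet hc hg.locallyLipschitz
    ((ExpGrowth.of_lipschitz hg).memLp_two hν) hD).trans ?_
  gcongr
  · exact hc.1
  · simpa using integral_mono hD (integrable_const _) hb

lemma variance_exp_le_of_lipschitz [IsProbabilityMeasure ν] (hν : HasExpMoments ν)
    (hc : c ∈ poincareSet ν) (hg : LipschitzWith K g) :
    Var[fun x => exp (g x); ν] ≤ c * K ^ 2 * ∫ x, exp (2 * g x) ∂ν := by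
  have hgrowth := ExpGrowth.exp_of_lipschitz hg
  have hexp (x : Euc n) : exp (2 * g x) = exp (g x) ^ 2 := by
    rw [← exp_nat_mul, Nat.cast_ofNat]
  have hb (x : Euc n) : ‖gradient (fun x => exp (g x)) x‖ ^ 2 ≤ (K : ℝ) ^ 2 * exp (g x) ^ 2 := by
    rw [← mul_pow]
    gcongr
    exact norm_gradient_exp_le_of_lipschitz hg x
  have hi : Integrable (fun x => (K : ℝ) ^ 2 * exp (g x) ^ 2) ν :=
    (hgrowth.sq.integrable hν).const_mul _
  have hD : Integrable (fun x => ‖gradient (fun x => exp (g x)) x‖ ^ 2) ν :=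
    hi.mono' ((measurable_gradient _).norm.pow_const 2).aestronglyMeasurable
      (.of_forall fun x => by simpa using hb x)
  refine (variance_le_of_mem_poincareSet hc
    ((contDiff_exp (n := 1)).locallyLipschitz.comp hg.locallyLipschitz)
    (hgrowth.memLp_two hν) hD).trans ?_
  simp only [hexp]
  have hmono := integral_mono hD hi hb
  rw [integral_const_mul] at hmono
  rw [mul_assoc]
  exact mul_le_mul_of_nonneg_left hmono hc.1

lemma le_exp_of_sub_sq_le {a I : ℝ} (ha₀ : 0 ≤ a) (ha : a ≤ 1 / 4) (hM : 0 ≤ M) (hI₀ : 0 ≤ I)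
    (hI : I ≤ 1 + a * √M) (hMI : M - I ^ 2 ≤ a * M) : M ≤ exp (8 * a) := by
  have hI_sq : I ^ 2 ≤ (1 + a * √M) ^ 2 := by gcongr
  have hsq : ((1 - a) * √M) ^ 2 ≤ (1 + a * √M) ^ 2 := by
    have hprod : 0 ≤ a * (1 - a) * M := by
      have h1a : 0 ≤ 1 - a := by linarith
      positivity
    rw [mul_pow, sq_sqrt hM]
    linarith
  have hle : (1 - a) * √M ≤ 1 + a * √M := (abs_le_of_sq_le_sq' hsq (by positivity)).2
  have hsqrt : √M ≤ 1 + 4 * a := by nlinarith [sqrt_nonneg M]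
  calc M = √M ^ 2 := (sq_sqrt hM).symm
    _ ≤ exp (4 * a) ^ 2 := by
        gcongr
        linarith [add_one_le_exp (4 * a)]
    _ = exp (8 * a) := by
        rw [← exp_nat_mul]
        ring_nf

variable [IsProbabilityMeasure ν]

lemma integral_exp_le_one_add (hν : HasExpMoments ν) (hc : c ∈ poincareSet ν)
    (hg : LipschitzWith K g) (hg₀ : ∫ x, g x ∂ν = 0) :
    ∫ x, exp (g x) ∂ν ≤ 1 + c * K ^ 2 * √(∫ x, exp (2 * g x) ∂ν) := by
  have hgL := ExpGrowth.of_lipschitz hg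
  have hgX := ExpGrowth.exp_of_lipschitz hg
  have hc₀ := hc.1
  have hM : 0 ≤ ∫ x, exp (2 * g x) ∂ν := integral_nonneg fun x => (exp_pos _).le
  have hcov : (∫ x, g x * exp (g x) ∂ν) ^ 2
      ≤ (c * K ^ 2 * √(∫ x, exp (2 * g x) ∂ν)) ^ 2 := by
    have h := sq_covariance_le (hgL.memLp_two hν) (hgX.memLp_two hν)
    rw [covariance_eq_sub (hgL.memLp_two hν) (hgX.memLp_two hν), hg₀, zero_mul, sub_zero] at h
    refine h.trans ?_
    rw [mul_pow, sq_sqrt hM, sq, mul_assoc]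
    exact mul_le_mul (variance_le_of_lipschitz hν hc hg) (variance_exp_le_of_lipschitz hν hc hg)
      (variance_nonneg _ _) (by positivity)
  have hmono : ∫ x, (exp (g x) - 1) ∂ν ≤ ∫ x, g x * exp (g x) ∂ν :=
    integral_mono ((hgX.sub (.const 1)).integrable hν) ((hgL.mul hgX).integrable hν) fun x => by
      have hx := mul_le_mul_of_nonneg_right (add_one_le_exp (-g x)) (exp_pos (g x)).le
      rw [← exp_add, neg_add_cancel, exp_zero] at hx
      linarith
  rw [integral_sub (hgX.integrable hν) (integrable_const _)] at hmono
  simp only [integral_const, probReal_univ, smul_eq_mul, one_mul] at hmono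
  linarith [(abs_le_of_sq_le_sq' hcov (by positivity)).2]

lemma integral_exp_two_mul_le (hν : HasExpMoments ν) (hc : c ∈ poincareSet ν)
    (hg : LipschitzWith K g) (hg₀ : ∫ x, g x ∂ν = 0) (hcK : c * K ^ 2 ≤ 1 / 4) :
    ∫ x, exp (2 * g x) ∂ν ≤ exp (8 * (c * K ^ 2)) := by
  have hc₀ := hc.1
  have hvar := variance_exp_le_of_lipschitz hν hc hg
  rw [variance_eq_sub ((ExpGrowth.exp_of_lipschitz hg).memLp_two hν)] at hvar
  simp only [Pi.pow_apply, ← exp_nat_mul, Nat.cast_ofNat] at hvar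
  exact le_exp_of_sub_sq_le (by positivity) hcK (integral_nonneg fun x => (exp_pos _).le)
    (integral_nonneg fun x => (exp_pos _).le) (integral_exp_le_one_add hν hc hg hg₀) hvar

lemma integral_exp_le_of_lipschitz (hν : HasExpMoments ν) (hc : c ∈ poincareSet ν)
    (hg : LipschitzWith K g) (hcK : c * K ^ 2 ≤ 1) :
    ∫ x, exp (g x) ∂ν ≤ exp (∫ y, g y ∂ν + 2 * (c * K ^ 2)) := by
  set E := ∫ y, g y ∂ν
  have hz : LipschitzWith (K / 2) fun x => (g x - E) / 2 := by
    refine LipschitzWith.of_dist_le_mul fun x y => ?_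
    have hxy := hg.dist_le_mul x y
    rw [dist_eq] at hxy ⊢
    rw [← sub_div, sub_sub_sub_cancel_right, abs_div, abs_two, NNReal.coe_div, NNReal.coe_two]
    linarith
  have hz₀ : ∫ x, (g x - E) / 2 ∂ν = 0 := by
    rw [integral_div, integral_sub ((ExpGrowth.of_lipschitz hg).integrable hν) (integrable_const _)]
    simp [E]
  have hK : ((K / 2 : ℝ≥0) : ℝ) ^ 2 = K ^ 2 / 4 := by
    push_cast
    ring
  have hexp := integral_exp_two_mul_le hν hc hz hz₀ (by rw [hK]; linarith)
  rw [hK] at hexp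
  calc ∫ x, exp (g x) ∂ν = exp E * ∫ x, exp (2 * ((g x - E) / 2)) ∂ν := by
        rw [← integral_const_mul]
        refine integral_congr_ae (.of_forall fun x => ?_)
        simp only [← exp_add]
        ring_nf
    _ ≤ exp E * exp (8 * (c * (K ^ 2 / 4))) := by gcongr
    _ = exp (E + 2 * (c * K ^ 2)) := by
        rw [← exp_add]
        ring_nf

lemma integral_tilted_eq_covariance (hν : HasExpMoments ν) (hg : MemLp g 2 ν)
    (hw : LipschitzWith L w) (a : ℝ) :
    ∫ x, g x ∂ν.tilted w - ∫ x, g x ∂ν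
      = cov[g, fun x => exp (w x - a); ν] / ∫ x, exp (w x - a) ∂ν := by
  have hz : LipschitzWith L fun x => w x - a := by simpa using hw.sub (LipschitzWith.const a)
  have hzX := (ExpGrowth.exp_of_lipschitz hz).memLp_two hν
  have hpos : 0 < ∫ x, exp (w x - a) ∂ν := integral_exp_pos (hzX.integrable one_le_two)
  have hexp (x : Euc n) : exp (w x) = exp (w x - a) * exp a := by rw [← exp_add, sub_add_cancel]
  rw [integral_tilted, covariance_eq_sub hg hzX, sub_div, mul_div_cancel_right₀ _ hpos.ne']
  congr 1
  simp only [hexp, integral_mul_const, mul_div_mul_right _ _ (exp_pos a).ne', smul_eq_mul,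
    ← integral_div, Pi.mul_apply]
  exact integral_congr_ae (.of_forall fun x => by ring)

theorem sq_integral_tilted_sub_le (hν : HasExpMoments ν) (hc : c ∈ poincareSet ν)
    (hg : MemLp g 2 ν) (hw : LipschitzWith L w) (hcL : c * L ^ 2 ≤ 1 / 4) :
    (∫ x, g x ∂ν.tilted w - ∫ x, g x ∂ν) ^ 2
      ≤ Var[g; ν] * (c * L ^ 2 * exp (8 * (c * L ^ 2))) := by
  have hc₀ := hc.1
  set E := ∫ y, w y ∂ν
  have hz : LipschitzWith L fun x => w x - E := by simpa using hw.sub (LipschitzWith.const E)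
  have hzL := ExpGrowth.of_lipschitz hz
  have hzX := ExpGrowth.exp_of_lipschitz hz
  have hz₀ : ∫ x, (w x - E) ∂ν = 0 := by
    rw [integral_sub ((ExpGrowth.of_lipschitz hw).integrable hν) (integrable_const _)]
    simp [E]
  have hI : 1 ≤ ∫ x, exp (w x - E) ∂ν := by
    have hmono := integral_mono ((hzL.add (.const 1)).integrable hν) (hzX.integrable hν)
      fun x => add_one_le_exp _
    rw [integral_add (hzL.integrable hν) (integrable_const _), hz₀] at hmono
    simpa using hmono
  rw [integral_tilted_eq_covariance hν hg hw E, div_pow]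
  calc cov[g, fun x => exp (w x - E); ν] ^ 2 / (∫ x, exp (w x - E) ∂ν) ^ 2
      ≤ cov[g, fun x => exp (w x - E); ν] ^ 2 := div_le_self (sq_nonneg _) (one_le_pow₀ hI)
    _ ≤ Var[g; ν] * Var[fun x => exp (w x - E); ν] := sq_covariance_le hg (hzX.memLp_two hν)
    _ ≤ Var[g; ν] * (c * L ^ 2 * exp (8 * (c * L ^ 2))) := by
        refine mul_le_mul_of_nonneg_left ?_ (variance_nonneg _ _)
        refine (variance_exp_le_of_lipschitz hν hc hz).trans ?_
        gcongr
        exact integral_exp_two_mul_le hν hc hz hz₀ hcL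

theorem sq_integral_tilted_le (hν : HasExpMoments ν) (hc : c ∈ poincareSet ν)
    (hg : MemLp g 2 ν) (hw : LipschitzWith L w) (hcL : c * L ^ 2 ≤ 1 / 4) :
    (∫ x, g x ∂ν.tilted w) ^ 2 ≤ (∫ x, g x ^ 2 ∂ν) * (1 + c * L ^ 2 * exp (8 * (c * L ^ 2))) := by
  have hc₀ := hc.1
  set χ := c * L ^ 2 * exp (8 * (c * L ^ 2))
  have : 0 ≤ χ := by positivity
  have hsq : ∫ x, g x ^ 2 ∂ν = Var[g; ν] + (∫ x, g x ∂ν) ^ 2 := by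
    simp [variance_eq_sub hg]
  have hd := sq_integral_tilted_sub_le hν hc hg hw hcL
  set d := ∫ x, g x ∂ν.tilted w - ∫ x, g x ∂ν with hd_def
  have heq : ∫ x, g x ∂ν.tilted w = d + ∫ x, g x ∂ν := by simp [hd_def]
  rw [heq, hsq]
  have hvar := variance_nonneg g ν
  -- Cauchy-Schwarz in the plane for `(√Var, ∫ g)` and `(√χ, 1)`
  have hcross : 2 * (d * ∫ x, g x ∂ν) ≤ Var[g; ν] + χ * (∫ x, g x ∂ν) ^ 2 := by
    refine (abs_le_of_sq_le_sq' ?_ (by positivity)).2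
    nlinarith [sq_nonneg (Var[g; ν] - χ * (∫ x, g x ∂ν) ^ 2),
      mul_le_mul_of_nonneg_right hd (sq_nonneg (∫ x, g x ∂ν))]
  linarith

end ExpMoments

/-! ### Functions with bounded pointwise Lipschitz constant -/

section PointwiseLipschitz

variable {E : Type*} [NormedAddCommGroup E] {k : E → ℝ} {L c : ℝ} {x : E}

lemma eventually_norm_sub_le_of_exp
    (h : ∀ᶠ y in 𝓝 x, |k y - k x| ≤ L * ‖y - x‖ * exp (c * ‖y - x‖ ^ 2)) {C : ℝ} (hC : L < C) :
    ∀ᶠ y in 𝓝 x, ‖k y - k x‖ ≤ C * ‖y - x‖ := by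
  have hcont : Continuous fun y : E => L * exp (c * ‖y - x‖ ^ 2) := by fun_prop
  have hlt : ∀ᶠ y in 𝓝 x, L * exp (c * ‖y - x‖ ^ 2) < C :=
    hcont.continuousAt.eventually_lt continuousAt_const (by simpa using hC)
  filter_upwards [h, hlt] with y hy hyC
  rw [norm_eq_abs]
  nlinarith [norm_nonneg (y - x)]

variable [NormedSpace ℝ E]

lemma norm_fderiv_le_of_forall_eventually (hL : 0 ≤ L)
    (h : ∀ C > L, ∀ᶠ y in 𝓝 x, ‖k y - k x‖ ≤ C * ‖y - x‖) : ‖fderiv ℝ k x‖ ≤ L :=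
  le_of_forall_gt_imp_ge_of_dense fun C hC =>
    norm_fderiv_le_of_lip' ℝ (hL.trans hC.le) (h C hC)

lemma eventually_slope_norm_sub_lt {v z : E} {s r : ℝ}
    (h : ∀ C > L, ∀ᶠ y in 𝓝 (x + s • v), ‖k y - k (x + s • v)‖ ≤ C * ‖y - (x + s • v)‖)
    (hr : L * ‖v‖ < r) : ∀ᶠ u in 𝓝[>] s, slope (fun u => ‖k (x + u • v) - k z‖) s u < r := by
  have hline : Tendsto (fun u : ℝ => x + u • v) (𝓝[>] s) (𝓝 (x + s • v)) :=
    (Continuous.tendsto (by fun_prop) s).mono_left nhdsWithin_le_nhds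
  have hev : ∀ᶠ C in 𝓝[>] L, C * ‖v‖ < r :=
    (((continuous_mul_const ‖v‖).tendsto L).eventually_lt_const hr).filter_mono nhdsWithin_le_nhds
  obtain ⟨C, hCr, hC⟩ := (hev.and self_mem_nhdsWithin).exists
  filter_upwards [hline (h C hC), self_mem_nhdsWithin] with u hu (hsu : s < u)
  have hus : 0 < u - s := sub_pos.2 hsu
  refine lt_of_le_of_lt ?_ hCr
  rw [slope_def_field, div_le_iff₀ hus]
  calc ‖k (x + u • v) - k z‖ - ‖k (x + s • v) - k z‖ ≤ ‖k (x + u • v) - k (x + s • v)‖ := by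
        simpa using norm_sub_norm_le (k (x + u • v) - k z) (k (x + s • v) - k z)
    _ ≤ C * ‖x + u • v - (x + s • v)‖ := hu
    _ = C * ‖v‖ * (u - s) := by
        rw [add_sub_add_left_eq_sub, ← sub_smul, norm_smul, norm_of_nonneg hus.le]
        ring

lemma lipschitzWith_of_forall_eventually {L : ℝ≥0}
    (h : ∀ x, ∀ C > (L : ℝ), ∀ᶠ y in 𝓝 x, ‖k y - k x‖ ≤ C * ‖y - x‖) : LipschitzWith L k := by
  have hcont : Continuous k := continuous_iff_continuousAt.2 fun x => by
    rw [ContinuousAt, tendsto_iff_norm_sub_tendsto_zero]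
    have hlin : Continuous fun y => (L + 1 : ℝ) * ‖y - x‖ := by fun_prop
    exact squeeze_zero' (.of_forall fun _ => norm_nonneg _) (h x (L + 1) (by simp))
      (by simpa using hlin.tendsto x)
  refine LipschitzWith.of_dist_le_mul fun y x => ?_
  rw [dist_eq_norm, dist_eq_norm]
  have hle := image_le_of_liminf_slope_right_le_deriv_boundary (a := 0) (b := 1)
    (f := fun s => ‖k (x + s • (y - x)) - k x‖) (B := fun s => L * ‖y - x‖ * s)
    (B' := fun _ => L * ‖y - x‖) (by fun_prop) (by simp) (by fun_prop)
    (fun s _ => ((hasDerivAt_id s).const_mul _).hasDerivWithinAt.congr_deriv (mul_one _))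
    (fun s _ r hr => (eventually_slope_norm_sub_lt (h _) hr).frequently)
    (Set.right_mem_Icc.2 zero_le_one)
  simpa using hle

end PointwiseLipschitz

/-! ### Kernels closed under exponential tilts -/

noncomputable section TiltKernel

variable {n : ℕ} {c K : ℝ≥0} {κ : Kernel (Euc n) (Euc n)} {g h : Euc n → ℝ} {θ v : Euc n}

lemma lipschitzWith_inner (v : Euc n) : LipschitzWith ‖v‖₊ fun x => ⟪v, x⟫ :=
  (innerSL ℝ v).lipschitzWith_of_opNorm_le (innerSL_apply_norm ℝ v).le

/-- The exponential family `κ θ ∝ exp ⟪θ, x⟫ κ 0`, every member of which satisfies the Poincaré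
inequality with constant `c`. -/
structure IsTiltKernel (c : ℝ≥0) (κ : Kernel (Euc n) (Euc n)) : Prop where
  hasExpMoments (θ : Euc n) : HasExpMoments (κ θ)
  mem_poincareSet (θ : Euc n) : (c : ℝ) ∈ poincareSet (κ θ)
  apply_add (θ v : Euc n) : κ (θ + v) = (κ θ).tilted fun x => ⟪v, x⟫

namespace IsTiltKernel

variable [IsMarkovKernel κ]

lemma sq_kernelMean_add_sub_le (hκ : IsTiltKernel c κ) (hh : MemLp h 2 (κ θ))
    (hv : c * ‖v‖ ^ 2 ≤ 1 / 4) :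
    (kernelMean κ h (θ + v) - kernelMean κ h θ) ^ 2
      ≤ Var[h; κ θ] * (c * ‖v‖ ^ 2 * exp (8 * (c * ‖v‖ ^ 2))) := by
  rw [kernelMean, hκ.apply_add]
  exact sq_integral_tilted_sub_le (hκ.hasExpMoments θ) (hκ.mem_poincareSet θ) hh
    (lipschitzWith_inner v) hv

/-- A dimension-free Harnack inequality. -/
lemma sq_kernelMean_add_le (hκ : IsTiltKernel c κ) (hh : MemLp h 2 (κ θ))
    (hv : c * ‖v‖ ^ 2 ≤ 1 / 4) :
    kernelMean κ h (θ + v) ^ 2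
      ≤ kernelMean κ (fun x => h x ^ 2) θ * (1 + c * ‖v‖ ^ 2 * exp (8 * (c * ‖v‖ ^ 2))) := by
  rw [kernelMean, hκ.apply_add]
  exact sq_integral_tilted_le (hκ.hasExpMoments θ) (hκ.mem_poincareSet θ) hh
    (lipschitzWith_inner v) hv

lemma eventually_abs_kernelMean_sub_le (hκ : IsTiltKernel c κ) (hh : MemLp h 2 (κ θ)) :
    ∀ᶠ y in 𝓝 θ, |kernelMean κ h y - kernelMean κ h θ|
      ≤ √(c * Var[h; κ θ]) * ‖y - θ‖ * exp (4 * c * ‖y - θ‖ ^ 2) := by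
  have hsmall : ∀ᶠ y in 𝓝 θ, (c : ℝ) * ‖y - θ‖ ^ 2 < 1 / 4 :=
    (Continuous.continuousAt (by fun_prop)).eventually_lt continuousAt_const (by simp)
  filter_upwards [hsmall] with y hy
  have hsq := hκ.sq_kernelMean_add_sub_le (v := y - θ) hh hy.le
  rw [add_sub_cancel] at hsq
  refine abs_le_of_sq_le_sq (hsq.trans_eq ?_) (by positivity)
  rw [mul_pow, mul_pow, sq_sqrt (mul_nonneg c.coe_nonneg (variance_nonneg _ _)), ← exp_nat_mul]
  ring_nf

lemma eventually_norm_kernelMean_sub_le (hκ : IsTiltKernel c κ) (hh : MemLp h 2 (κ θ)) {C : ℝ}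
    (hC : √(c * Var[h; κ θ]) < C) :
    ∀ᶠ y in 𝓝 θ, ‖kernelMean κ h y - kernelMean κ h θ‖ ≤ C * ‖y - θ‖ :=
  eventually_norm_sub_le_of_exp (hκ.eventually_abs_kernelMean_sub_le hh) hC

lemma norm_gradient_kernelMean_sq_le (hκ : IsTiltKernel c κ) (hh : MemLp h 2 (κ θ)) :
    ‖gradient (kernelMean κ h) θ‖ ^ 2 ≤ c * Var[h; κ θ] := by
  rw [norm_gradient, ← le_sqrt (norm_nonneg _) (mul_nonneg c.coe_nonneg (variance_nonneg _ _))]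
  exact norm_fderiv_le_of_forall_eventually (sqrt_nonneg _) fun _ hC =>
    hκ.eventually_norm_kernelMean_sub_le hh hC

lemma lipschitzWith_kernelMean_of_variance_le (hκ : IsTiltKernel c κ)
    (hh : ∀ θ, MemLp h 2 (κ θ)) (hK : ∀ θ, c * Var[h; κ θ] ≤ K ^ 2) :
    LipschitzWith K (kernelMean κ h) :=
  lipschitzWith_of_forall_eventually fun θ _ hC => hκ.eventually_norm_kernelMean_sub_le (hh θ) <|
    ((sqrt_le_left K.coe_nonneg).2 (hK θ)).trans_lt hC

lemma lipschitzWith_kernelMean (hκ : IsTiltKernel c κ) (hg : LipschitzWith K g) :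
    LipschitzWith (c * K) (kernelMean κ g) := by
  refine hκ.lipschitzWith_kernelMean_of_variance_le
    (fun θ => (ExpGrowth.of_lipschitz hg).memLp_two (hκ.hasExpMoments θ)) fun θ => ?_
  calc c * Var[g; κ θ] ≤ c * (c * K ^ 2) := by
        gcongr
        exact variance_le_of_lipschitz (hκ.hasExpMoments θ) (hκ.mem_poincareSet θ) hg
    _ = (c * K : ℝ≥0) ^ 2 := by
        push_cast
        ring

lemma lipschitzWith_kernelMean_of_abs_le (hκ : IsTiltKernel c κ) (hh : Measurable h) {M : ℝ≥0}
    (hM : ∀ x, |h x| ≤ M) : LipschitzWith (NNReal.sqrt c * M) (kernelMean κ h) := by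
  have hL2 (θ : Euc n) : MemLp h 2 (κ θ) :=
    (ExpGrowth.of_abs_le hh hM).memLp_two (hκ.hasExpMoments θ)
  refine hκ.lipschitzWith_kernelMean_of_variance_le hL2 fun θ => ?_
  have hvar : Var[h; κ θ] ≤ M ^ 2 := calc
    Var[h; κ θ] ≤ ∫ x, (h x - 0) ^ 2 ∂κ θ := variance_le_integral_sub_const_sq (hL2 θ) 0
    _ ≤ ∫ _, (M : ℝ) ^ 2 ∂κ θ :=
        integral_mono ((hL2 θ).sub (memLp_const 0)).integrable_sq (integrable_const _) fun x => by
          simpa using sq_le_sq' (abs_le.1 (hM x)).1 (abs_le.1 (hM x)).2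
    _ = M ^ 2 := by simp
  calc c * Var[h; κ θ] ≤ c * M ^ 2 := by gcongr
    _ = (NNReal.sqrt c * M : ℝ≥0) ^ 2 := by
        rw [NNReal.coe_mul, mul_pow, ← NNReal.coe_pow (NNReal.sqrt c), NNReal.sq_sqrt]

lemma kernelMean_exp_le (hκ : IsTiltKernel c κ) (hg : LipschitzWith K g) (hcK : c * K ^ 2 ≤ 1)
    (θ : Euc n) :
    kernelMean κ (fun x => exp (g x)) θ ≤ exp (kernelMean κ g θ + 2 * (c * K ^ 2)) :=
  integral_exp_le_of_lipschitz (hκ.hasExpMoments θ) (hκ.mem_poincareSet θ) hg (mod_cast hcK)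

end IsTiltKernel

end TiltKernel

/-! ### The round trip through a channel -/

noncomputable section RoundTrip

section Kernel

variable {α β : Type*} [MeasurableSpace α] [MeasurableSpace β] {P : Kernel α β} {Q : Kernel β α}
  {f : α → ℝ} {M : ℝ}

lemma abs_kernelMean_le [IsMarkovKernel Q] (hf : ∀ x, |f x| ≤ M) (y : β) :
    |kernelMean Q f y| ≤ M := by
  have h := norm_integral_le_of_norm_le_const (μ := Q y) (f := f) (.of_forall hf)
  simpa [kernelMean] using h

lemma kernelMean_const_mul (c : ℝ) (f : α → ℝ) :
    kernelMean Q (fun x => c * f x) = fun y => c * kernelMean Q f y :=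
  funext fun _ => integral_const_mul c f

/-- The Markov operator of the chain on `α` which moves to `β` along `P` and returns along `Q`. -/
def roundTrip (P : Kernel α β) (Q : Kernel β α) (f : α → ℝ) : α → ℝ := kernelMean P (kernelMean Q f)

lemma roundTrip_nonneg (hf : ∀ x, 0 ≤ f x) (x : α) : 0 ≤ roundTrip P Q f x :=
  integral_nonneg fun _ => integral_nonneg hf

lemma roundTrip_const_mul (c : ℝ) (f : α → ℝ) :
    roundTrip P Q (fun x => c * f x) = fun x => c * roundTrip P Q f x := by
  simp only [roundTrip, kernelMean_const_mul]

lemma abs_roundTrip_le [IsMarkovKernel P] [IsMarkovKernel Q] (hf : ∀ x, |f x| ≤ M) (x : α) :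
    |roundTrip P Q f x| ≤ M :=
  abs_kernelMean_le (abs_kernelMean_le hf) x

lemma measurable_roundTrip [IsSFiniteKernel P] [IsSFiniteKernel Q] (hf : Measurable f) :
    Measurable (roundTrip P Q f) :=
  measurable_kernelMean (measurable_kernelMean hf)

namespace IsBayesPair

variable {μ : Measure α} {m : Measure β} [SFinite μ] [SFinite m] [IsMarkovKernel P]
  [IsMarkovKernel Q]

lemma integral_roundTrip (B : IsBayesPair μ m P Q) (hf : Integrable f μ) :
    ∫ x, roundTrip P Q f x ∂μ = ∫ x, f x ∂μ := by
  unfold roundTrip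
  rw [B.integral_kernelMean (B.symm.integrable_kernelMean hf), B.symm.integral_kernelMean hf]

lemma memLp_two_roundTrip (B : IsBayesPair μ m P Q) (hf : MemLp f 2 μ) :
    MemLp (roundTrip P Q f) 2 μ :=
  B.memLp_two_kernelMean (B.symm.memLp_two_kernelMean hf)

lemma integral_sq_roundTrip_le (B : IsBayesPair μ m P Q) (hf : MemLp f 2 μ) :
    ∫ x, roundTrip P Q f x ^ 2 ∂μ ≤ ∫ x, f x ^ 2 ∂μ :=
  (B.integral_sq_kernelMean_le (B.symm.memLp_two_kernelMean hf)).trans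
    (B.symm.integral_sq_kernelMean_le hf)

lemma integral_mul_roundTrip (B : IsBayesPair μ m P Q) {g : α → ℝ} (hg : MemLp g 2 μ)
    (hf : MemLp f 2 μ) :
    ∫ x, g x * roundTrip P Q f x ∂μ = ∫ y, kernelMean Q g y * kernelMean Q f y ∂m :=
  B.integral_mul_kernelMean hg (B.symm.memLp_two_kernelMean hf)

lemma integral_mul_roundTrip_self (B : IsBayesPair μ m P Q) (hf : MemLp f 2 μ) :
    ∫ x, f x * roundTrip P Q f x ∂μ = ∫ x, f x ^ 2 ∂μ - ∫ y, Var[f; Q y] ∂m := by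
  rw [B.integral_mul_roundTrip hf hf, B.symm.integral_variance hf]
  simp only [← sq, sub_sub_cancel]

lemma integral_sq_sub_integral_sq_roundTrip_le (B : IsBayesPair μ m P Q) (hf : MemLp f 2 μ) :
    ∫ x, f x ^ 2 ∂μ - ∫ x, roundTrip P Q f x ^ 2 ∂μ ≤ 2 * ∫ y, Var[f; Q y] ∂m := by
  have hgap := B.symm.two_mul_integral_sq_kernelMean_le hf
  rw [B.symm.integral_variance hf]
  unfold roundTrip
  linarith

lemma integral_variance_roundTrip_le (B : IsBayesPair μ m P Q) (hf : MemLp f 2 μ) :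
    ∫ y, Var[roundTrip P Q f; Q y] ∂m ≤ ∫ y, Var[f; Q y] ∂m := by
  have hQf := B.symm.memLp_two_kernelMean hf
  rw [B.symm.integral_variance hf, B.symm.integral_variance (B.memLp_two_roundTrip hf)]
  unfold roundTrip
  linarith [B.symm.two_mul_integral_sq_kernelMean_le hf, B.two_mul_integral_sq_kernelMean_le hQf]

lemma integral_variance_comp_le (B : IsBayesPair μ m P Q) {k : ℝ → ℝ} (hk : LipschitzWith 1 k)
    (hf : MemLp f 2 μ) : ∫ y, Var[fun x => k (f x); Q y] ∂m ≤ ∫ y, Var[f; Q y] ∂m := by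
  refine integral_mono_of_nonneg (.of_forall fun y => variance_nonneg _ _)
    (B.symm.integrable_variance hf) ?_
  filter_upwards [B.symm.ae_memLp_two hf] with y hy
  exact variance_comp_le hk hy

end IsBayesPair

end Kernel

variable {n : ℕ} {t K : ℝ≥0} {μ m : Measure (Euc n)} {P Q : Kernel (Euc n) (Euc n)}
  {f g F a b : Euc n → ℝ}

/-- A channel `P` with input law `μ` and output law `m`, whose posterior `Q` is an exponential
family of measures with Poincaré constant `1 / t`, while `P` itself has Poincaré constant `t`; the
case of interest is `x ↦ t x + W` with Gaussian noise `W` of variance `t`. -/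
structure IsLocalizationPair (t : ℝ≥0) (μ m : Measure (Euc n)) (P Q : Kernel (Euc n) (Euc n)) : Prop
    extends IsBayesPair μ m P Q where
  isTiltKernel : IsTiltKernel t P
  isTiltKernel_posterior : IsTiltKernel t⁻¹ Q
  hasExpMoments : HasExpMoments μ

namespace IsLocalizationPair

variable [IsMarkovKernel P] [IsMarkovKernel Q]

lemma lipschitzWith_roundTrip (B : IsLocalizationPair t μ m P Q) (ht : t ≠ 0)
    (hg : LipschitzWith K g) : LipschitzWith K (roundTrip P Q g) := by
  have h := B.isTiltKernel.lipschitzWith_kernelMean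
    (B.isTiltKernel_posterior.lipschitzWith_kernelMean hg)
  rwa [mul_inv_cancel_left₀ ht] at h

lemma roundTrip_exp_le (B : IsLocalizationPair t μ m P Q) (ht : t ≠ 0) (hg : LipschitzWith K g)
    (hK : t⁻¹ * K ^ 2 ≤ 1) (x : Euc n) :
    roundTrip P Q (fun x => exp (g x)) x ≤ exp (roundTrip P Q g x + 4 * (t⁻¹ * K ^ 2)) := by
  have hQg := B.isTiltKernel_posterior.lipschitzWith_kernelMean hg
  have htK : t * (t⁻¹ * K) ^ 2 = t⁻¹ * K ^ 2 := by field_simp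
  have hint := (ExpGrowth.exp_of_lipschitz hQg).integrable (B.isTiltKernel.hasExpMoments x)
  calc roundTrip P Q (fun x => exp (g x)) x
      ≤ ∫ θ, exp (kernelMean Q g θ) * exp (2 * (t⁻¹ * K ^ 2)) ∂P x := by
        refine integral_mono_of_nonneg
          (.of_forall fun θ => integral_nonneg fun x => (exp_pos _).le) (hint.mul_const _)
          (.of_forall fun θ => ?_)
        simpa only [exp_add] using
          B.isTiltKernel_posterior.kernelMean_exp_le hg (mod_cast hK) θ
    _ ≤ exp (roundTrip P Q g x + 2 * (t⁻¹ * K ^ 2)) * exp (2 * (t⁻¹ * K ^ 2)) := by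
        rw [integral_mul_const]
        gcongr
        have h := B.isTiltKernel.kernelMean_exp_le hQg (by rwa [htK]) x
        exact h.trans_eq (by rw [← NNReal.coe_pow, ← NNReal.coe_mul, htK]; push_cast; rfl)
    _ = exp (roundTrip P Q g x + 4 * (t⁻¹ * K ^ 2)) := by
        rw [← exp_add]
        ring_nf

end IsLocalizationPair

lemma sq_integral_add_integral_mul_le {ν : Measure (Euc n)} (hν : HasExpMoments ν)
    (hF : ExpGrowth F) (hF₀ : ∀ x, 0 ≤ F x) (ha : LipschitzWith K a) {L : ℝ≥0}
    (hb : LipschitzWith L b) :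
    (∫ x, F x ∂ν) ^ 2 + (∫ x, (a x - b x) * F x ∂ν) * ∫ x, F x ∂ν
      ≤ (∫ x, F x ^ 2 * exp (-b x) ∂ν) * ∫ x, exp (a x) ∂ν := by
  have hexp {L : ℝ≥0} {k : Euc n → ℝ} (hk : LipschitzWith L k) (c : ℝ) :
      ExpGrowth fun x => exp (c * k x) :=
    .exp_of_lipschitz ((lipschitzWith_smul c).comp hk)
  have hFb : ExpGrowth fun x => F x * exp (-2⁻¹ * b x) := hF.mul (hexp hb _)
  have hea : ExpGrowth fun x => exp (2⁻¹ * a x) := hexp ha _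
  have hUF : Integrable (fun x => (a x - b x) * F x) ν :=
    (((ExpGrowth.of_lipschitz ha).sub (.of_lipschitz hb)).mul hF).integrable hν
  set p := ∫ x, F x ∂ν
  set q := ∫ x, (a x - b x) * F x ∂ν
  set r := ∫ x, F x * exp (-2⁻¹ * b x) * exp (2⁻¹ * a x) ∂ν
  have hlin : p + 2⁻¹ * q ≤ r := by
    rw [← integral_const_mul, ← integral_add (hF.integrable hν) (hUF.const_mul _)]
    refine integral_mono ((hF.integrable hν).add (hUF.const_mul _)) ((hFb.mul hea).integrable hν)
      fun x => ?_
    have hx := mul_le_mul_of_nonneg_left (add_one_le_exp (-2⁻¹ * b x + 2⁻¹ * a x)) (hF₀ x)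
    rw [exp_add, ← mul_assoc] at hx
    linarith
  have hpq : p ^ 2 + q * p ≤ r ^ 2 := by
    have hp : 0 ≤ p := integral_nonneg hF₀
    rcases le_total 0 (p + 2⁻¹ * q) with h | h
    · nlinarith [pow_le_pow_left₀ h hlin 2, sq_nonneg q]
    · nlinarith [sq_nonneg r]
  refine (hpq.trans (sq_integral_mul_le (hFb.memLp_two hν) (hea.memLp_two hν))).trans_eq ?_
  congr 1 <;> refine integral_congr_ae (.of_forall fun x => ?_)
  · simp only [mul_pow, ← exp_nat_mul]
    ring_nf
  · simp only [← exp_nat_mul]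
    ring_nf

/-- A supermartingale-type estimate for the weight `F * roundTrip P Q F`: it cannot concentrate
where `g` is much larger than its average along the round trip, unless `F` varies under the
posteriors. -/
theorem IsLocalizationPair.integral_sub_roundTrip_mul_le [IsProbabilityMeasure μ]
    [IsFiniteMeasure m] [IsMarkovKernel P] [IsMarkovKernel Q]
    (B : IsLocalizationPair t μ m P Q) (ht : t ≠ 0) (hF : ExpGrowth F) (hF₀ : ∀ x, 0 ≤ F x)
    (hg : LipschitzWith K g) (hK : t⁻¹ * K ^ 2 ≤ 1) :
    ∫ x, (g x - roundTrip P Q g x - 4 * (t⁻¹ * K ^ 2)) * (F x * roundTrip P Q F x) ∂μ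
      ≤ ∫ θ, Var[F; Q θ] ∂m := by
  set c : ℝ := 4 * (t⁻¹ * K ^ 2)
  have hTg := B.lipschitzWith_roundTrip ht hg
  have hb : LipschitzWith K fun x => roundTrip P Q g x + c := by
    simpa using hTg.add (LipschitzWith.const c)
  have hFL := hF.memLp_two B.hasExpMoments
  have hJ : ExpGrowth fun x => F x ^ 2 * exp (-(roundTrip P Q g x + c)) :=
    hF.sq.mul (.exp_of_lipschitz hb.neg)
  have hU : ExpGrowth fun x => (g x - (roundTrip P Q g x + c)) * F x :=
    ((ExpGrowth.of_lipschitz hg).sub (.of_lipschitz hb)).mul hF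
  have hJL := hJ.memLp_two B.hasExpMoments
  have hUL := hU.memLp_two B.hasExpMoments
  have hEL := (ExpGrowth.exp_of_lipschitz hg).memLp_two B.hasExpMoments
  have hQF := B.symm.memLp_two_kernelMean hFL
  have hQU := B.symm.memLp_two_kernelMean hUL
  have hpost : ∫ θ, (kernelMean Q F θ ^ 2 + kernelMean Q _ θ * kernelMean Q F θ) ∂m
      ≤ ∫ θ, kernelMean Q _ θ * kernelMean Q _ θ ∂m :=
    integral_mono (hQF.integrable_sq.add (hQU.integrable_mul hQF))
      ((B.symm.memLp_two_kernelMean hJL).integrable_mul (B.symm.memLp_two_kernelMean hEL))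
      fun θ => sq_integral_add_integral_mul_le (B.isTiltKernel_posterior.hasExpMoments θ) hF hF₀
        hg hb
  have hexp : ∫ x, F x ^ 2 * exp (-(roundTrip P Q g x + c)) * roundTrip P Q (fun x => exp (g x)) x
      ∂μ ≤ ∫ x, F x ^ 2 ∂μ := by
    refine integral_mono (hJL.integrable_mul (B.memLp_two_roundTrip hEL)) hFL.integrable_sq
      fun x => ?_
    refine (mul_le_mul_of_nonneg_left (B.roundTrip_exp_le ht hg hK x) (by positivity)).trans_eq ?_
    rw [mul_assoc, ← exp_add, neg_add_cancel, exp_zero, mul_one]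
  rw [integral_add hQF.integrable_sq (by exact hQU.integrable_mul hQF),
    ← B.integral_mul_roundTrip hUL hFL, ← B.integral_mul_roundTrip hJL hEL] at hpost
  rw [B.symm.integral_variance hFL]
  simp only [mul_assoc, ← sub_sub] at hpost hexp ⊢
  linarith

end RoundTrip

/-! ### Variance lost by the channel -/

noncomputable section ChannelVariance

namespace IsBayesPair

variable {α β : Type*} [MeasurableSpace α] [MeasurableSpace β] {P : Kernel α β} {Q : Kernel β α}
  {μ : Measure α} {m : Measure β} [IsProbabilityMeasure μ] [IsProbabilityMeasure m]
  [IsMarkovKernel P] [IsMarkovKernel Q]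

lemma variance_eq_integral_variance_add (B : IsBayesPair μ m P Q) {h : β → ℝ} (hh : MemLp h 2 m) :
    Var[h; m] = ∫ x, Var[h; P x] ∂μ + Var[kernelMean P h; μ] := by
  rw [variance_eq_sub hh, variance_eq_sub (B.memLp_two_kernelMean hh),
    B.integral_kernelMean (hh.integrable one_le_two), B.integral_variance hh]
  simp only [Pi.pow_apply]
  ring

lemma variance_kernelMean_le (B : IsBayesPair μ m P Q) {h : β → ℝ} (hh : MemLp h 2 m) :
    Var[kernelMean P h; μ] ≤ Var[h; m] := by
  rw [B.variance_eq_integral_variance_add hh]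
  exact le_add_of_nonneg_left (integral_nonneg fun x => variance_nonneg h (P x))

lemma covariance_roundTrip (B : IsBayesPair μ m P Q) {f : α → ℝ} (hf : MemLp f 2 μ) :
    cov[f, roundTrip P Q f; μ] = Var[kernelMean Q f; m] := by
  have hQf := B.symm.memLp_two_kernelMean hf
  have hf₁ := hf.integrable one_le_two
  rw [covariance_eq_sub hf (B.memLp_two_roundTrip hf), variance_eq_sub hQf,
    B.integral_roundTrip hf₁, B.symm.integral_kernelMean hf₁]
  simp only [Pi.mul_apply, Pi.pow_apply, B.integral_mul_roundTrip hf hf, sq]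

end IsBayesPair

lemma le_one_add_mul_sub {a x y z : ℝ} (ha : 0 ≤ a) (hx : 0 ≤ x) (hy : 0 ≤ y) (hyxz : y ^ 2 ≤ x * z)
    (hz : z ≤ a * (y - z)) : x ≤ (1 + a) * (x - y) := by
  have hyx : (1 + a) * y ≤ a * x := by
    rcases hy.eq_or_lt with rfl | hy_pos
    · simpa using mul_nonneg ha hx
    · refine le_of_mul_le_mul_right ?_ hy_pos
      nlinarith
  linarith

/-- Since `P` turns the posterior mean `h` into a function with gradient controlled by its local
variance, the Poincaré inequality for `μ` bounds `Var[P h; μ]` by a multiple of the variance lost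
along `P`; by reversibility the same proportion is lost along `Q`. -/
lemma IsLocalizationPair.variance_le_of_lipschitz {n : ℕ} {t : ℝ≥0} {μ m : Measure (Euc n)}
    {P Q : Kernel (Euc n) (Euc n)} [IsProbabilityMeasure μ] [IsProbabilityMeasure m]
    [IsMarkovKernel P] [IsMarkovKernel Q] (B : IsLocalizationPair t μ m P Q) (ht : t ≠ 0) {C : ℝ}
    (hC : C ∈ poincareSet μ) {f : Euc n → ℝ} (hf : LipschitzWith 1 f) :
    Var[f; μ] ≤ (1 + C * t) * ∫ θ, Var[f; Q θ] ∂m := by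
  have hfL := (ExpGrowth.of_lipschitz hf).memLp_two B.hasExpMoments
  have hQf := B.isTiltKernel_posterior.lipschitzWith_kernelMean hf
  have hQfL := B.symm.memLp_two_kernelMean hfL
  have hTf := B.lipschitzWith_roundTrip ht hf
  have hTfL := B.memLp_two_roundTrip hfL
  have hgrad (x : Euc n) : ‖gradient (roundTrip P Q f) x‖ ^ 2 ≤ t * Var[kernelMean Q f; P x] :=
    B.isTiltKernel.norm_gradient_kernelMean_sq_le <|
      (ExpGrowth.of_lipschitz hQf).memLp_two (B.isTiltKernel.hasExpMoments x)
  have hlossP := B.variance_eq_integral_variance_add hQfL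
  have hlossQ := B.symm.variance_eq_integral_variance_add hfL
  have hz : Var[roundTrip P Q f; μ]
      ≤ C * t * (Var[kernelMean Q f; m] - Var[roundTrip P Q f; μ]) := calc
    Var[roundTrip P Q f; μ] ≤ C * ∫ x, ‖gradient (roundTrip P Q f) x‖ ^ 2 ∂μ :=
        variance_le_of_mem_poincareSet hC hTf.locallyLipschitz hTfL <|
          ((B.integrable_variance hQfL).const_mul (t : ℝ)).mono'
            ((measurable_gradient _).norm.pow_const 2).aestronglyMeasurable <|
              .of_forall fun x => by simpa only [norm_pow, norm_norm] using hgrad x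
    _ ≤ C * ∫ x, t * Var[kernelMean Q f; P x] ∂μ :=
        mul_le_mul_of_nonneg_left (integral_mono_of_nonneg (.of_forall fun x => by positivity)
          ((B.integrable_variance hQfL).const_mul _) (.of_forall hgrad)) hC.1
    _ = C * t * (Var[kernelMean Q f; m] - Var[roundTrip P Q f; μ]) := by
        rw [integral_const_mul, hlossP, roundTrip]
        ring
  have hcov : Var[kernelMean Q f; m] ^ 2 ≤ Var[f; μ] * Var[roundTrip P Q f; μ] := by
    rw [← B.covariance_roundTrip hfL]
    exact sq_covariance_le hfL hTfL
  have hbound := le_one_add_mul_sub (mul_nonneg hC.1 t.coe_nonneg) (variance_nonneg _ _)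
    (variance_nonneg _ _) hcov hz
  rwa [← eq_sub_of_add_eq hlossQ.symm] at hbound

end ChannelVariance

/-! ### Consequences of a variance bound for Lipschitz functions -/

noncomputable section LipschitzVariance

section General

variable {Ω : Type*} [MeasurableSpace Ω] {μ : Measure Ω} [IsProbabilityMeasure μ] {f : Ω → ℝ}
  {B C : Set Ω} {b p q : ℝ}

lemma measureReal_le_variance (hf : MemLp f 2 μ) (hB : MeasurableSet B) (hfB : ∀ x ∈ B, f x = 0) :
    (∫ x, f x ∂μ) ^ 2 * μ.real B ≤ Var[f; μ] := by
  set a := ∫ x, f x ∂μ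
  have hind : ∫ x, B.indicator (fun _ => a ^ 2) x ∂μ = a ^ 2 * μ.real B := by
    rw [integral_indicator hB, setIntegral_const, smul_eq_mul, mul_comm]
  rw [← hind, variance_eq_integral hf.aemeasurable]
  refine integral_mono ((integrable_const _).indicator hB) (hf.sub (memLp_const a)).integrable_sq
    fun x => ?_
  by_cases hx : x ∈ B
  · simp [hx, hfB, a]
  · simpa [hx] using sq_nonneg _

lemma one_sub_le_measureReal_le (hf : Measurable f) (hf_int : Integrable f μ)
    (hf₀ : ∀ x, 0 ≤ f x) (hb : 0 < b) (h : ∫ x, f x ∂μ ≤ p * b) :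
    1 - p ≤ μ.real {x | f x ≤ b} := by
  have hcompl : b * μ.real {x | f x ≤ b}ᶜ ≤ p * b := by
    refine ((mul_le_mul_of_nonneg_left (measureReal_mono fun x hx => ?_) hb.le).trans
      (mul_meas_ge_le_integral_of_nonneg (.of_forall hf₀) hf_int b)).trans h
    exact (not_le.1 fun h : f x ≤ b => hx h).le
  rw [probReal_compl_eq_one_sub (measurableSet_le hf measurable_const), mul_comm] at hcompl
  linarith [le_of_mul_le_mul_right hcompl hb]

lemma one_sub_add_le_measureReal_inter (hC : MeasurableSet C) (hBp : 1 - p ≤ μ.real B)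
    (hCq : 1 - q ≤ μ.real C) : 1 - (p + q) ≤ μ.real (B ∩ C) := by
  linarith [measureReal_union_add_inter (μ := μ) (s := B) hC,
    measureReal_le_one (μ := μ) (s := B ∪ C)]

end General

variable {n : ℕ} {μ : Measure (Euc n)} {V s : ℝ}

/-- Every `1`-Lipschitz function has variance at most `V`; a weak form of concentration. -/
def LipschitzVarianceLE (μ : Measure (Euc n)) (V : ℝ) : Prop :=
  ∀ g : Euc n → ℝ, LipschitzWith 1 g → Var[g; μ] ≤ V

namespace LipschitzVarianceLE

lemma variance_le (hμ : LipschitzVarianceLE μ V) {K : ℝ≥0} (hK : K ≠ 0) {g : Euc n → ℝ}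
    (hg : LipschitzWith K g) : Var[g; μ] ≤ K ^ 2 * V := by
  have hscaled : LipschitzWith 1 fun x => (K : ℝ)⁻¹ * g x := by
    have h := (lipschitzWith_smul (K : ℝ)⁻¹).comp hg
    rwa [nnnorm_inv, NNReal.nnnorm_eq, inv_mul_cancel₀ hK] at h
  have h := hμ _ hscaled
  rw [variance_const_mul, inv_pow] at h
  exact (inv_mul_le_iff₀ (by positivity)).1 h

lemma integral_infDist_le [IsProbabilityMeasure μ] (hμ : LipschitzVarianceLE μ (s ^ 2))
    (hμ_exp : HasExpMoments μ) (hs : 0 ≤ s) {B : Set (Euc n)} (hB : MeasurableSet B)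
    (hB_half : 1 / 2 ≤ μ.real B) : ∫ x, Metric.infDist x B ∂μ ≤ 1.5 * s := by
  have hlip := Metric.lipschitz_infDist_pt B
  have hvar := measureReal_le_variance ((ExpGrowth.of_lipschitz hlip).memLp_two hμ_exp) hB
    fun x hx => Metric.infDist_zero_of_mem hx
  refine le_of_sq_le_sq ?_ (by positivity)
  nlinarith [hvar.trans (hμ _ hlip), sq_nonneg (∫ x, Metric.infDist x B ∂μ), sq_nonneg s]

end LipschitzVarianceLE

end LipschitzVariance

/-! ### The maximal set argument -/

noncomputable section MaximalSet

lemma exists_forall_le_add_of_bddAbove {ι : Type*} {S : Set ι} {Φ : ι → ℝ} (hS : S.Nonempty)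
    (hΦ : BddAbove (Φ '' S)) {δ : ℝ} (hδ : 0 < δ) : ∃ i ∈ S, ∀ j ∈ S, Φ j ≤ Φ i + δ := by
  obtain ⟨_, ⟨i, hi, rfl⟩, hlt⟩ :=
    exists_lt_of_lt_csSup (hS.image Φ) (sub_lt_self (sSup (Φ '' S)) hδ)
  exact ⟨i, hi, fun j hj => by linarith [le_csSup hΦ ⟨j, hj, rfl⟩]⟩

lemma exists_dist_eq_sub {E : Type*} [NormedAddCommGroup E] [NormedSpace ℝ E] {x y : E} {r : ℝ}
    (hr : 0 < r) (h : r ≤ dist x y) : ∃ z, dist x z = r ∧ dist z y = dist x y - r := by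
  have hdist : 0 < dist x y := hr.trans_le h
  obtain ⟨z, hxz, hzy⟩ := exists_dist_eq x y (sub_nonneg.2 ((div_le_one hdist).2 h))
    (by positivity) (sub_add_cancel 1 (r / dist x y))
  refine ⟨z, ?_, ?_⟩
  · rw [hxz, div_mul_cancel₀ _ hdist.ne']
  · rw [hzy, sub_mul, div_mul_cancel₀ _ hdist.ne', one_mul]

variable {n : ℕ} {t : ℝ≥0} {s M : ℝ} {μ m : Measure (Euc n)} {P Q : Kernel (Euc n) (Euc n)}
  {g w k : Euc n → ℝ} {A A' S : Set (Euc n)} {x y : Euc n}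

/-- The points from which the distance to `A` after a round trip is at most `10 s` on average, and
where the posterior means of this distance have variance at most `10 s ^ 2`. -/
def tameSet (P Q : Kernel (Euc n) (Euc n)) (s : ℝ) (A : Set (Euc n)) : Set (Euc n) :=
  {y | roundTrip P Q (Metric.infDist · A) y ≤ 10 * s} ∩
    {y | Var[kernelMean Q (Metric.infDist · A); P y] ≤ 10 * s ^ 2}

namespace IsLocalizationPair

variable [IsMarkovKernel Q]

lemma expGrowth_kernelMean_infDist (B : IsLocalizationPair t μ m P Q) (A : Set (Euc n)) :
    ExpGrowth (kernelMean Q (Metric.infDist · A)) :=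
  .of_lipschitz (B.isTiltKernel_posterior.lipschitzWith_kernelMean (Metric.lipschitz_infDist_pt A))

variable [IsMarkovKernel P]

lemma lipschitzWith_roundTrip_infDist (B : IsLocalizationPair t μ m P Q) (ht : t ≠ 0)
    (A : Set (Euc n)) : LipschitzWith 1 (roundTrip P Q (Metric.infDist · A)) :=
  B.lipschitzWith_roundTrip ht (Metric.lipschitz_infDist_pt A)

lemma measurable_variance_kernelMean_infDist (B : IsLocalizationPair t μ m P Q)
    (A : Set (Euc n)) : Measurable fun y => Var[kernelMean Q (Metric.infDist · A); P y] := by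
  have hgrowth := B.expGrowth_kernelMean_infDist A
  have heq : (fun y => Var[kernelMean Q (Metric.infDist · A); P y]) = fun y =>
      kernelMean P (fun θ => kernelMean Q (Metric.infDist · A) θ ^ 2) y
        - kernelMean P (kernelMean Q (Metric.infDist · A)) y ^ 2 :=
    funext fun y => variance_eq_sub (hgrowth.memLp_two (B.isTiltKernel.hasExpMoments y))
  rw [heq]
  exact (measurable_kernelMean hgrowth.sq.measurable).sub
    ((measurable_kernelMean hgrowth.measurable).pow_const 2)

lemma measurableSet_tameSet (B : IsLocalizationPair t μ m P Q) (ht : t ≠ 0) (A : Set (Euc n)) :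
    MeasurableSet (tameSet P Q s A) :=
  (measurableSet_le (B.lipschitzWith_roundTrip_infDist ht A).continuous.measurable
    measurable_const).inter
    (measurableSet_le (B.measurable_variance_kernelMean_infDist A) measurable_const)

lemma measureReal_tameSet_ge [IsProbabilityMeasure μ] [IsProbabilityMeasure m]
    (B : IsLocalizationPair t μ m P Q) (ht : t ≠ 0) (hμ : LipschitzVarianceLE μ (s ^ 2))
    (hs : 0 < s) (hA : MeasurableSet A) (hA_half : 1 / 2 ≤ μ.real A) :
    1 - (0.15 + 0.1) ≤ μ.real (tameSet P Q s A) := by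
  have hlip := Metric.lipschitz_infDist_pt A
  have hL := (ExpGrowth.of_lipschitz hlip).memLp_two B.hasExpMoments
  have hQL := B.symm.memLp_two_kernelMean hL
  have hT := ExpGrowth.of_lipschitz (B.lipschitzWith_roundTrip_infDist ht A)
  have hvar := B.measurable_variance_kernelMean_infDist A
  refine one_sub_add_le_measureReal_inter (measurableSet_le hvar measurable_const)
    (one_sub_le_measureReal_le hT.measurable (hT.integrable B.hasExpMoments)
      (roundTrip_nonneg fun x => Metric.infDist_nonneg) (by positivity) ?_)
    (one_sub_le_measureReal_le hvar (B.integrable_variance hQL) (fun y => variance_nonneg _ _)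
      (by positivity) ?_)
  · rw [B.integral_roundTrip (hL.integrable one_le_two)]
    linarith [hμ.integral_infDist_le B.hasExpMoments hs.le hA hA_half]
  · linarith [B.variance_eq_integral_variance_add hQL, B.symm.variance_kernelMean_le hL, hμ _ hlip,
      variance_nonneg (kernelMean P (kernelMean Q (Metric.infDist · A))) μ]

/-- Moving by `100 s` from a point of small local variance changes the round trip mean by at most
`5 s`, instead of the `100 s` allowed by the Lipschitz bound. -/
lemma roundTrip_le_of_le_dist (B : IsLocalizationPair t μ m P Q) (hts : t * (200 * s) ^ 2 = 1)
    (hs : 0 < s) (hg : LipschitzWith 1 g) (hvar : Var[kernelMean Q g; P y] ≤ 10 * s ^ 2)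
    (hxy : 100 * s ≤ dist x y) :
    roundTrip P Q g x ≤ roundTrip P Q g y + dist x y - 95 * s := by
  have ht : t ≠ 0 := NNReal.coe_ne_zero.1 (left_ne_zero_of_mul_eq_one hts)
  obtain ⟨z, hyz, hzx⟩ := exists_dist_eq_sub (by positivity) (dist_comm x y ▸ hxy)
  have htv : t * ‖z - y‖ ^ 2 = 1 / 4 := by
    rw [← dist_eq_norm, dist_comm, hyz]
    linarith
  have hexp : exp (8 * (1 / 4)) ≤ 8 := by
    rw [show (8 * (1 / 4) : ℝ) = 1 + 1 by norm_num, exp_add]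
    nlinarith [exp_one_lt_d9, exp_pos 1]
  have hsmall : (roundTrip P Q g z - roundTrip P Q g y) ^ 2 ≤ (5 * s) ^ 2 := calc
    _ ≤ Var[kernelMean Q g; P y] * (t * ‖z - y‖ ^ 2 * exp (8 * (t * ‖z - y‖ ^ 2))) := by
        rw [← add_sub_cancel y z, add_sub_cancel_left]
        exact B.isTiltKernel.sq_kernelMean_add_sub_le
          ((ExpGrowth.of_lipschitz (B.isTiltKernel_posterior.lipschitzWith_kernelMean hg)).memLp_two
            (B.isTiltKernel.hasExpMoments y)) htv.le
    _ ≤ 10 * s ^ 2 * (1 / 4 * 8) := by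
        rw [htv]
        gcongr
    _ ≤ (5 * s) ^ 2 := by nlinarith [sq_nonneg s]
  have hlip := (B.lipschitzWith_roundTrip ht hg).dist_le_mul x z
  rw [NNReal.coe_one, one_mul, dist_comm x z, hzx, dist_comm y x] at hlip
  linarith [(abs_le.1 hlip).2, (abs_le_of_sq_le_sq' hsmall (by positivity)).2]

lemma roundTrip_infDist_mul_le (B : IsLocalizationPair t μ m P Q) (hts : t * (200 * s) ^ 2 = 1)
    (hs : 0 < s) (hA' : A'.Nonempty) (hA'A : A' ⊆ tameSet P Q s A) {a b : ℝ} (ha : 0 ≤ a)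
    (hb : 0 ≤ b) (hab : Metric.infDist x A' < 100 * s → a = b) :
    roundTrip P Q (Metric.infDist · A) x * a
      ≤ (Metric.infDist x A' - 85 * s) * a + 100 * s * b := by
  have ht : t ≠ 0 := NNReal.coe_ne_zero.1 (left_ne_zero_of_mul_eq_one hts)
  rcases lt_or_ge (Metric.infDist x A') (100 * s) with hnear | hfar
  · have hT : roundTrip P Q (Metric.infDist · A) x - 10 * s ≤ Metric.infDist x A' :=
      (Metric.le_infDist hA').2 fun y hy => by
        have hlip := (B.lipschitzWith_roundTrip_infDist ht A).dist_le_mul x y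
        rw [NNReal.coe_one, one_mul] at hlip
        linarith [(abs_le.1 hlip).2, (hA'A hy).1.out]
    rw [← hab hnear]
    nlinarith
  · have hT : roundTrip P Q (Metric.infDist · A) x + 85 * s ≤ Metric.infDist x A' :=
      (Metric.le_infDist hA').2 fun y hy => by
        linarith [B.roundTrip_le_of_le_dist hts hs (Metric.lipschitz_infDist_pt A) (hA'A hy).2
          (hfar.trans (Metric.infDist_le_dist_of_mem hy)), (hA'A hy).1.out]
    nlinarith [mul_nonneg hs.le hb]

lemma integral_roundTrip_infDist_mul_le (B : IsLocalizationPair t μ m P Q)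
    (hts : t * (200 * s) ^ 2 = 1) (hs : 0 < s) (hA' : A'.Nonempty) (hA'A : A' ⊆ tameSet P Q s A)
    (hw : ExpGrowth w) (hw₀ : ∀ x, 0 ≤ w x) (hk : ExpGrowth k) (hk₀ : ∀ x, 0 ≤ k x)
    (hwk : ∀ x, Metric.infDist x A' < 100 * s → w x = k x) :
    ∫ x, roundTrip P Q (Metric.infDist · A) x * w x ∂μ
      ≤ ∫ x, Metric.infDist x A' * w x ∂μ - 85 * s * ∫ x, w x ∂μ + 100 * s * ∫ x, k x ∂μ := by
  have ht : t ≠ 0 := NNReal.coe_ne_zero.1 (left_ne_zero_of_mul_eq_one hts)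
  have hμ := B.hasExpMoments
  have hT := ExpGrowth.of_lipschitz (B.lipschitzWith_roundTrip_infDist ht A)
  have hd := ((ExpGrowth.of_lipschitz (Metric.lipschitz_infDist_pt A')).mul hw).integrable hμ
  have hw_int := (hw.integrable hμ).const_mul (85 * s)
  have hk_int := (hk.integrable hμ).const_mul (100 * s)
  have hdiff : Integrable (fun x => Metric.infDist x A' * w x - 85 * s * w x) μ := hd.sub hw_int
  rw [← integral_const_mul, ← integral_const_mul, ← integral_sub hd hw_int,
    ← integral_add hdiff hk_int]
  refine integral_mono ((hT.mul hw).integrable hμ) (hdiff.add hk_int) fun x => ?_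
  simpa only [sub_mul] using B.roundTrip_infDist_mul_le hts hs hA' hA'A (hw₀ x) (hk₀ x) (hwk x)

lemma integral_infDist_sub_roundTrip_mul_le [IsProbabilityMeasure μ] [IsFiniteMeasure m]
    (B : IsLocalizationPair t μ m P Q) (hts : t * (200 * s) ^ 2 = 1) (hs : 0 < s)
    {F : Euc n → ℝ} (hF : ExpGrowth F) (hF₀ : ∀ x, 0 ≤ F x) (A : Set (Euc n)) :
    ∫ x, (Metric.infDist x A - roundTrip P Q (Metric.infDist · A) x) * (F x * roundTrip P Q F x) ∂μ
      ≤ 5000 * s * (∫ θ, Var[F; Q θ] ∂m + 4 / 625 * ∫ x, F x * roundTrip P Q F x ∂μ) := by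
  have ht : t ≠ 0 := NNReal.coe_ne_zero.1 (left_ne_zero_of_mul_eq_one hts)
  obtain ⟨K, hK⟩ : ∃ K : ℝ≥0, (K : ℝ) = (5000 * s)⁻¹ := ⟨⟨_, by positivity⟩, rfl⟩
  have htK : (t : ℝ)⁻¹ * K ^ 2 = 1 / 625 := by
    rw [← eq_inv_of_mul_eq_one_right hts, hK]
    field_simp
    norm_num
  have hd := Metric.lipschitz_infDist_pt A
  have hKd : LipschitzWith K fun x => K * Metric.infDist x A := by
    have h := (lipschitzWith_smul (K : ℝ)).comp hd
    rwa [NNReal.nnnorm_eq, mul_one] at h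
  have hkey := B.integral_sub_roundTrip_mul_le ht hF hF₀ hKd
    (NNReal.coe_le_coe.1 (by push_cast; linarith))
  have hF2 := hF.memLp_two B.hasExpMoments
  have hTF := B.memLp_two_roundTrip hF2
  have hdF : Integrable (fun x => (Metric.infDist x A - roundTrip P Q (Metric.infDist · A) x) * F x
      * roundTrip P Q F x) μ :=
    (((ExpGrowth.of_lipschitz hd).sub (.of_lipschitz (B.lipschitzWith_roundTrip_infDist ht A))).mul
      hF |>.memLp_two B.hasExpMoments).integrable_mul hTF
  have hFTF : Integrable (fun x => F x * roundTrip P Q F x) μ := hF2.integrable_mul hTF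
  have hscale (x : Euc n) : (K * Metric.infDist x A - K * roundTrip P Q (Metric.infDist · A) x
      - 4 * (1 / 625)) * (F x * roundTrip P Q F x)
      = K * ((Metric.infDist x A - roundTrip P Q (Metric.infDist · A) x) * F x * roundTrip P Q F x)
        - 4 / 625 * (F x * roundTrip P Q F x) := by ring
  simp only [roundTrip_const_mul, NNReal.coe_inv, htK, hscale] at hkey
  rw [integral_sub (hdF.const_mul _) (hFTF.const_mul _), integral_const_mul,
    integral_const_mul, hK, sub_le_iff_le_add, inv_mul_le_iff₀ (by positivity)] at hkey
  simpa only [mul_assoc] using hkey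


variable [IsProbabilityMeasure μ] [IsProbabilityMeasure m]

lemma exists_subset_tameSet_integral_infDist_mul_le (B : IsLocalizationPair t μ m P Q)
    (ht : t ≠ 0) (hμ : LipschitzVarianceLE μ (s ^ 2)) (hs : 0 < s) (hw₀ : ∀ x, 0 ≤ w x)
    (hwM : ∀ x, w x ≤ M) (hS : MeasurableSet S) (hS_large : 1 - 0.1 ≤ μ.real S) :
    ∃ A A', A'.Nonempty ∧ A' ⊆ S ∧ A' ⊆ tameSet P Q s A ∧
      ∫ x, Metric.infDist x A' * w x ∂μ ≤ ∫ x, Metric.infDist x A * w x ∂μ + 10 * s := by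
  have hM : 0 ≤ M := (hw₀ 0).trans (hwM 0)
  have hd (A : Set (Euc n)) : Integrable (Metric.infDist · A) μ :=
    (ExpGrowth.of_lipschitz (Metric.lipschitz_infDist_pt A)).integrable B.hasExpMoments
  let large : Set (Set (Euc n)) := {A | MeasurableSet A ∧ A ⊆ S ∧ 1 / 2 ≤ μ.real A}
  have hbdd : BddAbove ((fun A => ∫ x, Metric.infDist x A * w x ∂μ) '' large) := by
    refine ⟨1.5 * s * M, ?_⟩
    rintro _ ⟨A, ⟨hA, -, hA_half⟩, rfl⟩
    calc ∫ x, Metric.infDist x A * w x ∂μ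
        ≤ ∫ x, Metric.infDist x A * M ∂μ :=
          integral_mono_of_nonneg (.of_forall fun x => mul_nonneg Metric.infDist_nonneg (hw₀ x))
            ((hd A).mul_const M)
            (.of_forall fun x => mul_le_mul_of_nonneg_left (hwM x) Metric.infDist_nonneg)
      _ ≤ 1.5 * s * M := by
          rw [integral_mul_const]
          exact mul_le_mul_of_nonneg_right
            (hμ.integral_infDist_le B.hasExpMoments hs.le hA hA_half) hM
  have hS_mem : S ∈ large := ⟨hS, subset_rfl, by linarith⟩
  obtain ⟨A, ⟨hA, -, hA_half⟩, hA_max⟩ :=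
    exists_forall_le_add_of_bddAbove ⟨S, hS_mem⟩ hbdd (by positivity : 0 < 10 * s)
  have hA'_half : 1 / 2 ≤ μ.real (S ∩ tameSet P Q s A) := by
    linarith [one_sub_add_le_measureReal_inter (B.measurableSet_tameSet ht A) hS_large
      (B.measureReal_tameSet_ge ht hμ hs hA hA_half)]
  refine ⟨A, S ∩ tameSet P Q s A, ?_, Set.inter_subset_left, Set.inter_subset_right,
    hA_max _ ⟨hS.inter (B.measurableSet_tameSet ht A), Set.inter_subset_left, hA'_half⟩⟩
  by_contra hempty
  rw [Set.not_nonempty_iff_eq_empty.1 hempty, measureReal_empty] at hA'_half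
  norm_num at hA'_half

/-- Where `w` and `k` differ one is far from the almost maximising set, and there a round trip
brings the distance to this set down. -/
lemma exists_le_integral_infDist_sub_roundTrip_mul (B : IsLocalizationPair t μ m P Q)
    (hts : t * (200 * s) ^ 2 = 1) (hμ : LipschitzVarianceLE μ (s ^ 2)) (hs : 0 < s)
    (hw : Measurable w) (hw₀ : ∀ x, 0 ≤ w x) (hwM : ∀ x, w x ≤ M) (hk : ExpGrowth k)
    (hk₀ : ∀ x, 0 ≤ k x) (hS : MeasurableSet S) (hS_large : 1 - 0.1 ≤ μ.real S)
    (hwk : ∀ y ∈ S, ∀ x, dist x y < 100 * s → w x = k x) :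
    ∃ A : Set (Euc n), 85 * s * ∫ x, w x ∂μ - 100 * s * ∫ x, k x ∂μ - 10 * s
      ≤ ∫ x, (Metric.infDist x A - roundTrip P Q (Metric.infDist · A) x) * w x ∂μ := by
  have ht : t ≠ 0 := NNReal.coe_ne_zero.1 (left_ne_zero_of_mul_eq_one hts)
  have hw_growth : ExpGrowth w := .of_abs_le hw fun x => (abs_of_nonneg (hw₀ x)).trans_le (hwM x)
  obtain ⟨A, A', hA', hA'S, hA'A, hmax⟩ :=
    B.exists_subset_tameSet_integral_infDist_mul_le ht hμ hs hw₀ hwM hS hS_large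
  have htrip := B.integral_roundTrip_infDist_mul_le hts hs hA' hA'A hw_growth hw₀ hk hk₀ fun x hx =>
    have ⟨y, hy, hxy⟩ := (Metric.infDist_lt_iff hA').1 hx
    hwk y (hA'S hy) x hxy
  have hint {g : Euc n → ℝ} (hg : LipschitzWith 1 g) : Integrable (fun x => g x * w x) μ :=
    ((ExpGrowth.of_lipschitz hg).mul hw_growth).integrable B.hasExpMoments
  refine ⟨A, ?_⟩
  simp only [sub_mul]
  rw [integral_sub (hint (Metric.lipschitz_infDist_pt A))
    (hint (B.lipschitzWith_roundTrip_infDist ht A))]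
  linarith

theorem lt_integral_variance_of_agree (B : IsLocalizationPair t μ m P Q)
    (hts : t * (200 * s) ^ 2 = 1) (hμ : LipschitzVarianceLE μ (s ^ 2)) (hs : 0 < s)
    {F G : Euc n → ℝ} (hF : Measurable F) (hF₀ : ∀ x, 0 ≤ F x) (hFM : ∀ x, F x ≤ M)
    (hG : ExpGrowth G) (hG₀ : ∀ x, 0 ≤ G x) (hF_ge : 0.998 ≤ ∫ x, F x ^ 2 ∂μ)
    (hF_le : ∫ x, F x ^ 2 ∂μ ≤ 2) (hG_le : ∫ x, G x ^ 2 ∂μ ≤ 0.0036)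
    (hS : MeasurableSet S) (hS_large : 1 - 0.1 ≤ μ.real S)
    (hFG : ∀ y ∈ S, ∀ x, dist x y < 100 * s → F x = G x) :
    0.001 < ∫ θ, Var[F; Q θ] ∂m := by
  by_contra! hE
  have hFg : ExpGrowth F := .of_abs_le hF fun x => (abs_of_nonneg (hF₀ x)).trans_le (hFM x)
  have hF2 := hFg.memLp_two B.hasExpMoments
  have hG2 := hG.memLp_two B.hasExpMoments
  have hTF₀ := roundTrip_nonneg (P := P) (Q := Q) hF₀
  have hTFM (x) : roundTrip P Q F x ≤ M := (le_abs_self _).trans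
    (abs_roundTrip_le (fun x => (abs_of_nonneg (hF₀ x)).trans_le (hFM x)) x)
  have hTF := measurable_roundTrip (P := P) (Q := Q) hF
  have hTFg : ExpGrowth (roundTrip P Q F) :=
    .of_abs_le hTF fun x => (abs_of_nonneg (hTF₀ x)).trans_le (hTFM x)
  obtain ⟨A, hA⟩ := B.exists_le_integral_infDist_sub_roundTrip_mul hts hμ hs (hF.mul hTF)
    (fun x => mul_nonneg (hF₀ x) (hTF₀ x))
    (fun x => mul_le_mul (hFM x) (hTFM x) (hTF₀ x) ((hF₀ x).trans (hFM x)))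
    (hG.mul hTFg) (fun x => mul_nonneg (hG₀ x) (hTF₀ x)) hS hS_large
    (fun y hy x hxy => by rw [Pi.mul_apply, hFG y hy x hxy])
  have hkey := hA.trans (B.integral_infDist_sub_roundTrip_mul_le hts hs hFg hF₀ A)
  have hW : ∫ x, F x * roundTrip P Q F x ∂μ = _ := B.integral_mul_roundTrip_self hF2
  have hG_cross : ∫ x, G x * roundTrip P Q F x ∂μ ≤ 0.1 := by
    refine le_of_sq_le_sq ((sq_integral_mul_le hG2 (B.memLp_two_roundTrip hF2)).trans ?_)
      (by norm_num)
    refine (mul_le_mul hG_le ((B.integral_sq_roundTrip_le hF2).trans hF_le)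
      (integral_nonneg fun x => sq_nonneg _) (by norm_num)).trans (by norm_num)
  simp only [Pi.mul_apply, hW] at hkey
  nlinarith

end IsLocalizationPair

end MaximalSet

/-! ### Truncation and the spectral gap of the round trip -/

noncomputable section Truncation

/-- Truncation of the real line to `[-8, 8]`. -/
def clip (a : ℝ) : ℝ := max (-8) (min 8 a)

lemma lipschitzWith_clip : LipschitzWith 1 clip := (LipschitzWith.id.const_min 8).const_max (-8)

lemma abs_clip_le (a : ℝ) : |clip a| ≤ 8 :=
  abs_le.2 ⟨le_max_left _ _, max_le (by norm_num) (min_le_left _ _)⟩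

lemma clip_of_abs_le {a : ℝ} (ha : |a| ≤ 8) : clip a = a := by
  rw [clip, min_eq_right (abs_le.1 ha).2, max_eq_right (abs_le.1 ha).1]

lemma clip_neg (a : ℝ) : clip (-a) = -clip a := by
  unfold clip
  grind

lemma clip_sub_one_le (a : ℝ) : clip (a - 1) ≤ a - 1 + a ^ 2 / 28 := by
  refine max_le ?_ ((min_le_right _ _).trans (by linarith [sq_nonneg a]))
  linarith [sq_nonneg (a + 14)]

section Centering

variable {Ω : Type*} [MeasurableSpace Ω] {ν : Measure Ω} [IsProbabilityMeasure ν] {u : Ω → ℝ}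

lemma integral_sub_const_sq_of_integral_eq_zero (hu : MemLp u 2 ν) (hu₀ : ∫ x, u x ∂ν = 0) (c : ℝ) :
    ∫ x, (u x - c) ^ 2 ∂ν = ∫ x, u x ^ 2 ∂ν + c ^ 2 := by
  have h := integral_sub_const_sq hu 0
  simp only [sub_zero, hu₀] at h
  rw [integral_sub_const_sq hu c, h, hu₀]
  ring

lemma integrable_clip_sub (hu : AEStronglyMeasurable u ν) (c : ℝ) :
    Integrable (fun x => clip (u x - c)) ν :=
  .of_bound (lipschitzWith_clip.continuous.comp_aestronglyMeasurable
    (hu.sub aestronglyMeasurable_const)) 8 (.of_forall fun _ => abs_clip_le _)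

lemma integral_clip_sub_one_nonpos (hu : MemLp u 2 ν) (hu₀ : ∫ x, u x ∂ν = 0)
    (hu₁ : ∫ x, u x ^ 2 ∂ν ≤ 1) : ∫ x, clip (u x - 1) ∂ν ≤ 0 := by
  have hu_int := hu.integrable one_le_two
  have hsub : Integrable (fun x => u x - 1) ν := hu_int.sub (integrable_const 1)
  have h : ∫ x, clip (u x - 1) ∂ν ≤ ∫ x, (u x - 1 + u x ^ 2 / 28) ∂ν :=
    integral_mono (integrable_clip_sub hu.1 1) (hsub.add (hu.integrable_sq.div_const 28))
      fun x => clip_sub_one_le (u x)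
  rw [integral_add hsub (hu.integrable_sq.div_const 28), integral_sub hu_int (integrable_const 1),
    integral_div, integral_const, probReal_univ, one_smul, hu₀] at h
  linarith

lemma exists_integral_clip_sub_eq_zero (hu : MemLp u 2 ν) (hu₀ : ∫ x, u x ∂ν = 0)
    (hu₁ : ∫ x, u x ^ 2 ∂ν ≤ 1) : ∃ c : ℝ, c ^ 2 ≤ 1 ∧ ∫ x, clip (u x - c) ∂ν = 0 := by
  have hcont : Continuous fun c => ∫ x, clip (u x - c) ∂ν :=
    continuous_of_dominated (fun c => (integrable_clip_sub hu.1 c).1)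
      (fun c => .of_forall fun _ => abs_clip_le _) (integrable_const 8)
      (.of_forall fun x => lipschitzWith_clip.continuous.comp (continuous_const.sub continuous_id))
  have hneg : 0 ≤ ∫ x, clip (u x - -1) ∂ν := by
    have h := integral_clip_sub_one_nonpos hu.neg (by simp [integral_neg, hu₀]) (by simpa using hu₁)
    have hodd (x : Ω) : clip ((-u) x - 1) = -clip (u x - -1) := by
      rw [← clip_neg, Pi.neg_apply]
      ring_nf
    simpa only [hodd, integral_neg, neg_nonpos] using h
  obtain ⟨c, hc, hc₀⟩ := intermediate_value_Icc' (by norm_num : (-1 : ℝ) ≤ 1) hcont.continuousOn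
    ⟨integral_clip_sub_one_nonpos hu hu₀ hu₁, hneg⟩
  exact ⟨c, by nlinarith [hc.1, hc.2], hc₀⟩

end Centering

variable {n : ℕ} {t : ℝ≥0} {s M : ℝ} {μ m : Measure (Euc n)} {P Q : Kernel (Euc n) (Euc n)}
  [IsMarkovKernel P] [IsMarkovKernel Q] {f G : Euc n → ℝ} {x y : Euc n}

namespace IsLocalizationPair

lemma sq_roundTrip_sub_le (B : IsLocalizationPair t μ m P Q) (hts : t * (200 * s) ^ 2 = 1)
    (hf : Measurable f) (hM : ∀ x, |f x| ≤ M) {c : ℝ}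
    (hy : kernelMean P (fun θ => (kernelMean Q f θ - c) ^ 2) y ≤ 20) (hxy : dist x y < 100 * s) :
    (roundTrip P Q f x - c) ^ 2 ≤ 8 ^ 2 := by
  have hQf : ExpGrowth (kernelMean Q f) :=
    .of_abs_le (measurable_kernelMean hf) (abs_kernelMean_le hM)
  have hsub : kernelMean P (fun θ => kernelMean Q f θ - c) x = roundTrip P Q f x - c := by
    rw [roundTrip, kernelMean, kernelMean,
      integral_sub (hQf.integrable (B.isTiltKernel.hasExpMoments x)) (integrable_const c),
      integral_const, probReal_univ, one_smul]
  have htv : t * ‖x - y‖ ^ 2 ≤ 1 / 4 := by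
    rw [← dist_eq_norm]
    nlinarith [mul_le_mul_of_nonneg_left (pow_le_pow_left₀ dist_nonneg hxy.le 2) t.coe_nonneg]
  have hharnack := B.isTiltKernel.sq_kernelMean_add_le
    ((hQf.sub (.const c)).memLp_two (B.isTiltKernel.hasExpMoments y)) htv
  have hexp : exp (8 * (t * ‖x - y‖ ^ 2)) ≤ 7.4 := by
    calc exp (8 * (t * ‖x - y‖ ^ 2)) ≤ exp (1 + 1) := by
          gcongr
          linarith
      _ ≤ 7.4 := by
          rw [exp_add]
          nlinarith [exp_one_lt_d9, exp_pos 1]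
  rw [add_sub_cancel, hsub] at hharnack
  refine hharnack.trans ((mul_le_mul hy (add_le_add_right (mul_le_mul htv hexp (exp_pos _).le
    (by norm_num)) 1) (by positivity) (by norm_num)).trans (by norm_num))

lemma integral_variance_le_of_isTestFunction [IsFiniteMeasure μ] [IsFiniteMeasure m]
    (B : IsLocalizationPair t μ m P Q) (hf : IsTestFunction f) :
    ∫ θ, Var[f; Q θ] ∂m ≤ (t : ℝ)⁻¹ * ∫ x, ‖gradient f x‖ ^ 2 ∂μ := by
  have hf2 (ν : Measure (Euc n)) [IsFiniteMeasureOnCompacts ν] : MemLp f 2 ν :=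
    hf.continuous.memLp_of_hasCompactSupport hf.hasCompactSupport
  have hgrad := hf.norm_gradient_sq.integrable (μ := μ)
  rw [← B.symm.integral_kernelMean hgrad, ← integral_const_mul]
  refine integral_mono (B.symm.integrable_variance (hf2 μ))
    ((B.symm.integrable_kernelMean hgrad).const_mul _) fun θ => ?_
  exact variance_le_of_mem_poincareSet (B.isTiltKernel_posterior.mem_poincareSet θ)
    (locallyLipschitz_of_smooth hf.smooth) (hf2 _) (hf.norm_gradient_sq.integrable _)

variable [IsProbabilityMeasure μ]

lemma integral_sq_le_of_integral_variance_le [IsProbabilityMeasure m]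
    (B : IsLocalizationPair t μ m P Q) (hts : t * (200 * s) ^ 2 = 1)
    (hμ : LipschitzVarianceLE μ (s ^ 2)) (hG : Measurable G) (hG8 : ∀ x, |G x| ≤ 8)
    (hG₀ : ∫ x, G x ∂μ = 0) (hE : ∫ θ, Var[G; Q θ] ∂m ≤ 0.001) : ∫ x, G x ^ 2 ∂μ ≤ 0.0036 := by
  have ht : t ≠ 0 := NNReal.coe_ne_zero.1 (left_ne_zero_of_mul_eq_one hts)
  have hG2 := (ExpGrowth.of_abs_le hG hG8).memLp_two B.hasExpMoments
  have hlip : LipschitzWith (NNReal.sqrt t * 8) (roundTrip P Q G) :=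
    B.isTiltKernel.lipschitzWith_kernelMean_of_abs_le (measurable_kernelMean hG)
      (abs_kernelMean_le hG8)
  have hvar := hμ.variance_le (by simpa using ht) hlip
  have hTG : ∫ x, roundTrip P Q G x ^ 2 ∂μ = Var[roundTrip P Q G; μ] := by
    rw [variance_eq_sub (B.memLp_two_roundTrip hG2),
      B.integral_roundTrip (hG2.integrable one_le_two), hG₀]
    simp
  have hsq : ((NNReal.sqrt t * 8 : ℝ≥0) : ℝ) ^ 2 * s ^ 2 = 0.0016 := by
    rw [NNReal.coe_mul, mul_pow, ← NNReal.coe_pow (NNReal.sqrt t), NNReal.sq_sqrt]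
    norm_num
    linarith
  linarith [B.integral_sq_sub_integral_sq_roundTrip_le hG2]

variable [IsProbabilityMeasure m]

lemma integral_variance_comp_roundTrip_sub_le {k : ℝ → ℝ} (B : IsLocalizationPair t μ m P Q)
    (hf : MemLp f 2 μ) (hk : LipschitzWith 1 k) (c : ℝ) :
    ∫ θ, Var[fun x => k (roundTrip P Q f x - c); Q θ] ∂m ≤ ∫ θ, Var[f; Q θ] ∂m := by
  have hkc : LipschitzWith 1 fun a => k (a - c) := by
    have h := hk.comp (LipschitzWith.id.sub (LipschitzWith.const c))
    rwa [add_zero, mul_one] at h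
  exact (B.integral_variance_comp_le hkc (B.memLp_two_roundTrip hf)).trans
    (B.integral_variance_roundTrip_le hf)

lemma measureReal_kernelMean_sq_sub_le_ge (B : IsLocalizationPair t μ m P Q) (hf : Measurable f)
    (hf2 : MemLp f 2 μ) (hf₀ : ∫ x, f x ∂μ = 0) (hf₁ : ∫ x, f x ^ 2 ∂μ ≤ 1) {c : ℝ}
    (hc : c ^ 2 ≤ 1) :
    1 - 0.1 ≤ μ.real {x | kernelMean P (fun θ => (kernelMean Q f θ - c) ^ 2) x ≤ 20} := by
  have hQf := B.symm.memLp_two_kernelMean hf2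
  have hint : Integrable (fun θ => (kernelMean Q f θ - c) ^ 2) m :=
    (hQf.sub (memLp_const c)).integrable_sq
  refine one_sub_le_measureReal_le
    (measurable_kernelMean (((measurable_kernelMean hf).sub_const c).pow_const 2))
    (B.integrable_kernelMean hint) (fun x => integral_nonneg fun θ => sq_nonneg _)
    (by norm_num) ?_
  rw [B.integral_kernelMean hint, integral_sub_const_sq_of_integral_eq_zero hQf
    ((B.symm.integral_kernelMean (hf2.integrable one_le_two)).trans hf₀)]
  linarith [B.symm.integral_sq_kernelMean_le hf2]

/-- The centred round trip of a function of small energy and its truncation agree near a set of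
large measure, but their second moments are of different orders. -/
theorem lt_integral_variance (B : IsLocalizationPair t μ m P Q) (hts : t * (200 * s) ^ 2 = 1)
    (hμ : LipschitzVarianceLE μ (s ^ 2)) (hs : 0 < s) (hf : Measurable f) (hM : ∀ x, |f x| ≤ M)
    (hf₀ : ∫ x, f x ∂μ = 0) (hf₁ : ∫ x, f x ^ 2 ∂μ = 1) : 0.001 < ∫ θ, Var[f; Q θ] ∂m := by
  by_contra! hE
  have hf2 := (ExpGrowth.of_abs_le hf hM).memLp_two B.hasExpMoments
  have hgap := B.integral_sq_sub_integral_sq_roundTrip_le hf2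
  set u := roundTrip P Q f
  have hu : Measurable u := measurable_roundTrip hf
  have hu2 : MemLp u 2 μ := B.memLp_two_roundTrip hf2
  have hu₀ : ∫ x, u x ∂μ = 0 := (B.integral_roundTrip (hf2.integrable one_le_two)).trans hf₀
  have hu₁ : ∫ x, u x ^ 2 ∂μ ≤ 1 := (B.integral_sq_roundTrip_le hf2).trans_eq hf₁
  obtain ⟨c, hc, hc₀⟩ := exists_integral_clip_sub_eq_zero hu2 hu₀ hu₁
  have hclip : Measurable fun x => clip (u x - c) :=
    lipschitzWith_clip.continuous.measurable.comp (hu.sub_const c)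
  have hF_sq : ∫ x, ‖u x - c‖ ^ 2 ∂μ = ∫ x, u x ^ 2 ∂μ + c ^ 2 := by
    simp only [norm_eq_abs, sq_abs]
    exact integral_sub_const_sq_of_integral_eq_zero hu2 hu₀ c
  have hG_sq : ∫ x, ‖clip (u x - c)‖ ^ 2 ∂μ ≤ 0.0036 := by
    simp only [norm_eq_abs, sq_abs]
    exact B.integral_sq_le_of_integral_variance_le hts hμ hclip (fun x => abs_clip_le _) hc₀
      ((B.integral_variance_comp_roundTrip_sub_le hf2 lipschitzWith_clip c).trans hE)
  have hlt : 0.001 < ∫ θ, Var[fun x => ‖u x - c‖; Q θ] ∂m :=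
    B.lt_integral_variance_of_agree hts hμ hs (hu.sub_const c).norm (fun x => norm_nonneg _)
      (fun x => (norm_sub_le _ _).trans (add_le_add_left (abs_roundTrip_le hM x) _))
      (.of_abs_le hclip.norm fun x => (abs_norm _).trans_le (abs_clip_le _))
      (fun x => norm_nonneg _) (by linarith [sq_nonneg c]) (by linarith) hG_sq
      (measurableSet_le (measurable_kernelMean
        (((measurable_kernelMean hf).sub_const c).pow_const 2)) measurable_const)
      (B.measureReal_kernelMean_sq_sub_le_ge hf hf2 hf₀ hf₁.le hc) fun y hy x hxy => by
        rw [clip_of_abs_le (abs_le_of_sq_le_sq (B.sq_roundTrip_sub_le hts hf hM hy hxy)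
          (by norm_num))]
  exact hlt.not_ge ((B.integral_variance_comp_roundTrip_sub_le hf2 lipschitzWith_one_norm c).trans
    hE)

theorem variance_le_integral_variance (B : IsLocalizationPair t μ m P Q)
    (hts : t * (200 * s) ^ 2 = 1) (hμ : LipschitzVarianceLE μ (s ^ 2)) (hs : 0 < s)
    (hf : Measurable f) (hM : ∀ x, |f x| ≤ M) :
    Var[f; μ] ≤ 1000 * ∫ θ, Var[f; Q θ] ∂m := by
  rcases (variance_nonneg f μ).eq_or_lt with hvar | hvar
  · rw [← hvar]
    exact mul_nonneg (by norm_num) (integral_nonneg fun θ => variance_nonneg f (Q θ))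
  have hf2 := (ExpGrowth.of_abs_le hf hM).memLp_two B.hasExpMoments
  set a := ∫ x, f x ∂μ
  set σ := √Var[f; μ]
  have hσ : σ⁻¹ ^ 2 * Var[f; μ] = 1 := by
    rw [inv_pow, sq_sqrt hvar.le, inv_mul_cancel₀ hvar.ne']
  have hnormalised : ∫ x, (σ⁻¹ * (f x - a)) ^ 2 ∂μ = 1 := by
    simp only [mul_pow]
    rw [integral_const_mul, integral_sub_const_sq hf2, sub_self, zero_pow two_ne_zero, add_zero, hσ]
  have hcentred : ∫ x, σ⁻¹ * (f x - a) ∂μ = 0 := by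
    rw [integral_const_mul, integral_sub (hf2.integrable one_le_two) (integrable_const a),
      integral_const, probReal_univ, one_smul, sub_self, mul_zero]
  have hlt := B.lt_integral_variance hts hμ hs ((hf.sub_const a).const_mul σ⁻¹)
    (fun x => (abs_mul _ _).trans_le (mul_le_mul_of_nonneg_left
      ((abs_sub _ _).trans (add_le_add_left (hM x) _)) (abs_nonneg _))) hcentred hnormalised
  simp only [variance_const_mul, variance_sub_const hf.aestronglyMeasurable] at hlt
  rw [integral_const_mul, inv_pow, sq_sqrt hvar.le, lt_inv_mul_iff₀ hvar] at hlt
  linarith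

theorem mem_poincareSet_of_lipschitzVarianceLE {φ : Euc n → ℝ}
    [IsProbabilityMeasure (gibbsMeasure φ)] (hφ : ContDiff ℝ ∞ φ)
    (B : IsLocalizationPair t (gibbsMeasure φ) m P Q) (hts : t * (200 * s) ^ 2 = 1)
    (hμ : LipschitzVarianceLE (gibbsMeasure φ) (s ^ 2)) (hs : 0 < s) :
    4 * 10 ^ 7 * s ^ 2 ∈ poincareSet (gibbsMeasure φ) := by
  refine mem_poincareSet_of_isTestFunction hφ (by positivity) fun f hf => ?_
  obtain ⟨M, hM⟩ := hf.hasCompactSupport.exists_bound_of_continuous hf.continuous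
  have ht_inv : (t : ℝ)⁻¹ = (200 * s) ^ 2 := (eq_inv_of_mul_eq_one_right hts).symm
  have hvar := B.variance_le_integral_variance hts hμ hs hf.continuous.measurable hM
  have henergy := B.integral_variance_le_of_isTestFunction hf
  rw [ht_inv] at henergy
  linarith

end IsLocalizationPair

end Truncation

/-! ### Exponential families -/

noncomputable section ExpFamily

variable {n : ℕ} {φ : Euc n → ℝ} {m : ℝ}

/-- The normalising constant of `expFamily`. -/
def partitionFun (φ : Euc n → ℝ) (θ : Euc n) : ℝ := ∫ x, exp (⟪θ, x⟫ - φ x)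

/-- The exponential family generated by `e^{-φ}`: the law indexed by `θ` has density
`e^{⟪θ, x⟫ - φ x}`, up to normalisation. -/
def expFamily (φ : Euc n → ℝ) : Kernel (Euc n) (Euc n) :=
  (Kernel.const _ volume).withDensity fun θ x =>
    ENNReal.ofReal (exp (⟪θ, x⟫ - φ x) / partitionFun φ θ)

lemma measurable_partitionFun (hφ : Continuous φ) : Measurable (partitionFun φ) :=
  (StronglyMeasurable.integral_prod_right (f := fun θ x => exp (⟪θ, x⟫ - φ x))
    (by fun_prop : Continuous fun p : Euc n × Euc n => exp (⟪p.1, p.2⟫ - φ p.2)).stronglyMeasurable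
    ).measurable

lemma measurable_expFamily_density (hφ : Continuous φ) :
    Measurable fun p : Euc n × Euc n => exp (⟪p.1, p.2⟫ - φ p.2) / partitionFun φ p.1 :=
  (by fun_prop : Continuous fun p : Euc n × Euc n => exp (⟪p.1, p.2⟫ - φ p.2)).measurable.div
    ((measurable_partitionFun hφ).comp measurable_fst)

lemma expFamily_apply (hφ : Continuous φ) (θ : Euc n) :
    expFamily φ θ = volume.tilted fun x => ⟪θ, x⟫ - φ x :=
  Kernel.withDensity_apply _ (measurable_expFamily_density hφ).ennreal_ofReal θ

namespace StrongPotential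

lemma integrable_exp_neg (hφ : StrongPotential φ m) : Integrable fun x => exp (-φ x) := by
  simpa [integrable_gibbsMeasure_iff hφ.continuous] using hφ.integrable_exp_mul_norm 0

lemma sub_inner_add_const (hφ : StrongPotential φ m) (θ : Euc n) (c : ℝ) :
    StrongPotential (fun x => φ x - ⟪θ, x⟫ + c) m where
  smooth := (hφ.smooth.sub (innerSL ℝ θ).contDiff).add contDiff_const
  pos := hφ.pos
  hessian_ge x v := by
    have hderiv : fderiv ℝ (fun x => φ x - ⟪θ, x⟫ + c) = fun x => fderiv ℝ φ x - innerSL ℝ θ := by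
      ext1 x
      exact (((differentiableAt_of_smooth hφ.smooth).hasFDerivAt.sub
        (innerSL ℝ θ).hasFDerivAt).add_const c).fderiv
    rw [hderiv, fderiv_sub_const]
    exact hφ.hessian_ge x v

lemma integrable_exp_inner_sub (hφ : StrongPotential φ m) (θ : Euc n) :
    Integrable fun x => exp (⟪θ, x⟫ - φ x) := by
  simpa using (hφ.sub_inner_add_const θ 0).integrable_exp_neg

lemma partitionFun_pos (hφ : StrongPotential φ m) (θ : Euc n) : 0 < partitionFun φ θ :=
  integral_exp_pos (hφ.integrable_exp_inner_sub θ)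

lemma expFamily_eq_gibbsMeasure (hφ : StrongPotential φ m) (θ : Euc n) :
    expFamily φ θ = gibbsMeasure fun x => φ x - ⟪θ, x⟫ + log (partitionFun φ θ) := by
  rw [expFamily_apply hφ.continuous, Measure.tilted, gibbsMeasure]
  congr! 3 with x
  rw [neg_add, neg_sub, exp_add, exp_neg (log _), exp_log (hφ.partitionFun_pos θ)]
  rfl

lemma isMarkovKernel_expFamily (hφ : StrongPotential φ m) : IsMarkovKernel (expFamily φ) where
  isProbabilityMeasure θ := by
    rw [expFamily_apply hφ.continuous]
    exact isProbabilityMeasure_tilted (hφ.integrable_exp_inner_sub θ)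

lemma isTiltKernel_expFamily {c : ℝ≥0} (hφ : StrongPotential φ c) :
    IsTiltKernel c⁻¹ (expFamily φ) where
  hasExpMoments θ := by
    rw [hφ.expFamily_eq_gibbsMeasure]
    exact (hφ.sub_inner_add_const θ _).integrable_exp_mul_norm
  mem_poincareSet θ := by
    have := hφ.isMarkovKernel_expFamily.isProbabilityMeasure θ
    rw [hφ.expFamily_eq_gibbsMeasure] at this ⊢
    exact (hφ.sub_inner_add_const θ _).inv_mem_poincareSet
  apply_add θ v := by
    rw [expFamily_apply hφ.continuous, expFamily_apply hφ.continuous,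
      tilted_tilted (hφ.integrable_exp_inner_sub θ)]
    congr! 2 with x
    simp only [Pi.add_apply, inner_add_left]
    ring

end StrongPotential

lemma strongPotential_add_norm_sq {t : ℝ} (hφ : ContDiff ℝ ∞ φ)
    (hconv : ∀ x v : Euc n, 0 ≤ fderiv ℝ (fderiv ℝ φ) x v v) (ht : 0 < t) :
    StrongPotential (fun x => φ x + t / 2 * ‖x‖ ^ 2) t := by
  have hsmooth : ContDiff ℝ ∞ fun x => φ x + t / 2 * ‖x‖ ^ 2 :=
    hφ.add (contDiff_const.mul (contDiff_norm_sq ℝ))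
  refine ⟨hsmooth, ht, fun x v => ?_⟩
  have hderiv : dirDeriv v (fun x => φ x + t / 2 * ‖x‖ ^ 2)
      = fun x => dirDeriv v φ x + t * innerSL ℝ v x := by
    ext1 x
    rw [dirDeriv, ((differentiableAt_of_smooth hφ).hasFDerivAt.fun_add
      ((hasStrictFDerivAt_norm_sq x).hasFDerivAt.const_mul (t / 2))).fderiv, dirDeriv,
      add_apply, smul_apply,
      smul_apply, innerSL_apply_apply, innerSL_apply_apply,
      real_inner_comm x v, smul_eq_mul, nsmul_eq_mul]
    push_cast
    ring
  have hconvex := hconv x v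
  rw [← dirDeriv_dirDeriv hφ] at hconvex
  rw [← dirDeriv_dirDeriv hsmooth, hderiv, dirDeriv,
    ((differentiableAt_of_smooth (contDiff_dirDeriv hφ v)).hasFDerivAt.fun_add
      ((innerSL ℝ v).hasFDerivAt.const_mul t)).fderiv]
  simpa [dirDeriv] using hconvex

end ExpFamily

/-! ### The Gaussian channel -/

noncomputable section JointDensity

variable {α β : Type*} [MeasurableSpace α] [MeasurableSpace β] {ν : Measure α} {η : Measure β}
  [SFinite ν] [SFinite η] {a : α → ℝ} {p : α → β → ℝ} {k : β → ℝ} {q : β → α → ℝ}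

lemma compProd_withDensity_const (ha : Measurable a) (ha₀ : ∀ x, 0 ≤ a x)
    (hp : Measurable (Function.uncurry p)) :
    (ν.withDensity fun x => ENNReal.ofReal (a x))
        ⊗ₘ ((Kernel.const α η).withDensity fun x y => ENNReal.ofReal (p x y))
      = (ν.prod η).withDensity fun z => ENNReal.ofReal (a z.1 * p z.1 z.2) := by
  have : IsSFiniteKernel ((Kernel.const α η).withDensity fun x y => ENNReal.ofReal (p x y)) :=
    Kernel.IsSFiniteKernel.withDensity _ fun _ _ => ENNReal.ofReal_ne_top
  simp only [ENNReal.ofReal_mul (ha₀ _)]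
  rw [Measure.compProd_withDensity hp.ennreal_ofReal, Measure.compProd_const,
    prod_withDensity_left ha.ennreal_ofReal]
  exact (withDensity_mul _ (ha.ennreal_ofReal.comp measurable_fst) hp.ennreal_ofReal).symm

lemma isBayesPair_withDensity (ha : Measurable a) (ha₀ : ∀ x, 0 ≤ a x)
    (hp : Measurable (Function.uncurry p)) (hk : Measurable k) (hk₀ : ∀ y, 0 ≤ k y)
    (hq : Measurable (Function.uncurry q)) (h : ∀ x y, a x * p x y = k y * q y x) :
    IsBayesPair (ν.withDensity fun x => ENNReal.ofReal (a x))
      (η.withDensity fun y => ENNReal.ofReal (k y))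
      ((Kernel.const α η).withDensity fun x y => ENNReal.ofReal (p x y))
      ((Kernel.const β ν).withDensity fun y x => ENNReal.ofReal (q y x)) where
  compProd_eq := by
    have hap : Measurable fun z : α × β => ENNReal.ofReal (a z.1 * p z.1 z.2) :=
      ((ha.comp measurable_fst).mul hp).ennreal_ofReal
    have hkq : Measurable fun z : β × α => ENNReal.ofReal (k z.1 * q z.1 z.2) :=
      ((hk.comp measurable_fst).mul hq).ennreal_ofReal
    rw [compProd_withDensity_const ha ha₀ hp, compProd_withDensity_const hk hk₀ hq]
    refine Measure.ext_of_lintegral _ fun f hf => ?_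
    have hfs : Measurable fun z : β × α => f z.swap := hf.comp measurable_swap
    rw [lintegral_map hf measurable_swap, lintegral_withDensity_eq_lintegral_mul _ hkq hfs,
      lintegral_withDensity_eq_lintegral_mul _ hap hf, ← lintegral_prod_swap]
    simp only [Pi.mul_apply, Prod.fst_swap, Prod.snd_swap, h]

end JointDensity

noncomputable section GaussianChannel

variable {n : ℕ} {φ : Euc n → ℝ} {m t : ℝ}

/-- The channel `x ↦ t x + W`, where `W` is a centred Gaussian vector of covariance `t`. -/
def gaussChannel (n : ℕ) (t : ℝ) : Kernel (Euc n) (Euc n) := expFamily fun θ => t⁻¹ / 2 * ‖θ‖ ^ 2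

/-- The posterior laws `μ_{t,θ}` of the input `x ∼ e^{-φ}` of `gaussChannel n t` given its output
`θ`. -/
def posteriorKernel (φ : Euc n → ℝ) (t : ℝ) : Kernel (Euc n) (Euc n) :=
  expFamily fun x => φ x + t / 2 * ‖x‖ ^ 2

/-- The law of the output of `gaussChannel n t` for an input of law `e^{-φ}`. -/
def outputLaw (φ : Euc n → ℝ) (t : ℝ) : Measure (Euc n) :=
  volume.withDensity fun θ => ENNReal.ofReal (exp (-(t⁻¹ / 2 * ‖θ‖ ^ 2))
    * partitionFun (fun x => φ x + t / 2 * ‖x‖ ^ 2) θ / (2 * π * t) ^ ((n : ℝ) / 2))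

lemma inner_sub_norm_sq (ht : t ≠ 0) (x θ : Euc n) :
    ⟪x, θ⟫ - t⁻¹ / 2 * ‖θ‖ ^ 2 = t / 2 * ‖x‖ ^ 2 - ‖θ - t • x‖ ^ 2 / (2 * t) := by
  rw [norm_sub_sq_real, inner_smul_right, norm_smul, real_inner_comm, mul_pow, norm_eq_abs, sq_abs]
  field_simp
  ring

lemma integral_exp_neg_norm_sub_sq (ht : 0 < t) (y : Euc n) :
    ∫ θ, exp (-(‖θ - y‖ ^ 2 / (2 * t))) = (2 * π * t) ^ ((n : ℝ) / 2) := by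
  rw [integral_sub_right_eq_self (fun θ : Euc n => exp (-(‖θ‖ ^ 2 / (2 * t)))) y]
  have hgauss := GaussianFourier.integral_rexp_neg_mul_sq_norm (V := Euc n)
    (b := (2 * t)⁻¹) (by positivity)
  simp only [finrank_euclideanSpace_fin, div_inv_eq_mul, neg_mul, ← div_eq_inv_mul] at hgauss
  rw [hgauss]
  ring_nf

lemma partitionFun_norm_sq (ht : 0 < t) (x : Euc n) :
    partitionFun (fun θ => t⁻¹ / 2 * ‖θ‖ ^ 2) x
      = exp (t / 2 * ‖x‖ ^ 2) * (2 * π * t) ^ ((n : ℝ) / 2) := by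
  simp only [partitionFun, inner_sub_norm_sq ht.ne']
  simp only [sub_eq_add_neg (t / 2 * ‖x‖ ^ 2), exp_add, integral_const_mul,
    integral_exp_neg_norm_sub_sq ht]

lemma gaussChannel_density (ht : 0 < t) (x θ : Euc n) :
    exp (⟪x, θ⟫ - t⁻¹ / 2 * ‖θ‖ ^ 2) / partitionFun (fun θ => t⁻¹ / 2 * ‖θ‖ ^ 2) x
      = gaussDensity n t (θ - t • x) := by
  rw [partitionFun_norm_sq ht, inner_sub_norm_sq ht.ne', gaussDensity, exp_sub, neg_div, neg_div,
    exp_neg, rpow_neg (by positivity)]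
  field_simp

lemma strongPotential_norm_sq (ht : 0 < t) :
    StrongPotential (fun θ : Euc n => t⁻¹ / 2 * ‖θ‖ ^ 2) t⁻¹ := by
  simpa using strongPotential_add_norm_sq (φ := fun _ : Euc n => (0 : ℝ)) contDiff_const
    (by simp) (inv_pos.2 ht)

lemma gaussChannel_apply (ht : 0 < t) (x : Euc n) :
    gaussChannel n t x
      = volume.withDensity fun θ => ENNReal.ofReal (gaussDensity n t (θ - t • x)) := by
  rw [gaussChannel, expFamily_apply (strongPotential_norm_sq ht).continuous, Measure.tilted]
  simp only [← gaussChannel_density ht]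
  rfl

lemma kernelMean_gaussChannel (ht : 0 < t) (F : Euc n → ℝ) (x : Euc n) :
    kernelMean (gaussChannel n t) F x = ∫ w, F (t • x + w) ∂gaussMeasure n t := by
  have hcont : Continuous (gaussDensity n t) := by unfold gaussDensity; fun_prop
  rw [kernelMean, gaussChannel_apply ht, gaussMeasure,
    integral_withDensity_eq_integral_toReal_smul (by fun_prop) (by simp),
    integral_withDensity_eq_integral_toReal_smul (by fun_prop) (by simp),
    ← integral_sub_right_eq_self (fun w => _ • F (t • x + w)) (t • x)]
  simp only [add_sub_cancel]

lemma StrongPotential.add_norm_sq (hφ : StrongPotential φ m) (ht : 0 < t) :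
    StrongPotential (fun x => φ x + t / 2 * ‖x‖ ^ 2) t :=
  strongPotential_add_norm_sq hφ.smooth
    (fun x v => (mul_nonneg hφ.pos.le (sq_nonneg _)).trans (hφ.hessian_ge x v)) ht

lemma isBayesPair_gaussChannel (hφ : StrongPotential φ m) (ht : 0 < t) :
    IsBayesPair (gibbsMeasure φ) (outputLaw φ t) (gaussChannel n t) (posteriorKernel φ t) := by
  have hQ := hφ.add_norm_sq ht
  have hk : Measurable fun θ => exp (-(t⁻¹ / 2 * ‖θ‖ ^ 2))
      * partitionFun (fun x => φ x + t / 2 * ‖x‖ ^ 2) θ / (2 * π * t) ^ ((n : ℝ) / 2) :=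
    (Measurable.mul (by fun_prop) (measurable_partitionFun hQ.continuous)).div_const _
  refine isBayesPair_withDensity hφ.continuous.neg.rexp.measurable (fun x => (exp_pos _).le)
    (measurable_expFamily_density (strongPotential_norm_sq ht).continuous) hk (fun θ => ?_)
    (measurable_expFamily_density hQ.continuous) fun x θ => ?_
  · have := hQ.partitionFun_pos θ
    positivity
  · rw [partitionFun_norm_sq ht]
    have hpos := hQ.partitionFun_pos θ
    set Z := partitionFun (fun x => φ x + t / 2 * ‖x‖ ^ 2) θ
    simp only [exp_sub, exp_add, exp_neg, real_inner_comm x]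
    field_simp

lemma isMarkovKernel_gaussChannel (ht : 0 < t) : IsMarkovKernel (gaussChannel n t) :=
  (strongPotential_norm_sq ht).isMarkovKernel_expFamily

lemma StrongPotential.isMarkovKernel_posteriorKernel (hφ : StrongPotential φ m) (ht : 0 < t) :
    IsMarkovKernel (posteriorKernel φ t) :=
  (hφ.add_norm_sq ht).isMarkovKernel_expFamily

lemma StrongPotential.isProbabilityMeasure_outputLaw (hφ : StrongPotential φ m)
    [IsProbabilityMeasure (gibbsMeasure φ)] (ht : 0 < t) :
    IsProbabilityMeasure (outputLaw φ t) := by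
  have := hφ.isMarkovKernel_posteriorKernel ht
  have := isMarkovKernel_gaussChannel (n := n) ht
  have : SFinite (outputLaw φ t) := by unfold outputLaw; infer_instance
  rw [← (isBayesPair_gaussChannel hφ ht).measurePreserving_snd.map_eq]
  exact Measure.isProbabilityMeasure_map measurable_snd.aemeasurable

lemma isLocalizationPair_gaussChannel {t : ℝ≥0} (hφ : StrongPotential φ m) (ht : 0 < (t : ℝ)) :
    IsLocalizationPair t (gibbsMeasure φ) (outputLaw φ t) (gaussChannel n t)
      (posteriorKernel φ t) where
  toIsBayesPair := isBayesPair_gaussChannel hφ ht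
  isTiltKernel := by
    simpa only [gaussChannel, inv_inv] using
      (strongPotential_norm_sq (n := n) (t := t) ht).isTiltKernel_expFamily (c := t⁻¹)
  isTiltKernel_posterior := (hφ.add_norm_sq ht).isTiltKernel_expFamily
  hasExpMoments := hφ.integrable_exp_mul_norm

lemma tiltMeasure_eq_posteriorKernel (hφ : Continuous φ) (t : ℝ) (θ : Euc n) :
    tiltMeasure (fun x => exp (-φ x)) t θ = posteriorKernel φ t θ := by
  have hexp (x : Euc n) : exp (⟪θ, x⟫ - t * ‖x‖ ^ 2 / 2) * exp (-φ x)
      = exp (⟪θ, x⟫ - (φ x + t / 2 * ‖x‖ ^ 2)) := by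
    rw [← exp_add]
    ring_nf
  rw [posteriorKernel, expFamily_apply (by fun_prop), Measure.tilted, tiltMeasure]
  simp only [tiltDensity, tiltZ, hexp]

end GaussianChannel

/-! ### Averages over the posterior laws -/

noncomputable section Averages

variable {n : ℕ} {φ F : Euc n → ℝ} {m t : ℝ}

lemma continuous_opNorm : Continuous (opNorm : Matrix (Fin n) (Fin n) ℝ → ℝ) :=
  (LinearMap.continuous_of_finiteDimensional
    (Matrix.toEuclideanCLM (n := Fin n) (𝕜 := ℝ)).toAlgEquiv.toLinearMap).norm

lemma measurable_covMatrix (κ : Kernel (Euc n) (Euc n)) [IsSFiniteKernel κ] :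
    Measurable fun θ i j => covMatrix (κ θ) i j :=
  measurable_pi_lambda _ fun i => measurable_pi_lambda _ fun j =>
    (measurable_kernelMean (f := fun x : Euc n => x i * x j) (by fun_prop)).sub
      ((measurable_kernelMean (f := fun x : Euc n => x i) (by fun_prop)).mul
        (measurable_kernelMean (f := fun x : Euc n => x j) (by fun_prop)))

namespace IsTiltKernel

variable {c : ℝ≥0} {κ : Kernel (Euc n) (Euc n)} [IsMarkovKernel κ]

lemma abs_covMatrix_le (hκ : IsTiltKernel c κ) (θ : Euc n) (i j : Fin n) :
    |covMatrix (κ θ) i j| ≤ c := by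
  have hid : MemLp id 2 (κ θ) := (memLp_norm_iff aestronglyMeasurable_id).1
    ((ExpGrowth.of_lipschitz lipschitzWith_one_norm).memLp_two (hκ.hasExpMoments θ))
  have hvar (k : Fin n) : Var[fun x => x k; κ θ] ≤ c := by
    simpa using variance_le_of_lipschitz (hκ.hasExpMoments θ) (hκ.mem_poincareSet θ)
      (LipschitzWith.of_dist_le_mul (K := 1) fun x y => by
        simpa [dist_eq_norm] using PiLp.norm_apply_le (x - y) k)
  rw [covMatrix_apply hid]
  refine abs_le_of_sq_le_sq ?_ c.coe_nonneg
  calc cov[fun x => x i, fun x => x j; κ θ] ^ 2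
      ≤ Var[fun x => x i; κ θ] * Var[fun x => x j; κ θ] :=
        sq_covariance_le (memLp_two_apply hid i) (memLp_two_apply hid j)
    _ ≤ c * c := by
        gcongr
        exacts [variance_nonneg _ _, hvar i, hvar j]
    _ = (c : ℝ) ^ 2 := (sq _).symm

lemma integrable_sqrt_opNorm_covMatrix (hκ : IsTiltKernel c κ) (ν : Measure (Euc n))
    [IsFiniteMeasure ν] : Integrable (fun θ => √(opNorm (covMatrix (κ θ)))) ν := by
  have hcont : Continuous fun M : Fin n → Fin n → ℝ => √(opNorm (Matrix.of M)) :=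
    continuous_opNorm.sqrt
  obtain ⟨C, hC⟩ := IsCompact.exists_bound_of_continuousOn
    (isCompact_univ_pi fun _ : Fin n => isCompact_univ_pi fun _ : Fin n =>
      isCompact_Icc (a := -(c : ℝ)) (b := c)) hcont.continuousOn
  refine (integrable_const C).mono'
    (hcont.measurable.comp (measurable_covMatrix κ)).aestronglyMeasurable
    (.of_forall fun θ => hC _ ?_)
  exact fun i _ j _ => abs_le.1 (hκ.abs_covMatrix_le θ i j)

lemma continuous_kernelMean_of_isTestFunction (hκ : IsTiltKernel c κ) (hF : IsTestFunction F) :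
    Continuous (kernelMean κ F) := by
  obtain ⟨K, hK⟩ := hF.smooth.lipschitzWith_of_hasCompactSupport hF.hasCompactSupport (by simp)
  exact (hκ.lipschitzWith_kernelMean hK).continuous

end IsTiltKernel

lemma poincareConst_le_iff {C : ℝ} (hφ : StrongPotential φ m)
    [IsProbabilityMeasure (gibbsMeasure φ)] (hC : 0 ≤ C) :
    poincareConst (gibbsMeasure φ) ≤ C ↔ ∀ h, IsTestFunction h →
      Var[h; gibbsMeasure φ] ≤ C * ∫ x, ‖gradient h x‖ ^ 2 ∂gibbsMeasure φ := by
  refine ⟨fun hle h hh => ?_,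
    fun h => poincareConst_le (mem_poincareSet_of_isTestFunction hφ.smooth hC h)⟩
  refine (variance_le_of_mem_poincareSet (poincareConst_mem ⟨_, hφ.inv_mem_poincareSet⟩)
    (locallyLipschitz_of_smooth hh.smooth) (hh.memLp_two _)
    (hh.norm_gradient_sq.integrable_gibbs hφ.continuous)).trans ?_
  gcongr

lemma StrongPotential.measurable_poincareConst_expFamily {c : ℝ≥0} (hφ : StrongPotential φ c) :
    Measurable fun θ => poincareConst (expFamily φ θ) := by
  have := hφ.isMarkovKernel_expFamily
  have hκ := hφ.isTiltKernel_expFamily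
  refine measurable_of_Iic fun C => ?_
  rcases lt_or_ge C 0 with hC | hC
  · convert MeasurableSet.empty
    exact Set.eq_empty_of_forall_notMem fun θ hθ => (hθ.trans_lt hC).not_ge (poincareConst_nonneg _)
  have hset : (fun θ => poincareConst (expFamily φ θ)) ⁻¹' Set.Iic C
      = ⋂ h : {h : Euc n → ℝ // IsTestFunction h},
        {θ | kernelMean (expFamily φ) (fun x => h.1 x ^ 2) θ - kernelMean (expFamily φ) h.1 θ ^ 2
          ≤ C * kernelMean (expFamily φ) (fun x => ‖gradient h.1 x‖ ^ 2) θ} := by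
    ext θ
    have hθ := hφ.expFamily_eq_gibbsMeasure θ
    have : IsProbabilityMeasure (gibbsMeasure fun x => φ x - ⟪θ, x⟫ + log (partitionFun φ θ)) :=
      hθ ▸ inferInstance
    simp only [Set.mem_preimage, Set.mem_Iic, Set.mem_iInter, Set.mem_ofPred_eq, kernelMean, hθ,
      poincareConst_le_iff (hφ.sub_inner_add_const θ _) hC, Subtype.forall]
    exact forall₂_congr fun h hh => by rw [variance_eq_sub (hh.memLp_two _)]; rfl
  rw [hset]
  refine (isClosed_iInter fun h => ?_).measurableSet
  have hsq : IsTestFunction fun x => h.1 x ^ 2 := by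
    simpa only [sq] using h.2.mul_smooth h.2.smooth
  exact isClosed_le
    ((hκ.continuous_kernelMean_of_isTestFunction hsq).sub
      ((hκ.continuous_kernelMean_of_isTestFunction h.2).pow 2))
    ((hκ.continuous_kernelMean_of_isTestFunction h.2.norm_gradient_sq).const_mul C)

lemma StrongPotential.integrable_poincareConst_expFamily {c : ℝ≥0} (hφ : StrongPotential φ c)
    (ν : Measure (Euc n)) [IsFiniteMeasure ν] :
    Integrable (fun θ => poincareConst (expFamily φ θ)) ν := by
  have := hφ.isMarkovKernel_expFamily
  refine (integrable_const ((c⁻¹ : ℝ≥0) : ℝ)).mono'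
    hφ.measurable_poincareConst_expFamily.aestronglyMeasurable (.of_forall fun θ => ?_)
  rw [norm_of_nonneg (poincareConst_nonneg _)]
  exact _root_.poincareConst_le (hφ.isTiltKernel_expFamily.mem_poincareSet θ)

lemma StrongPotential.poincareConst_expFamily_le (hφ : StrongPotential φ m) (θ : Euc n) :
    poincareConst (expFamily φ θ) ≤ √(opNorm (covMatrix (expFamily φ θ))) / √m := by
  have := hφ.isMarkovKernel_expFamily.isProbabilityMeasure θ
  rw [hφ.expFamily_eq_gibbsMeasure] at this ⊢
  exact (hφ.sub_inner_add_const θ _).poincareConst_le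

end Averages

/-! ### Eigenvalues along the localization -/

noncomputable section Localization

variable {n : ℕ} {φ : Euc n → ℝ} {m t V A : ℝ}

lemma IsRegularPotential.exists_strongPotential {ψ : Euc n → ℝ} (hψ : IsRegularPotential ψ) :
    ∃ ε, StrongPotential ψ ε := by
  obtain ⟨hsmooth, ⟨ε, hε, hess⟩, -⟩ := hψ
  exact ⟨ε, hsmooth, hε, fun x v => by simpa [iteratedFDeriv_two_apply] using (hess x v).1⟩

namespace StrongPotential

variable [IsProbabilityMeasure (gibbsMeasure φ)]

lemma integral_gaussChannel (hφ : StrongPotential φ m) (ht : 0 < t) {F : Euc n → ℝ}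
    (hF : Integrable F (outputLaw φ t)) :
    ∫ x, ∫ w, F (t • x + w) ∂gaussMeasure n t ∂gibbsMeasure φ = ∫ θ, F θ ∂outputLaw φ t := by
  have := hφ.isMarkovKernel_posteriorKernel ht
  have := isMarkovKernel_gaussChannel (n := n) ht
  have := hφ.isProbabilityMeasure_outputLaw ht
  rw [← (isBayesPair_gaussChannel hφ ht).integral_kernelMean hF]
  simp only [kernelMean_gaussChannel ht]

lemma poincareConst_le_of_lipschitzVarianceLE (hφ : StrongPotential φ m)
    (hV : LipschitzVarianceLE (gibbsMeasure φ) V) :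
    poincareConst (gibbsMeasure φ) ≤ 4 * 10 ^ 7 * V := by
  have hV₀ : 0 ≤ V := (variance_nonneg _ _).trans (hV _ (LipschitzWith.const' (0 : ℝ)))
  rw [← div_le_iff₀' (by positivity)]
  refine le_of_forall_gt_imp_ge_of_dense fun W hVW => ?_
  have hW : 0 < W := hV₀.trans_lt hVW
  let t : ℝ≥0 := ⟨1 / (4 * 10 ^ 4 * W), by positivity⟩
  have ht : 0 < (t : ℝ) := one_div_pos.2 (by positivity)
  have := hφ.isMarkovKernel_posteriorKernel ht
  have := isMarkovKernel_gaussChannel (n := n) ht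
  have := hφ.isProbabilityMeasure_outputLaw ht
  have hts : (t : ℝ) * (200 * √W) ^ 2 = 1 := by
    rw [mul_pow, sq_sqrt hW.le]
    change 1 / (4 * 10 ^ 4 * W) * (200 ^ 2 * W) = 1
    field_simp
    norm_num
  have hmem := (isLocalizationPair_gaussChannel hφ ht).mem_poincareSet_of_lipschitzVarianceLE
    hφ.smooth hts (fun g hg => (hV g hg).trans (by rw [sq_sqrt hW.le]; exact hVW.le))
    (sqrt_pos.2 hW)
  rw [div_le_iff₀' (by positivity)]
  simpa only [sq_sqrt hW.le] using _root_.poincareConst_le hmem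

lemma integrable_poincareConst_posteriorKernel (hφ : StrongPotential φ m) (ht : 0 < t) :
    Integrable (fun θ => poincareConst (posteriorKernel φ t θ)) (outputLaw φ t) := by
  lift t to ℝ≥0 using ht.le
  have := hφ.isProbabilityMeasure_outputLaw ht
  exact (hφ.add_norm_sq ht).integrable_poincareConst_expFamily _

lemma integrable_sqrt_opNorm_posteriorKernel (hφ : StrongPotential φ m) (ht : 0 < t) :
    Integrable (fun θ => √(opNorm (covMatrix (posteriorKernel φ t θ)))) (outputLaw φ t) := by
  lift t to ℝ≥0 using ht.le
  have := hφ.isProbabilityMeasure_outputLaw ht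
  have hQ := hφ.add_norm_sq ht
  have := hQ.isMarkovKernel_expFamily
  exact hQ.isTiltKernel_expFamily.integrable_sqrt_opNorm_covMatrix _

lemma lipschitzVarianceLE (hφ : StrongPotential φ m) (ht : 0 < t) :
    LipschitzVarianceLE (gibbsMeasure φ) ((1 + poincareConst (gibbsMeasure φ) * t)
      * ∫ θ, poincareConst (posteriorKernel φ t θ) ∂outputLaw φ t) := by
  intro g hg
  lift t to ℝ≥0 using ht.le
  have := hφ.isMarkovKernel_posteriorKernel ht
  have := isMarkovKernel_gaussChannel (n := n) ht
  have := hφ.isProbabilityMeasure_outputLaw ht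
  have hpost : IsTiltKernel t⁻¹ (posteriorKernel φ t) :=
    (hφ.add_norm_sq ht).isTiltKernel_expFamily
  have hC := poincareConst_nonneg (gibbsMeasure φ)
  refine ((isLocalizationPair_gaussChannel hφ ht).variance_le_of_lipschitz (mod_cast ht.ne')
    (poincareConst_mem ⟨_, hφ.inv_mem_poincareSet⟩) hg).trans
      (mul_le_mul_of_nonneg_left ?_ (by positivity))
  refine integral_mono_of_nonneg (.of_forall fun θ => variance_nonneg _ _)
    (hφ.integrable_poincareConst_posteriorKernel ht) (.of_forall fun θ => ?_)
  simpa using variance_le_of_lipschitz (hpost.hasExpMoments θ)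
    (c := poincareConst (posteriorKernel φ t θ))
    (poincareConst_mem ⟨_, hpost.mem_poincareSet θ⟩) hg

lemma integral_poincareConst_le (hφ : StrongPotential φ m) (ht : 0 < t) :
    ∫ θ, poincareConst (posteriorKernel φ t θ) ∂outputLaw φ t
      ≤ (∫ θ, √(opNorm (covMatrix (posteriorKernel φ t θ))) ∂outputLaw φ t) / √t := by
  rw [← integral_div]
  exact integral_mono (hφ.integrable_poincareConst_posteriorKernel ht)
    ((hφ.integrable_sqrt_opNorm_posteriorKernel ht).div_const _)
    (hφ.add_norm_sq ht).poincareConst_expFamily_le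

lemma poincareConst_le_mul_integral (hφ : StrongPotential φ m) (ht : 0 < t)
    (hA : poincareConst (gibbsMeasure φ) * t ≤ A) :
    poincareConst (gibbsMeasure φ)
      ≤ 4 * 10 ^ 7 * (A + 1) * ∫ θ, poincareConst (posteriorKernel φ t θ) ∂outputLaw φ t := by
  have hΛ : 0 ≤ ∫ θ, poincareConst (posteriorKernel φ t θ) ∂outputLaw φ t :=
    integral_nonneg fun θ => poincareConst_nonneg _
  calc poincareConst (gibbsMeasure φ)
      ≤ 4 * 10 ^ 7 * ((1 + poincareConst (gibbsMeasure φ) * t)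
          * ∫ θ, poincareConst (posteriorKernel φ t θ) ∂outputLaw φ t) :=
        hφ.poincareConst_le_of_lipschitzVarianceLE (hφ.lipschitzVarianceLE ht)
    _ ≤ 4 * 10 ^ 7 * ((1 + A) * ∫ θ, poincareConst (posteriorKernel φ t θ) ∂outputLaw φ t) := by
        gcongr
    _ = 4 * 10 ^ 7 * (A + 1) * ∫ θ, poincareConst (posteriorKernel φ t θ) ∂outputLaw φ t := by
        ring

end StrongPotential

lemma mul_le_of_lt_mul_one_div {A c t : ℝ} (hc : 0 ≤ c) (hA : 0 ≤ A) (h : t < A * (1 / c)) :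
    c * t ≤ A := by
  rcases hc.eq_or_lt with rfl | hc
  · simpa using hA
  · rw [mul_one_div, lt_div_iff₀' hc] at h
    exact h.le

end Localization

theorem eigenvalue_localization_bound_general :
    ∃ C : ℝ, 0 < C ∧ ∀ (n : ℕ) (φ : Euc n → ℝ) (m : ℝ), StrongPotential φ m →
      IsProbabilityMeasure (gibbsMeasure φ) →
      ∀ A t : ℝ, 0 < t → poincareConst (gibbsMeasure φ) * t ≤ A →
      poincareConst (gibbsMeasure φ) ≤ C * (A + 1) *
          ∫ x, ∫ w, poincareConst (tiltMeasure (fun y => exp (-φ y)) t (t • x + w))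
            ∂gaussMeasure n t ∂gibbsMeasure φ ∧
      C * (A + 1) *
          (∫ x, ∫ w, poincareConst (tiltMeasure (fun y => exp (-φ y)) t (t • x + w))
            ∂gaussMeasure n t ∂gibbsMeasure φ) ≤
        C * (A + 1) *
          (∫ x, ∫ w, √(opNorm (covMatrix (tiltMeasure (fun y => exp (-φ y)) t (t • x + w))))
            ∂gaussMeasure n t ∂gibbsMeasure φ) / √t := by
  refine ⟨4 * 10 ^ 7, by norm_num, fun n φ m hφ _ A t ht hA => ?_⟩
  simp only [tiltMeasure_eq_posteriorKernel hφ.continuous]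
  rw [hφ.integral_gaussChannel ht (hφ.integrable_poincareConst_posteriorKernel ht),
    hφ.integral_gaussChannel ht (hφ.integrable_sqrt_opNorm_posteriorKernel ht), mul_div_assoc]
  have hA₀ : 0 ≤ A := (mul_nonneg (poincareConst_nonneg _) ht.le).trans hA
  exact ⟨hφ.poincareConst_le_mul_integral ht hA,
    mul_le_mul_of_nonneg_left (hφ.integral_poincareConst_le ht) (by positivity)⟩

/-- Corollary: for `0 < t < A·λ₀`,
`λ₀⁻¹ ≤ C(A+1)·E[λ_t⁻¹] ≤ C(A+1)·E[√‖A_t‖_op]/√t`. -/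
theorem eigenvalue_localization_bound :
    ∃ C : ℝ, 0 < C ∧ ∀ n : ℕ, ∀ μ : Measure (Euc n), IsProbabilityMeasure μ →
      ∀ ψ : Euc n → ℝ, IsRegularMeasure μ ψ →
      ∀ lam0 : ℝ, lam0 = 1 / poincareConst μ →
      ∀ A t : ℝ, 0 < A → 0 < t → t < A * lam0 →
      lam0⁻¹ ≤ C * (A + 1) *
          ∫ x, ∫ w, poincareConst (tiltMeasure (fun y => Real.exp (-ψ y)) t (t • x + w))
            ∂(gaussMeasure n t) ∂μ ∧
      C * (A + 1) *
          (∫ x, ∫ w, poincareConst (tiltMeasure (fun y => Real.exp (-ψ y)) t (t • x + w))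
            ∂(gaussMeasure n t) ∂μ) ≤
        C * (A + 1) *
          (∫ x, ∫ w,
              Real.sqrt (opNorm (covMatrix (tiltMeasure (fun y => Real.exp (-ψ y)) t (t • x + w))))
            ∂(gaussMeasure n t) ∂μ) / Real.sqrt t := by
  obtain ⟨C, hC, h⟩ := eigenvalue_localization_bound_general
  refine ⟨C, hC, ?_⟩
  rintro n _ hμ ψ ⟨hψ, rfl⟩ _ rfl A t hA ht htA
  obtain ⟨ε, hψε⟩ := hψ.exists_strongPotential
  rw [one_div, inv_inv]
  exact h n ψ ε hψε hμ A t ht (mul_le_of_lt_mul_one_div (poincareConst_nonneg _) hA.le htA)
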